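/- For every n ≥ 1, every Borel set X ⊆ ℝⁿ can be partitioned into countably many pairwise disjoint subspaces that are Gδ sets in X and are h-homogeneous in the subspace topology. -/

import Mathlib

/-- A topological space is *h-homogeneous* if every nonempty clopen subset,
with the subspace topology, is homeomorphic to the whole space. -/
def HHomogeneous (Y : Type*) [TopologicalSpace Y] : Prop :=
  ∀ U : Set Y, IsClopen U → U.Nonempty → Nonempty (U ≃ₜ Y)

/-!
Cutting `ℝⁿ` into Gδ pieces according to which coordinates are rational, and coding a point by the
answers to the questions `q < x i`, reduces the theorem to Borel subsets of Cantor space. Suppose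
that some Borel subset is not σ-h-homogeneous, that is, not a countable disjoint union of relatively
Gδ h-homogeneous subspaces. Borel determinacy, which is proved by Martin's method of unravelling,
gives Wadge's lemma for Borel sets, and the Martin–Monk argument then yields a counterexample `Y` of
least Wadge degree, which is not reducible to its complement.

Minimality makes `Y` reducible to each of its portions `Y ∩ T` that is again a counterexample. The
reductions can be made injective, with closed nowhere dense range, because `Y` absorbs products with
Cantor space and tagging a point by the parity of a position code turns a reduction into one that
separates points. Pick a closed set `V` all of whose clopen portions are counterexamples and on
which `Y` is constant off a meager set. A back-and-forth construction, in which the embeddings given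
by minimality exhaust the meager set and nested clopen sets take care of the rest, shows that
`Y ∩ V` is homeomorphic to each of its nonempty clopen subsets. So `Y ∩ V` is h-homogeneous and not
a counterexample after all.
-/

universe u

/-- A pruned forest of positions of a two-player game, presented by the length (number of moves
made) and the parent (last move undone) of each position. Player `false` moves at even lengths,
player `true` at odd lengths. -/
structure GameTree : Type (u + 1) where
  Pos : Type u
  len : Pos → ℕ
  parent : Pos → Pos
  len_parent : ∀ p, len (parent p) = len p - 1
  parent_eq_self : ∀ p, len p = 0 → parent p = p
  exists_child : ∀ p, ∃ q, parent q = p ∧ len q = len p + 1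

namespace GameTree

/-- `q` is reached from `p` by one move. -/
def IsChild (G : GameTree.{u}) (p q : G.Pos) : Prop := G.parent q = p ∧ G.len q = G.len p + 1

/-- A choice of a move at every position. Both players use the same notion: only the moves made
at lengths of the right parity matter. -/
@[ext]
structure Strategy (G : GameTree.{u}) where
  toFun : G.Pos → G.Pos
  isChild : ∀ p, G.IsChild p (toFun p)

instance (G : GameTree.{u}) : CoeFun G.Strategy fun _ => G.Pos → G.Pos := ⟨Strategy.toFun⟩

/-- An infinite play, given by the sequence of its positions. -/
def IsRun (G : GameTree.{u}) (x : ℕ → G.Pos) : Prop :=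
  ∀ n, G.len (x n) = n ∧ G.parent (x (n + 1)) = x n

/-- In the sequence of positions `x`, player `b` moves according to `σ`. -/
def Follows (G : GameTree.{u}) (b : Bool) (σ : G.Strategy) (x : ℕ → G.Pos) : Prop :=
  ∀ n, n.bodd = b → x (n + 1) = σ (x n)

/-- The initial segment of length `n` of a position, which is the position itself if it is
shorter than `n`. -/
def ancestor (G : GameTree.{u}) (n : ℕ) (p : G.Pos) : G.Pos := G.parent^[G.len p - n] p

/-- `S` is relatively open in the space of runs. -/
def IsOpenOnRuns (G : GameTree.{u}) (S : Set (ℕ → G.Pos)) : Prop :=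
  ∀ x, G.IsRun x → x ∈ S → ∃ n, ∀ y, G.IsRun y → y n = x n → y ∈ S

variable {G : GameTree.{u}}

section Ancestor

theorem len_iterate_parent (p : G.Pos) (k : ℕ) : G.len (G.parent^[k] p) = G.len p - k := by
  induction k with
  | zero => simp
  | succ k ih => rw [Function.iterate_succ_apply', G.len_parent, ih]; omega

theorem len_ancestor (p : G.Pos) {n : ℕ} (h : n ≤ G.len p) : G.len (G.ancestor n p) = n := by
  rw [ancestor, len_iterate_parent]; omega

theorem ancestor_of_len_le (p : G.Pos) {n : ℕ} (h : G.len p ≤ n) : G.ancestor n p = p := by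
  simp [ancestor, Nat.sub_eq_zero_of_le h]

theorem ancestor_len (p : G.Pos) : G.ancestor (G.len p) p = p := ancestor_of_len_le p le_rfl

theorem ancestor_ancestor (p : G.Pos) {m n : ℕ} (h : m ≤ n) :
    G.ancestor m (G.ancestor n p) = G.ancestor m p := by
  rcases le_total (G.len p) n with hn | hn
  · rw [ancestor_of_len_le p hn]
  · rw [ancestor, ancestor, ancestor, len_iterate_parent, ← Function.iterate_add_apply]
    congr 1; omega

theorem IsChild.ancestor_eq {p q : G.Pos} (h : G.IsChild p q) {n : ℕ} (hn : n ≤ G.len p) :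
    G.ancestor n q = G.ancestor n p := by
  rw [ancestor, ancestor, h.2, Nat.succ_sub hn, Function.iterate_succ_apply, h.1]

theorem parent_eq_ancestor (p : G.Pos) : G.parent p = G.ancestor (G.len p - 1) p := by
  rcases Nat.eq_zero_or_pos (G.len p) with h | h
  · rw [G.parent_eq_self p h, ancestor_of_len_le p (by omega)]
  · rw [ancestor, Nat.sub_sub_self h, Function.iterate_one]

theorem ancestor_parent (p : G.Pos) {n : ℕ} (h : n + 1 ≤ G.len p) :
    G.ancestor n (G.parent p) = G.ancestor n p := by
  rw [parent_eq_ancestor, ancestor_ancestor p (by omega)]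

theorem isChild_ancestor (p : G.Pos) {n : ℕ} (h : n + 1 ≤ G.len p) :
    G.IsChild (G.ancestor n p) (G.ancestor (n + 1) p) := by
  refine ⟨?_, by rw [len_ancestor p h, len_ancestor p (by omega)]⟩
  rw [parent_eq_ancestor, len_ancestor p h, Nat.add_sub_cancel, ancestor_ancestor p n.le_succ]

end Ancestor

section Run

variable {x : ℕ → G.Pos}

theorem IsRun.len_eq (hx : G.IsRun x) (n : ℕ) : G.len (x n) = n := (hx n).1

theorem IsRun.isChild (hx : G.IsRun x) (n : ℕ) : G.IsChild (x n) (x (n + 1)) :=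
  ⟨(hx n).2, by rw [hx.len_eq, hx.len_eq]⟩

theorem IsRun.ancestor_eq (hx : G.IsRun x) {m n : ℕ} (hmn : m ≤ n) :
    G.ancestor m (x n) = x m := by
  induction n, hmn using Nat.le_induction with
  | base => exact ancestor_of_len_le _ (hx.len_eq m).le
  | succ n hn ih => rw [(hx.isChild n).ancestor_eq (by rwa [hx.len_eq]), ih]

theorem IsRun.eq_of_le {y : ℕ → G.Pos} (hx : G.IsRun x) (hy : G.IsRun y) {n : ℕ}
    (h : x n = y n) {m : ℕ} (hm : m ≤ n) : x m = y m := by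
  rw [← hx.ancestor_eq hm, ← hy.ancestor_eq hm, h]

noncomputable instance : Inhabited G.Strategy :=
  ⟨⟨fun p => (G.exists_child p).choose, fun p => (G.exists_child p).choose_spec⟩⟩

end Run

section Attractor

/-- `G.AttractedAt b A U α p`: player `b`, moving only to positions of `A`, can force the play from
`p` into `U`, and `α` bounds the ordinal rank of the well-founded tree of plays that miss `U`. -/
inductive AttractedAt (G : GameTree.{u}) (b : Bool) (A U : Set G.Pos) :
    Ordinal.{u} → G.Pos → Prop
  | base (α : Ordinal.{u}) (p : G.Pos) : p ∈ U → AttractedAt G b A U α p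
  | own (α β : Ordinal.{u}) (p q : G.Pos) : (G.len p).bodd = b → G.IsChild p q → q ∈ A → β < α →
      AttractedAt G b A U β q → AttractedAt G b A U α p
  | opponent (α : Ordinal.{u}) (p : G.Pos) (f : G.Pos → Ordinal.{u}) : (G.len p).bodd ≠ b →
      (∀ q, G.IsChild p q → f q < α) → (∀ q, G.IsChild p q → AttractedAt G b A U (f q) q) →
      AttractedAt G b A U α p

/-- The positions from which player `b` can force the play into `U` by moves to positions of `A`. -/
def attractor (G : GameTree.{u}) (b : Bool) (A U : Set G.Pos) : Set G.Pos :=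
  {p | ∃ α, G.AttractedAt b A U α p}

/-- The least rank of a position in the attractor (`0` outside of the attractor). -/
noncomputable def attractorRank (G : GameTree.{u}) (b : Bool) (A U : Set G.Pos) (p : G.Pos) :
    Ordinal.{u} :=
  sInf {α | G.AttractedAt b A U α p}

variable {b : Bool} {A U : Set G.Pos} {p q : G.Pos}

theorem subset_attractor : U ⊆ G.attractor b A U := fun p hp => ⟨0, .base 0 p hp⟩

theorem mem_attractor_of_own (hb : (G.len p).bodd = b) (hpq : G.IsChild p q) (hqA : q ∈ A)
    (hq : q ∈ G.attractor b A U) : p ∈ G.attractor b A U :=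
  let ⟨β, hβ⟩ := hq
  ⟨Order.succ β, .own _ β p q hb hpq hqA (Order.lt_succ β) hβ⟩

theorem mem_attractor_of_opponent (hb : (G.len p).bodd ≠ b)
    (h : ∀ q, G.IsChild p q → q ∈ G.attractor b A U) : p ∈ G.attractor b A U := by
  classical
  choose! f hf using h
  exact ⟨Order.succ (⨆ q, f q), .opponent _ p f hb
    (fun q _ => Order.lt_succ_of_le (Ordinal.le_iSup f q)) hf⟩

theorem exists_isChild_notMem_attractor (hp : p ∉ G.attractor b A U) (hb : (G.len p).bodd ≠ b) :
    ∃ q, G.IsChild p q ∧ q ∉ G.attractor b A U := by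
  by_contra! h
  exact hp (mem_attractor_of_opponent hb h)

theorem attractedAt_attractorRank (hp : p ∈ G.attractor b A U) :
    G.AttractedAt b A U (G.attractorRank b A U p) p :=
  csInf_mem (s := {α | G.AttractedAt b A U α p}) hp

theorem attractorRank_le {α : Ordinal.{u}} (h : G.AttractedAt b A U α p) :
    G.attractorRank b A U p ≤ α := csInf_le' h

theorem exists_own_move (hp : p ∈ G.attractor b A U) (hU : p ∉ U) (hb : (G.len p).bodd = b) :
    ∃ q, G.IsChild p q ∧ q ∈ A ∧ q ∈ G.attractor b A U ∧
      G.attractorRank b A U q < G.attractorRank b A U p := by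
  have h := attractedAt_attractorRank hp
  generalize G.attractorRank b A U p = α at h
  cases h with
  | base _ _ h => exact absurd h hU
  | own _ β _ q _ hpq hqA hβ hq =>
    exact ⟨q, hpq, hqA, ⟨β, hq⟩, (attractorRank_le hq).trans_lt hβ⟩
  | opponent _ _ _ h => exact absurd hb h

theorem opponent_move (hp : p ∈ G.attractor b A U) (hU : p ∉ U) (hb : (G.len p).bodd ≠ b)
    (hpq : G.IsChild p q) :
    q ∈ G.attractor b A U ∧ G.attractorRank b A U q < G.attractorRank b A U p := by
  have h := attractedAt_attractorRank hp
  generalize G.attractorRank b A U p = α at h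
  cases h with
  | base _ _ h => exact absurd h hU
  | own _ _ _ _ h => exact absurd h hb
  | opponent _ _ _ _ hf hq =>
    exact ⟨⟨_, hq q hpq⟩, (attractorRank_le (hq q hpq)).trans_lt (hf q hpq)⟩

open Classical in
/-- The strategy of player `b` that decreases the attractor rank until `U` is reached. -/
noncomputable def attractorStrategy (G : GameTree.{u}) (b : Bool) (A U : Set G.Pos) :
    G.Strategy where
  toFun p :=
    if h : p ∈ G.attractor b A U ∧ p ∉ U ∧ (G.len p).bodd = b then
      (exists_own_move h.1 h.2.1 h.2.2).choose
    else (default : G.Strategy) p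
  isChild p := by
    split_ifs with h
    · exact (exists_own_move h.1 h.2.1 h.2.2).choose_spec.1
    · exact (default : G.Strategy).isChild p

theorem attractorStrategy_spec (hp : p ∈ G.attractor b A U) (hU : p ∉ U)
    (hb : (G.len p).bodd = b) :
    G.attractorStrategy b A U p ∈ A ∧ G.attractorStrategy b A U p ∈ G.attractor b A U ∧
      G.attractorRank b A U (G.attractorStrategy b A U p) < G.attractorRank b A U p := by
  simp only [attractorStrategy]
  rw [dif_pos ⟨hp, hU, hb⟩]
  exact (exists_own_move hp hU hb).choose_spec.2

theorem IsRun.exists_mem_of_mem_attractor {x : ℕ → G.Pos} (hx : G.IsRun x) {n : ℕ}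
    (hn : x n ∈ G.attractor b A U)
    (hσ : ∀ m ≥ n, m.bodd = b → x m ∈ G.attractor b A U → (∀ k, n ≤ k → k ≤ m → x k ∉ U) →
      x (m + 1) = G.attractorStrategy b A U (x m)) :
    ∃ m ≥ n, x m ∈ U := by
  by_contra! hU
  have descend : ∀ m ≥ n, x m ∈ G.attractor b A U → x (m + 1) ∈ G.attractor b A U ∧
      G.attractorRank b A U (x (m + 1)) < G.attractorRank b A U (x m) := by
    intro m hm hA
    by_cases hb : m.bodd = b
    · rw [hσ m hm hb hA fun k hk _ => hU k hk]
      exact (attractorStrategy_spec hA (hU m hm) (by rwa [hx.len_eq])).2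
    · exact opponent_move hA (hU m hm) (by rwa [hx.len_eq]) (hx.isChild m)
  have mem : ∀ k, x (n + k) ∈ G.attractor b A U := by
    intro k
    induction k with
    | zero => exact hn
    | succ k ih => exact (descend (n + k) (by omega) ih).1
  exact (RelEmbedding.natGT (r := (· < ·)) (fun k => G.attractorRank b A U (x (n + k)))
    fun k => (descend (n + k) (by omega) (mem k)).2).not_wellFounded Ordinal.lt_wf

/-- The positions of length at least `l` none of whose initial segments of length at least `l`
belongs to `U`. -/
def avoiding (G : GameTree.{u}) (l : ℕ) (U : Set G.Pos) : Set G.Pos :=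
  {q | l ≤ G.len q ∧ ∀ n, l ≤ n → n ≤ G.len q → G.ancestor n q ∉ U}

variable {l : ℕ}

theorem notMem_of_mem_avoiding (hq : q ∈ G.avoiding l U) : q ∉ U := by
  simpa only [ancestor_len] using hq.2 _ hq.1 le_rfl

theorem parent_mem_avoiding (hq : q ∈ G.avoiding l U) (hl : l + 1 ≤ G.len q) :
    G.parent q ∈ G.avoiding l U := by
  refine ⟨by rw [G.len_parent]; omega, fun n hn hnq => ?_⟩
  rw [G.len_parent] at hnq
  rw [ancestor_parent q (by omega)]
  exact hq.2 n hn (by omega)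

theorem IsChild.mem_avoiding (hpq : G.IsChild p q) (hp : p ∈ G.avoiding l U) (hq : q ∉ U) :
    q ∈ G.avoiding l U := by
  have hlen := hpq.2
  refine ⟨by have := hp.1; omega, fun n hn _ => ?_⟩
  rcases Nat.lt_or_ge (G.len p) n with h | h
  · rwa [ancestor_of_len_le q (by omega)]
  · rw [hpq.ancestor_eq h]
    exact hp.2 n hn h

theorem IsChild.mem_avoiding_attractor {B : Set G.Pos} (hpq : G.IsChild p q)
    (hp : p ∈ G.avoiding l (G.attractor b B U)) (hb : (G.len p).bodd = b) (hq : q ∈ B) :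
    q ∈ G.avoiding l (G.attractor b B U) :=
  hpq.mem_avoiding hp fun h => notMem_of_mem_avoiding hp (mem_attractor_of_own hb hpq hq h)

theorem exists_isChild_mem_avoiding_attractor (hp : p ∈ G.avoiding l (G.attractor b A U))
    (hb : (G.len p).bodd ≠ b) : ∃ q, G.IsChild p q ∧ q ∈ G.avoiding l (G.attractor b A U) :=
  let ⟨q, hpq, hq⟩ := exists_isChild_notMem_attractor (notMem_of_mem_avoiding hp) hb
  ⟨q, hpq, hpq.mem_avoiding hp hq⟩

open Classical in
/-- A strategy that keeps the play out of the attractor of the opponent. -/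
noncomputable def avoidAttractorStrategy (G : GameTree.{u}) (b : Bool) (A U : Set G.Pos) :
    G.Strategy where
  toFun p :=
    if h : ∃ q, G.IsChild p q ∧ q ∉ G.attractor b A U then h.choose else (default : G.Strategy) p
  isChild p := by
    split_ifs with h
    · exact h.choose_spec.1
    · exact (default : G.Strategy).isChild p

theorem avoidAttractorStrategy_notMem (hp : p ∉ G.attractor b A U) (hb : (G.len p).bodd ≠ b) :
    G.avoidAttractorStrategy b A U p ∉ G.attractor b A U := by
  have h := exists_isChild_notMem_attractor hp hb
  simp only [avoidAttractorStrategy]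
  rw [dif_pos h]
  exact h.choose_spec.2

theorem IsRun.notMem_attractor {x : ℕ → G.Pos} (hx : G.IsRun x)
    (h₀ : x 0 ∉ G.attractor b Set.univ U)
    (hσ : G.Follows (!b) (G.avoidAttractorStrategy b Set.univ U) x) (n : ℕ) :
    x n ∉ G.attractor b Set.univ U := by
  induction n with
  | zero => exact h₀
  | succ n ih =>
    by_cases hb : n.bodd = b
    · exact fun h => ih (mem_attractor_of_own (by rwa [hx.len_eq]) (hx.isChild n) trivial h)
    · rw [hσ n (Bool.eq_not_of_ne hb)]
      exact avoidAttractorStrategy_notMem ih (by rwa [hx.len_eq])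

end Attractor

/-- All runs through `p` belong to `O`. -/
def IsDecided (G : GameTree.{u}) (O : Set (ℕ → G.Pos)) (p : G.Pos) : Prop :=
  ∀ x, G.IsRun x → x (G.len p) = p → x ∈ O

theorem IsOpenOnRuns.exists_isDecided {O : Set (ℕ → G.Pos)} (hO : G.IsOpenOnRuns O) {x : ℕ → G.Pos}
    (hx : G.IsRun x) (hxO : x ∈ O) : ∃ n, ∀ m ≥ n, G.IsDecided O (x m) := by
  obtain ⟨n, hn⟩ := hO x hx hxO
  refine ⟨n, fun m hm y hy hym => hn y hy ?_⟩
  rw [hx.len_eq] at hym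
  exact hy.eq_of_le hx hym hm

/-- The **Gale–Stewart theorem**. -/
theorem IsOpenOnRuns.determined {S : Set (ℕ → G.Pos)} (hS : G.IsOpenOnRuns S) (r : G.Pos) :
    (∃ σ : G.Strategy, ∀ x, G.IsRun x → x 0 = r → G.Follows false σ x → x ∈ S) ∨
    (∃ σ : G.Strategy, ∀ x, G.IsRun x → x 0 = r → G.Follows true σ x → x ∉ S) := by
  by_cases hr : r ∈ G.attractor false Set.univ {p | G.IsDecided S p}
  · refine .inl ⟨G.attractorStrategy false Set.univ {p | G.IsDecided S p}, fun x hx h₀ hσ => ?_⟩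
    obtain ⟨m, -, hm⟩ := hx.exists_mem_of_mem_attractor (n := 0) (by rwa [h₀])
      fun m _ hb _ _ => hσ m hb
    exact hm x hx (by rw [hx.len_eq])
  · refine .inr ⟨G.avoidAttractorStrategy false Set.univ {p | G.IsDecided S p},
      fun x hx h₀ hσ hxS => ?_⟩
    obtain ⟨n, hn⟩ := hS.exists_isDecided hx hxS
    exact hx.notMem_attractor (b := false) (by rwa [h₀]) hσ n (subset_attractor (hn n le_rfl))

/-- A covering of the game `G` by the auxiliary game `G'` in the sense of Martin: a map of positions
and, for each player, a transport of strategies. The transported strategy depends locally on the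
given one, and every run of `G` following it lifts to a run of `G'` following the given one. -/
structure Covering (G' G : GameTree.{u}) where
  proj : G'.Pos → G.Pos
  transport : Bool → G'.Strategy → G.Strategy
  len_proj : ∀ p, G.len (proj p) = G'.len p
  parent_proj : ∀ p, G.parent (proj p) = proj (G'.parent p)
  transport_local : ∀ b (σ σ' : G'.Strategy) n, (∀ q, G'.len q ≤ n → σ q = σ' q) →
    ∀ p, G.len p ≤ n → transport b σ p = transport b σ' p
  exists_lift : ∀ b (σ : G'.Strategy) x, G.IsRun x → G.Follows b (transport b σ) x →
    ∃ x', G'.IsRun x' ∧ G'.Follows b σ x' ∧ ∀ n, proj (x' n) = x n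

namespace Covering

variable {G'' G' G : GameTree.{u}}

/-- The covering `c` changes nothing during the first `k` moves. -/
structure IsTrivialUpTo (c : Covering G' G) (k : ℕ) : Prop where
  inj : ∀ p q, G'.len p ≤ k → c.proj p = c.proj q → p = q
  surj : ∀ p, G.len p ≤ k → ∃ q, c.proj q = p
  transport_proj : ∀ b (σ : G'.Strategy) p, G'.len p < k →
    c.transport b σ (c.proj p) = c.proj (σ p)

theorem isRun_proj (c : Covering G' G) {x : ℕ → G'.Pos} (hx : G'.IsRun x) :
    G.IsRun fun n => c.proj (x n) :=
  fun n => ⟨by rw [c.len_proj, hx.len_eq], by rw [c.parent_proj, (hx n).2]⟩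

/-- The identity covering. -/
protected def refl (G : GameTree.{u}) : Covering G G where
  proj := id
  transport _ σ := σ
  len_proj _ := rfl
  parent_proj _ := rfl
  transport_local _ _ _ _ h p hp := h p hp
  exists_lift _ _ x hx hσ := ⟨x, hx, hσ, fun _ => rfl⟩

/-- The composite of two coverings. -/
def comp (d : Covering G' G) (c : Covering G'' G') : Covering G'' G where
  proj p := d.proj (c.proj p)
  transport b σ := d.transport b (c.transport b σ)
  len_proj p := by rw [d.len_proj, c.len_proj]
  parent_proj p := by rw [d.parent_proj, c.parent_proj]
  transport_local b σ σ' n h p hp :=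
    d.transport_local b _ _ n (fun q hq => c.transport_local b _ _ n h q hq) p hp
  exists_lift b σ x hx hσ := by
    obtain ⟨x', hx', hσ', hxx'⟩ := d.exists_lift b _ x hx hσ
    obtain ⟨x'', hx'', hσ'', hxx''⟩ := c.exists_lift b _ x' hx' hσ'
    exact ⟨x'', hx'', hσ'', fun n => by rw [hxx'', hxx']⟩

theorem IsTrivialUpTo.comp {d : Covering G' G} {c : Covering G'' G'} {k : ℕ}
    (hd : d.IsTrivialUpTo k) (hc : c.IsTrivialUpTo k) : (d.comp c).IsTrivialUpTo k where
  inj p q hp h := hc.inj p q hp (hd.inj _ _ (by rwa [c.len_proj]) h)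
  surj p hp := by
    obtain ⟨q, rfl⟩ := hd.surj p hp
    obtain ⟨r, rfl⟩ := hc.surj q (by rwa [← d.len_proj])
    exact ⟨r, rfl⟩
  transport_proj b σ p hp :=
    (hd.transport_proj b _ _ (by rwa [c.len_proj])).trans
      (congrArg d.proj (hc.transport_proj b σ p hp))

theorem IsTrivialUpTo.mono {c : Covering G' G} {k l : ℕ} (h : c.IsTrivialUpTo l) (hkl : k ≤ l) :
    c.IsTrivialUpTo k where
  inj p q hp := h.inj p q (hp.trans hkl)
  surj p hp := h.surj p (hp.trans hkl)
  transport_proj b σ p hp := h.transport_proj b σ p (hp.trans_le hkl)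

end Covering

/-! ### Inverse limits of coverings -/

section Limit

/-- A compatible sequence of positions in an inverse system of coverings. -/
abbrev Thread (G : ℕ → GameTree.{u}) (c : ∀ i, Covering (G (i + 1)) (G i)) : Type u :=
  {p : ∀ i, (G i).Pos // ∀ i, (c i).proj (p (i + 1)) = p i}

variable {G : ℕ → GameTree.{u}} {c : ∀ i, Covering (G (i + 1)) (G i)} {k : ℕ}

namespace Thread

theorem len_eq (p : Thread G c) (i : ℕ) : (G i).len (p.1 i) = (G 0).len (p.1 0) := by
  induction i with
  | zero => rfl
  | succ i ih => rw [← ih, ← p.2 i, (c i).len_proj]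

theorem exists_zero_eq (hc : ∀ i, (c i).IsTrivialUpTo (k + i)) (q : (G 0).Pos)
    (hq : (G 0).len q ≤ k) : ∃ p : Thread G c, p.1 0 = q := by
  have lift : ∀ i (a : {a : (G i).Pos // (G i).len a ≤ k}),
      ∃ b : {b : (G (i + 1)).Pos // (G (i + 1)).len b ≤ k}, (c i).proj b.1 = a.1 := by
    rintro i ⟨a, ha⟩
    obtain ⟨b, rfl⟩ := (hc i).surj a (by omega)
    exact ⟨⟨b, by rwa [← (c i).len_proj]⟩, rfl⟩
  choose f hf using lift
  let r : ∀ i, {a : (G i).Pos // (G i).len a ≤ k} := fun i => Nat.rec ⟨q, hq⟩ f i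
  exact ⟨⟨fun i => (r i).1, fun i => hf i (r i)⟩, rfl⟩

theorem exists_eq (i : ℕ) : ∀ {G : ℕ → GameTree.{u}} {c : ∀ i, Covering (G (i + 1)) (G i)} {k : ℕ}
    (_ : ∀ i, (c i).IsTrivialUpTo (k + i)) (q : (G i).Pos) (_ : (G i).len q ≤ k + i),
    ∃ p : Thread G c, p.1 i = q := by
  induction i with
  | zero => exact exists_zero_eq
  | succ i ih =>
    intro G c k hc q hq
    obtain ⟨p, hp⟩ := ih (G := fun j => G (j + 1)) (c := fun j => c (j + 1)) (k := k + 1)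
      (fun j => by simpa only [Nat.add_assoc, Nat.add_comm 1 j] using hc (j + 1)) q (by omega)
    refine ⟨⟨fun j => match j with
      | 0 => (c 0).proj (p.1 0)
      | j + 1 => p.1 j, fun j => ?_⟩, hp⟩
    cases j with
    | zero => rfl
    | succ j => exact p.2 j

theorem eq_of_eq (hc : ∀ i, (c i).IsTrivialUpTo (k + i)) {p q : Thread G c} {i : ℕ}
    (hl : (G 0).len (p.1 0) ≤ k + i) (h : p.1 i = q.1 i) : p = q := by
  refine Subtype.ext (funext fun j => ?_)
  rcases le_total j i with hji | hij
  · clear hl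
    induction i, hji using Nat.le_induction with
    | base => exact h
    | succ i _ ih => exact ih (by rw [← p.2, ← q.2, h])
  · induction j, hij using Nat.le_induction with
    | base => exact h
    | succ j hij ih =>
      refine (hc j).inj _ _ (by rw [p.len_eq]; omega) ?_
      rw [p.2, q.2, ih]

/-- The parent operation on threads, taken coordinatewise. -/
def parent (p : Thread G c) : Thread G c :=
  ⟨fun i => (G i).parent (p.1 i), fun i => by rw [← (c i).parent_proj, p.2]⟩

theorem parent_eq_of_isChild (hc : ∀ i, (c i).IsTrivialUpTo (k + i)) {p q : Thread G c} {i : ℕ}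
    (hl : (G 0).len (p.1 0) ≤ k + i) (h : (G i).IsChild (p.1 i) (q.1 i)) :
    q.parent = p ∧ (G 0).len (q.1 0) = (G 0).len (p.1 0) + 1 :=
  ⟨(eq_of_eq hc hl h.1.symm).symm, by rw [← q.len_eq i, ← p.len_eq i, h.2]⟩

end Thread

/-- The inverse limit of a sequence of coverings that become trivial further and further out. -/
abbrev limit (hc : ∀ i, (c i).IsTrivialUpTo (k + i)) : GameTree.{u} where
  Pos := Thread G c
  len p := (G 0).len (p.1 0)
  parent := Thread.parent
  len_parent _ := (G 0).len_parent _
  parent_eq_self p h :=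
    Subtype.ext (funext fun i => (G i).parent_eq_self _ (by rwa [p.len_eq]))
  exists_child p := by
    obtain ⟨q, hq⟩ := (G ((G 0).len (p.1 0) + 1)).exists_child (p.1 _)
    obtain ⟨q', rfl⟩ := Thread.exists_eq _ hc q (by rw [hq.2, p.len_eq]; omega)
    exact ⟨q', Thread.parent_eq_of_isChild hc (by omega) hq⟩

variable (hc : ∀ i, (c i).IsTrivialUpTo (k + i))

theorem IsChild.limit_apply {p q : Thread G c} (h : (limit hc).IsChild p q) (i : ℕ) :
    (G i).IsChild (p.1 i) (q.1 i) :=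
  ⟨congrArg (fun r : Thread G c => r.1 i) h.1, by rw [q.len_eq, p.len_eq]; exact h.2⟩

theorem IsRun.limit_apply {x : ℕ → Thread G c} (h : (limit hc).IsRun x) (i : ℕ) :
    (G i).IsRun fun n => (x n).1 i :=
  fun n => ⟨by rw [(x n).len_eq]; exact h.len_eq n,
    congrArg (fun r : Thread G c => r.1 i) (h n).2⟩

section Transport

variable (b : Bool) (σ σ' : (limit hc).Strategy)

open Classical in
/-- The strategy that `σ` induces on the `i`-th game, at the positions whose children are already
determined by the `i`-th coordinate. -/
noncomputable def limitRestrict (i : ℕ) : (G i).Strategy where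
  toFun q :=
    if h : (G i).len q + 1 ≤ k + i then
      (σ (Thread.exists_eq i hc q (by omega)).choose).1 i
    else (default : (G i).Strategy) q
  isChild q := by
    split_ifs with h
    · have hq := (Thread.exists_eq i hc q (by omega)).choose_spec
      have hchild := (σ.isChild (Thread.exists_eq i hc q (by omega)).choose).limit_apply hc i
      rwa [hq] at hchild
    · exact (default : (G i).Strategy).isChild q

theorem limitRestrict_apply (i : ℕ) (p : Thread G c) (h : (G i).len (p.1 i) + 1 ≤ k + i) :
    limitRestrict hc σ i (p.1 i) = (σ p).1 i := by
  have hp : (Thread.exists_eq i hc (p.1 i) (by omega)).choose = p :=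
    (Thread.eq_of_eq hc (i := i) (by rw [← p.len_eq i]; omega)
      (Thread.exists_eq i hc (p.1 i) (by omega)).choose_spec.symm).symm
  simp only [limitRestrict, dif_pos h, hp]

theorem limitRestrict_local {N : ℕ} (h : ∀ q, (limit hc).len q ≤ N → σ q = σ' q) (i : ℕ)
    (q : (G i).Pos) (hq : (G i).len q ≤ N) : limitRestrict hc σ i q = limitRestrict hc σ' i q := by
  by_cases hqi : (G i).len q + 1 ≤ k + i
  · obtain ⟨p, rfl⟩ := Thread.exists_eq i hc q (by omega)
    rw [limitRestrict_apply _ _ _ _ hqi, limitRestrict_apply _ _ _ _ hqi,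
      h p (by rwa [p.len_eq] at hq)]
  · simp only [limitRestrict, dif_neg hqi]

/-- The strategy on the `n`-th game obtained by restricting `σ` to the `(n + j)`-th game and
transporting it down. -/
noncomputable def limitApprox : ℕ → ∀ n, (G n).Strategy
  | 0, n => limitRestrict hc σ n
  | j + 1, n => (c n).transport b (limitApprox j (n + 1))

theorem limitApprox_eq_limitRestrict (j : ℕ) : ∀ n (q : (G n).Pos), (G n).len q + 1 ≤ k + n →
    limitApprox hc b σ j n q = limitRestrict hc σ n q := by
  induction j with
  | zero => exact fun _ _ _ => rfl
  | succ j ih =>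
    intro n q hq
    obtain ⟨p, rfl⟩ := Thread.exists_eq n hc q (by omega)
    have hl : (G (n + 1)).len (p.1 (n + 1)) = (G n).len (p.1 n) := by
      rw [p.len_eq (n + 1), p.len_eq n]
    calc (c n).transport b (limitApprox hc b σ j (n + 1)) (p.1 n)
        = (c n).transport b (limitApprox hc b σ j (n + 1)) ((c n).proj (p.1 (n + 1))) := by
          rw [p.2 n]
      _ = (c n).proj ((σ p).1 (n + 1)) := by
          rw [(hc n).transport_proj b _ _ (by omega), ih _ _ (by omega),
            limitRestrict_apply _ _ _ _ (by omega)]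
      _ = limitRestrict hc σ n (p.1 n) := by
          rw [limitRestrict_apply _ _ _ _ hq, (σ p).2 n]

theorem limitApprox_succ (j : ℕ) : ∀ n (q : (G n).Pos), (G n).len q + 1 ≤ k + n + j →
    limitApprox hc b σ (j + 1) n q = limitApprox hc b σ j n q := by
  induction j with
  | zero =>
    intro n q h
    rw [limitApprox_eq_limitRestrict _ _ _ _ _ _ h, limitApprox_eq_limitRestrict _ _ _ _ _ _ h]
  | succ j ih =>
    exact fun n q h =>
      (c n).transport_local b _ _ _ (fun r hr => ih (n + 1) r (by omega)) q le_rfl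

theorem limitApprox_eq_of_le {i j n : ℕ} {q : (G n).Pos} (h : (G n).len q + 1 ≤ k + n + i)
    (hij : i ≤ j) : limitApprox hc b σ j n q = limitApprox hc b σ i n q := by
  induction j, hij using Nat.le_induction with
  | base => rfl
  | succ j hij ih => rw [limitApprox_succ hc b σ j n q (by omega), ih]

theorem limitApprox_local {N : ℕ} (h : ∀ q, (limit hc).len q ≤ N → σ q = σ' q) (j : ℕ) :
    ∀ (n : ℕ) (q : (G n).Pos), (G n).len q ≤ N →
      limitApprox hc b σ j n q = limitApprox hc b σ' j n q := by
  induction j with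
  | zero => exact limitRestrict_local hc σ σ' h
  | succ j ih => exact fun n q hq => (c n).transport_local b _ _ N (ih (n + 1)) q hq

/-- The transport of `σ` to the `n`-th game: the eventual value of `limitApprox`. -/
noncomputable def limitTransport (n : ℕ) : (G n).Strategy where
  toFun p := limitApprox hc b σ ((G n).len p + 1) n p
  isChild p := (limitApprox hc b σ _ n).isChild p

theorem limitApprox_eq_limitTransport {n j : ℕ} {q : (G n).Pos} (h : (G n).len q + 1 ≤ j) :
    limitApprox hc b σ j n q = limitTransport hc b σ n q :=
  limitApprox_eq_of_le hc b σ (by omega) h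

theorem transport_limitTransport (n : ℕ) :
    (c n).transport b (limitTransport hc b σ (n + 1)) = limitTransport hc b σ n := by
  refine Strategy.ext (funext fun p => ?_)
  calc (c n).transport b (limitTransport hc b σ (n + 1)) p
      = (c n).transport b (limitApprox hc b σ ((G n).len p + 1) (n + 1)) p :=
        (c n).transport_local b _ _ _
          (fun q hq => (limitApprox_eq_limitTransport hc b σ (by omega)).symm) p le_rfl
    _ = limitTransport hc b σ n p :=
        limitApprox_eq_limitTransport hc b σ (j := (G n).len p + 1 + 1) (by omega)

theorem limitTransport_apply (n : ℕ) (p : Thread G c) (h : (G n).len (p.1 n) + 1 ≤ k + n) :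
    limitTransport hc b σ n (p.1 n) = (σ p).1 n := by
  rw [← limitRestrict_apply hc σ n p h]
  exact limitApprox_eq_limitRestrict hc b σ _ n _ h

theorem limit_exists_lift (x : ℕ → (G 0).Pos) (hx : (G 0).IsRun x)
    (hσ : (G 0).Follows b (limitTransport hc b σ 0) x) :
    ∃ x', (limit hc).IsRun x' ∧ (limit hc).Follows b σ x' ∧ ∀ n, (x' n).1 0 = x n := by
  have lift : ∀ n (y : {y // (G n).IsRun y ∧ (G n).Follows b (limitTransport hc b σ n) y}),
      ∃ z : {z // (G (n + 1)).IsRun z ∧ (G (n + 1)).Follows b (limitTransport hc b σ (n + 1)) z},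
        ∀ m, (c n).proj (z.1 m) = y.1 m := by
    rintro n ⟨y, hy, hyσ⟩
    rw [← transport_limitTransport] at hyσ
    obtain ⟨z, hz, hzσ, hzy⟩ := (c n).exists_lift b _ y hy hyσ
    exact ⟨⟨z, hz, hzσ⟩, hzy⟩
  choose f hf using lift
  let X : ∀ n, {y // (G n).IsRun y ∧ (G n).Follows b (limitTransport hc b σ n) y} :=
    fun n => Nat.rec ⟨x, hx, hσ⟩ f n
  let x' : ℕ → Thread G c := fun m => ⟨fun n => (X n).1 m, fun n => hf n (X n) m⟩
  refine ⟨x', fun m => ⟨hx.len_eq m, Subtype.ext (funext fun n => ((X n).2.1 m).2)⟩,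
    fun m hm => ?_, fun n => rfl⟩
  have hl : (G (m + 1)).len ((x' m).1 (m + 1)) = m := (X (m + 1)).2.1.len_eq m
  refine Thread.eq_of_eq hc (i := m + 1) ((hx.len_eq (m + 1)).trans_le (by omega)) ?_
  rw [← limitTransport_apply hc b σ (m + 1) (x' m) (by omega)]
  exact (X (m + 1)).2.2 m hm

end Transport

/-- The projection of the inverse limit to the first game is a covering. -/
noncomputable def limitCovering : Covering (limit hc) (G 0) where
  proj p := p.1 0
  transport b σ := limitTransport hc b σ 0
  len_proj _ := rfl
  parent_proj _ := rfl
  transport_local b σ σ' _ h p hp := limitApprox_local hc b σ σ' h _ 0 p hp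
  exists_lift := limit_exists_lift hc

theorem limitCovering_isTrivialUpTo : (limitCovering hc).IsTrivialUpTo k where
  inj _ _ hp h := Thread.eq_of_eq hc (i := 0) hp h
  surj p hp := Thread.exists_zero_eq hc p hp
  transport_proj b σ p hp := limitTransport_apply hc b σ 0 p hp

end Limit

/-! ### Unravelling open sets -/

section Steer

variable {G : GameTree.{u}} {l : ℕ} {U : Set G.Pos}

/-- Some initial segment of `p` of length at least `l` belongs to `U`. -/
def HasEntered (G : GameTree.{u}) (l : ℕ) (U : Set G.Pos) (p : G.Pos) : Prop :=
  ∃ n, l ≤ n ∧ n ≤ G.len p ∧ G.ancestor n p ∈ U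

open Classical in
/-- The shortest initial segment of `p` of length at least `l` that belongs to `U`, and `p` itself
if there is none. -/
noncomputable def firstEntry (G : GameTree.{u}) (l : ℕ) (U : Set G.Pos) (p : G.Pos) : G.Pos :=
  if h : G.HasEntered l U p then G.ancestor (Nat.find h) p else p

open Classical in
/-- The move at `p` that answers the first visit to `U` with `reply`, forces such a visit from
positions of the attractor of `U`, and is `stay` otherwise. -/
noncomputable def steer (G : GameTree.{u}) (b : Bool) (A U : Set G.Pos) (l : ℕ)
    (reply : G.Pos → G.Pos) (stay p : G.Pos) : G.Pos :=
  if G.HasEntered l U p then reply (G.firstEntry l U p)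
  else if p ∈ G.attractor b A U then G.attractorStrategy b A U p
  else stay

variable {b : Bool} {A : Set G.Pos} {reply : G.Pos → G.Pos} {stay p : G.Pos} {x : ℕ → G.Pos}

theorem isChild_steer (hreply : ∀ u, G.IsChild p (reply u)) (hstay : G.IsChild p stay) :
    G.IsChild p (G.steer b A U l reply stay p) := by
  rw [steer]
  split_ifs
  exacts [hreply _, (G.attractorStrategy b A U).isChild p, hstay]

theorem IsRun.steer_of_hasEntered (hx : G.IsRun x) {m n : ℕ} (hlm : l ≤ m) (hm : x m ∈ U)
    (hmin : ∀ j, l ≤ j → j < m → x j ∉ U) (hmn : m ≤ n) :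
    G.steer b A U l reply stay (x n) = reply (x m) := by
  classical
  have hentry : l ≤ m ∧ m ≤ G.len (x n) ∧ G.ancestor m (x n) ∈ U :=
    ⟨hlm, by rwa [hx.len_eq], by rwa [hx.ancestor_eq hmn]⟩
  have hn : G.HasEntered l U (x n) := ⟨m, hentry⟩
  have hfind : Nat.find hn = m := by
    refine (Nat.find_eq_iff hn).2 ⟨hentry, fun j hj ⟨hlj, hjn, hjU⟩ => hmin j hlj hj ?_⟩
    rwa [hx.len_eq, ← hx.ancestor_eq (hj.le.trans hmn)] at *
  rw [steer, if_pos hn, firstEntry, dif_pos hn, hfind, hx.ancestor_eq hmn]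

theorem IsRun.not_hasEntered (hx : G.IsRun x) (hU : ∀ n ≥ l, x n ∉ U) (n : ℕ) :
    ¬ G.HasEntered l U (x n) := by
  rintro ⟨j, hlj, hjn, hj⟩
  rw [hx.len_eq] at hjn
  exact hU j hlj (by rwa [hx.ancestor_eq hjn] at hj)

theorem IsRun.notMem_attractor_of_steer (hx : G.IsRun x) {k n : ℕ} {reply : ℕ → G.Pos → G.Pos}
    {stay : ℕ → G.Pos} (hU : ∀ n ≥ l, x n ∉ U) (hUl : ∀ n ≥ k, x n ∈ U → l ≤ n)
    (hsteer : ∀ n ≥ k, n.bodd = b → x (n + 1) = G.steer b A U l (reply n) (stay n) (x n))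
    (hn : k ≤ n) : x n ∉ G.attractor b A U := by
  intro hA
  obtain ⟨m, hnm, hm⟩ := hx.exists_mem_of_mem_attractor hA fun m hm hb hmA _ => by
    rw [hsteer m (hn.trans hm) hb, steer, if_neg (hx.not_hasEntered hU m), if_pos hmA]
  exact hU m (hUl m (hn.trans hnm) hm) hm

theorem IsRun.steer_of_notMem_attractor (hx : G.IsRun x) {n : ℕ} (hU : ∀ n ≥ l, x n ∉ U)
    (hA : x n ∉ G.attractor b A U) : G.steer b A U l reply stay (x n) = stay := by
  rw [steer, if_neg (hx.not_hasEntered hU n), if_neg hA]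

end Steer

section Commitments

variable {G : GameTree.{u}} {O : Set (ℕ → G.Pos)} {K : ℕ}

/-- `S` is a quasi-strategy for player `false` in the subgame starting at the position `a` of
length `K + 1`. -/
structure IsQuasiStrategy (G : GameTree.{u}) (K : ℕ) (a : G.Pos) (S : Set G.Pos) : Prop where
  root_mem : a ∈ S
  ancestor_eq : ∀ q ∈ S, G.ancestor (K + 1) q = a
  parent_mem : ∀ q ∈ S, K + 2 ≤ G.len q → G.parent q ∈ S
  mem_of_odd : ∀ q ∈ S, (G.len q).bodd = true → ∀ r, G.IsChild q r → r ∈ S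
  exists_of_even : ∀ q ∈ S, (G.len q).bodd = false → ∃ r, G.IsChild q r ∧ r ∈ S

/-- `T` is a quasi-strategy for player `true` within the quasi-strategy `S`, from length `K + 2` on,
along which the play is never decided in favour of `O`. -/
structure IsEvasion (O : Set (ℕ → G.Pos)) (K : ℕ) (S T : Set G.Pos) : Prop where
  mem : ∀ q ∈ T, q ∈ S
  not_isDecided : ∀ q ∈ T, ¬ G.IsDecided O q
  le_len : ∀ q ∈ T, K + 2 ≤ G.len q
  parent_mem : ∀ q ∈ T, K + 3 ≤ G.len q → G.parent q ∈ T
  mem_of_even : ∀ q ∈ T, (G.len q).bodd = false → ∀ r, G.IsChild q r → r ∈ S → r ∈ T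
  exists_of_odd : ∀ q ∈ T, (G.len q).bodd = true → ∃ r, G.IsChild q r ∧ r ∈ T

/-- What player `true` announces about the play to come: either a position `u` (`Sum.inl`) through
which it will run, or a set `T` (`Sum.inr`) in which it will stay. -/
abbrev Claim (G : GameTree.{u}) : Type u := G.Pos ⊕ Set G.Pos

namespace Claim

/-- The claim is allowed once player `false` is committed to the quasi-strategy `S`. -/
def IsLegal (O : Set (ℕ → G.Pos)) (K : ℕ) (S : Set G.Pos) : Claim G → Prop
  | .inl u => u ∈ S ∧ G.IsDecided O u ∧ K + 2 ≤ G.len u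
  | .inr T => IsEvasion O K S T

/-- The positions that are compatible with the claim. -/
def arena : Claim G → Set G.Pos
  | .inl u => {q | G.ancestor (G.len u) q = G.ancestor (G.len q) u}
  | .inr T => T

theorem ancestor_mem_arena_inl (u : G.Pos) {n : ℕ} (hn : n ≤ G.len u) :
    G.ancestor n u ∈ arena (.inl u : Claim G) := by
  rw [arena, Set.mem_ofPred_eq, len_ancestor u hn,
    ancestor_of_len_le _ (by rwa [len_ancestor u hn])]

theorem mem_arena_inl_of_len_le {u q : G.Pos} (h : G.len q ≤ G.len u) :
    q ∈ arena (.inl u : Claim G) ↔ q = G.ancestor (G.len q) u := by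
  rw [arena, Set.mem_ofPred_eq, ancestor_of_len_le q h]

theorem mem_arena_inl_of_le_len {u q : G.Pos} (h : G.len u ≤ G.len q) :
    q ∈ arena (.inl u : Claim G) ↔ G.ancestor (G.len u) q = u := by
  rw [arena, Set.mem_ofPred_eq, ancestor_of_len_le u h]

theorem parent_mem_arena_inl {u p : G.Pos} (hp : p ∈ arena (.inl u : Claim G)) :
    G.parent p ∈ arena (.inl u : Claim G) := by
  have hlen := G.len_parent p
  rcases le_or_gt (G.len p) (G.len u) with h | h
  · rw [mem_arena_inl_of_len_le h] at hp
    rw [mem_arena_inl_of_len_le (by omega), hlen, parent_eq_ancestor,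
      ← ancestor_ancestor u (Nat.sub_le _ 1), ← hp]
  · rw [mem_arena_inl_of_le_len h.le] at hp
    rw [mem_arena_inl_of_le_len (by omega), ancestor_parent p (by omega), hp]

theorem exists_isChild_mem_arena_inl {u p : G.Pos} (hp : p ∈ arena (.inl u : Claim G)) :
    ∃ q, G.IsChild p q ∧ q ∈ arena (.inl u : Claim G) := by
  rcases lt_or_ge (G.len p) (G.len u) with h | h
  · refine ⟨G.ancestor (G.len p + 1) u, ?_, ancestor_mem_arena_inl u h⟩
    have := isChild_ancestor u h
    rwa [← (mem_arena_inl_of_len_le h.le).1 hp] at this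
  · obtain ⟨q, hpq⟩ := G.exists_child p
    refine ⟨q, hpq, (mem_arena_inl_of_le_len (by have := hpq.2; omega)).2 ?_⟩
    rw [IsChild.ancestor_eq hpq h, (mem_arena_inl_of_le_len h).1 hp]

end Claim

theorem IsRun.mem_arena_inl {x : ℕ → G.Pos} (hx : G.IsRun x) (m n : ℕ) :
    x n ∈ Claim.arena (.inl (x m) : Claim G) := by
  rcases le_total m n with h | h
  · rw [Claim.mem_arena_inl_of_le_len (by simpa only [hx.len_eq]), hx.len_eq, hx.ancestor_eq h]
  · rw [Claim.mem_arena_inl_of_len_le (by simpa only [hx.len_eq]), hx.len_eq, hx.ancestor_eq h]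

/-- The commitments made along a play of the unravelled game: player `false` chooses a
quasi-strategy when moving to length `K + 1`, and player `true` answers it with a claim when moving
to length `K + 2`. -/
structure Commitments (G : GameTree.{u}) : Type u where
  quasi : Set G.Pos
  claim : Claim G

namespace Commitments

instance : Bot (Commitments G) := ⟨⟨∅, .inr ∅⟩⟩

open Classical in
/-- The commitments that have been made at length `n`; the missing ones are replaced by junk. -/
noncomputable def trunc (K n : ℕ) (s : Commitments G) : Commitments G where
  quasi := if K + 1 ≤ n then s.quasi else ∅
  claim := if K + 2 ≤ n then s.claim else .inr ∅

variable {s t : Commitments G} {n : ℕ}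

theorem trunc_trunc {m : ℕ} (h : m ≤ n) : (s.trunc K n).trunc K m = s.trunc K m := by
  simp only [trunc]
  congr 1 <;> split_ifs <;> first | rfl | omega

theorem trunc_quasi (h : K + 1 ≤ n) : (s.trunc K n).quasi = s.quasi := if_pos h

theorem trunc_claim (h : K + 2 ≤ n) : (s.trunc K n).claim = s.claim := if_pos h

theorem trunc_eq_trunc (hquasi : K + 1 ≤ n → s.quasi = t.quasi)
    (hclaim : K + 2 ≤ n → s.claim = t.claim) : s.trunc K n = t.trunc K n := by
  simp only [trunc]
  congr 1
  · split_ifs with h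
    exacts [hquasi h, rfl]
  · split_ifs with h
    exacts [hclaim h, rfl]

theorem trunc_eq_trunc_of_le (h : n ≤ K) : s.trunc K n = t.trunc K n :=
  trunc_eq_trunc (by omega) (by omega)

theorem trunc_eq_trunc_of_le_succ (h : n ≤ K + 1) (hquasi : s.quasi = t.quasi) :
    s.trunc K n = t.trunc K n :=
  trunc_eq_trunc (fun _ => hquasi) (by omega)

/-- The commitments that have been made at the position `p` obey the rules of the game. -/
structure IsLegal (O : Set (ℕ → G.Pos)) (K : ℕ) (p : G.Pos) (s : Commitments G) : Prop where
  isQuasiStrategy : K + 1 ≤ G.len p → G.IsQuasiStrategy K (G.ancestor (K + 1) p) s.quasi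
  isLegal_claim : K + 2 ≤ G.len p → s.claim.IsLegal O K s.quasi
  mem_arena : K + 2 ≤ G.len p → p ∈ s.claim.arena

theorem isLegal_of_len_le {p : G.Pos} (h : G.len p ≤ K) : s.IsLegal O K p :=
  ⟨by omega, by omega, by omega⟩

namespace IsLegal

variable {p : G.Pos}

theorem congr (h : s.IsLegal O K p) (hst : s.trunc K (G.len p) = t.trunc K (G.len p)) :
    t.IsLegal O K p := by
  have hquasi (hp : K + 1 ≤ G.len p) : s.quasi = t.quasi := by
    rw [← trunc_quasi hp, hst, trunc_quasi hp]
  have hclaim (hp : K + 2 ≤ G.len p) : s.claim = t.claim := by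
    rw [← trunc_claim hp, hst, trunc_claim hp]
  exact ⟨fun hp => hquasi hp ▸ h.isQuasiStrategy hp,
    fun hp => hquasi (by omega) ▸ hclaim hp ▸ h.isLegal_claim hp,
    fun hp => hclaim hp ▸ h.mem_arena hp⟩

theorem trunc (h : s.IsLegal O K p) : (s.trunc K (G.len p)).IsLegal O K p :=
  h.congr (trunc_trunc le_rfl).symm

theorem parent (h : s.IsLegal O K p) : s.IsLegal O K (G.parent p) := by
  have hlen := G.len_parent p
  refine ⟨fun hp => ?_, fun hp => h.isLegal_claim (by omega), fun hp => ?_⟩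
  · rw [ancestor_parent p (by omega)]
    exact h.isQuasiStrategy (by omega)
  · have hclaim := h.isLegal_claim (by omega)
    have hmem := h.mem_arena (by omega)
    rcases hs : s.claim with u | T <;> rw [hs] at hclaim hmem
    · exact Claim.parent_mem_arena_inl hmem
    · exact hclaim.parent_mem p hmem (by omega)

theorem exists_isChild (h : s.IsLegal O K p) (hp : K + 2 ≤ G.len p) :
    ∃ q, G.IsChild p q ∧ s.IsLegal O K q := by
  have hclaim := h.isLegal_claim hp
  have hmem := h.mem_arena hp
  suffices ∃ q, G.IsChild p q ∧ q ∈ s.claim.arena by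
    obtain ⟨q, hpq, hq⟩ := this
    refine ⟨q, hpq, fun _ => ?_, fun _ => hclaim, fun _ => hq⟩
    rw [hpq.ancestor_eq (by omega)]
    exact h.isQuasiStrategy (by omega)
  rcases hs : s.claim with u | T <;> rw [hs] at hclaim hmem
  · exact Claim.exists_isChild_mem_arena_inl hmem
  · cases hb : (G.len p).bodd with
    | true => exact hclaim.exists_of_odd p hmem hb
    | false =>
      obtain ⟨q, hpq, hq⟩ :=
        (h.isQuasiStrategy (by omega)).exists_of_even p (hclaim.mem p hmem) hb
      exact ⟨q, hpq, hclaim.mem_of_even p hmem hb q hpq hq⟩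

end IsLegal

end Commitments

theorem isQuasiStrategy_descendants {a : G.Pos} (ha : G.len a = K + 1) :
    G.IsQuasiStrategy K a {q | K + 1 ≤ G.len q ∧ G.ancestor (K + 1) q = a} where
  root_mem := ⟨ha.ge, ancestor_of_len_le _ ha.le⟩
  ancestor_eq _ h := h.2
  parent_mem q h hq := ⟨by rw [G.len_parent]; omega, by rw [ancestor_parent q hq, h.2]⟩
  mem_of_odd q h _ r hqr := by
    have := hqr.2
    have := h.1
    exact ⟨by omega, by rw [hqr.ancestor_eq h.1, h.2]⟩
  exists_of_even q h _ := by
    obtain ⟨r, hqr⟩ := G.exists_child q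
    have := hqr.2
    have := h.1
    exact ⟨r, hqr, by omega, by rw [IsChild.ancestor_eq hqr h.1, h.2]⟩

theorem IsQuasiStrategy.isEvasion {a : G.Pos} {S : Set G.Pos} (hS : G.IsQuasiStrategy K a S)
    (h : ∀ u ∈ S, K + 2 ≤ G.len u → ¬ G.IsDecided O u) :
    IsEvasion O K S {r ∈ S | K + 2 ≤ G.len r} where
  mem _ hq := hq.1
  not_isDecided q hq := h q hq.1 hq.2
  le_len _ hq := hq.2
  parent_mem q hq hlen := ⟨hS.parent_mem q hq.1 hq.2, by rw [G.len_parent]; omega⟩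
  mem_of_even q hq _ r hqr hr := by
    have := hqr.2
    have := hq.2
    exact ⟨hr, by omega⟩
  exists_of_odd q hq hb := by
    obtain ⟨r, hqr⟩ := G.exists_child q
    have := hqr.2
    have := hq.2
    exact ⟨r, hqr, hS.mem_of_odd q hq.1 hb r hqr, by omega⟩

theorem IsQuasiStrategy.exists_isLegal_child {a : G.Pos} {S : Set G.Pos}
    (hS : G.IsQuasiStrategy K a S) (ha : G.len a = K + 1) (hK : K.bodd = false) :
    ∃ q c, G.IsChild a q ∧ (⟨S, c⟩ : Commitments G).IsLegal O K q := by
  by_cases hu : ∃ u ∈ S, K + 2 ≤ G.len u ∧ G.IsDecided O u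
  · obtain ⟨u, huS, hlen, hu⟩ := hu
    refine ⟨G.ancestor (K + 2) u, .inl u, ?_, fun _ => ?_, fun _ => ⟨huS, hu, hlen⟩,
      fun _ => Claim.ancestor_mem_arena_inl u hlen⟩
    · have := isChild_ancestor u hlen
      rwa [hS.ancestor_eq u huS] at this
    · rwa [ancestor_ancestor _ (by omega), hS.ancestor_eq u huS]
  · push Not at hu
    obtain ⟨q, hq⟩ := G.exists_child a
    refine ⟨q, .inr {r ∈ S | K + 2 ≤ G.len r}, hq, fun _ => ?_, fun _ => hS.isEvasion hu,
      fun h => ?_⟩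
    · rwa [IsChild.ancestor_eq hq ha.ge, ancestor_of_len_le a ha.le]
    · exact ⟨hS.mem_of_odd a hS.root_mem (by rw [ha]; simp [hK]) q hq, h⟩

end Commitments

section UnravelGame

/-- A position of the unravelled game: a position of `G` with the commitments made on the way. -/
@[ext]
structure UnravelPos {G : GameTree.{u}} (O : Set (ℕ → G.Pos)) (K : ℕ) : Type u where
  pos : G.Pos
  made : Commitments G
  made_trunc : made.trunc K (G.len pos) = made
  isLegal : made.IsLegal O K pos

variable {G : GameTree.{u}} {O : Set (ℕ → G.Pos)} {K : ℕ} {p q : G.Pos} {s t : Commitments G}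

/-- The position of the unravelled game in which the commitments `s` are made as far as they are
due. -/
noncomputable def Commitments.IsLegal.toPos (h : s.IsLegal O K p) : UnravelPos O K :=
  ⟨p, s.trunc K (G.len p), Commitments.trunc_trunc le_rfl, h.trunc⟩

theorem exists_isChild_isLegal (hK : K.bodd = false) (h : s.IsLegal O K p) :
    ∃ q, ∃ t : Commitments G, G.IsChild p q ∧ t.IsLegal O K q ∧
      t.trunc K (G.len p) = s.trunc K (G.len p) := by
  rcases lt_trichotomy (G.len p) K with hp | hp | hp
  · obtain ⟨q, hpq⟩ := G.exists_child p
    exact ⟨q, s, hpq, Commitments.isLegal_of_len_le (by have := hpq.2; omega), rfl⟩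
  · obtain ⟨q, hpq⟩ := G.exists_child p
    have hq : G.len q = K + 1 := by have := hpq.2; omega
    refine ⟨q, ⟨_, s.claim⟩, hpq, ⟨fun _ => isQuasiStrategy_descendants ?_, by omega, by omega⟩,
      Commitments.trunc_eq_trunc_of_le hp.le⟩
    rw [len_ancestor q hq.ge]
  · rcases Nat.lt_or_ge (K + 1) (G.len p) with hp' | hp'
    · obtain ⟨q, hpq, hq⟩ := h.exists_isChild hp'
      exact ⟨q, s, hpq, hq, rfl⟩
    · have hquasi := h.isQuasiStrategy hp
      rw [ancestor_of_len_le p hp'] at hquasi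
      obtain ⟨q, c, hpq, hq⟩ := hquasi.exists_isLegal_child (by omega) hK
      exact ⟨q, ⟨s.quasi, c⟩, hpq, hq, Commitments.trunc_eq_trunc_of_le_succ hp' rfl⟩

/-- The auxiliary game that unravels `O` when `O` is open on the runs of `G`. -/
noncomputable abbrev unravelGame (O : Set (ℕ → G.Pos)) (hK : K.bodd = false) : GameTree.{u} where
  Pos := UnravelPos O K
  len p := G.len p.pos
  parent p := p.isLegal.parent.toPos
  len_parent p := G.len_parent p.pos
  parent_eq_self p hp := by
    refine UnravelPos.ext (G.parent_eq_self _ hp) (Eq.trans ?_ p.made_trunc)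
    exact congrArg (fun q => p.made.trunc K (G.len q)) (G.parent_eq_self _ hp)
  exists_child p := by
    obtain ⟨q, t, hpq, ht, htp⟩ := exists_isChild_isLegal hK p.isLegal
    refine ⟨ht.toPos, UnravelPos.ext hpq.1 ?_, hpq.2⟩
    change (t.trunc K (G.len q)).trunc K (G.len (G.parent q)) = p.made
    rw [hpq.1, Commitments.trunc_trunc (by have := hpq.2; omega), htp, p.made_trunc]

variable {hK : K.bodd = false}

theorem isChild_unravelGame_iff {p q : UnravelPos O K} :
    (unravelGame O hK).IsChild p q ↔
      G.IsChild p.pos q.pos ∧ q.made.trunc K (G.len p.pos) = p.made := by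
  constructor
  · rintro ⟨rfl, hlen⟩
    exact ⟨⟨rfl, hlen⟩, rfl⟩
  · rintro ⟨hpq, hmade⟩
    exact ⟨UnravelPos.ext hpq.1 ((congrArg (q.made.trunc K ∘ G.len) hpq.1).trans hmade), hpq.2⟩

open Classical in
/-- The answer of a strategy of the unravelled game to a position with commitments (junk if these
are illegal). -/
noncomputable def reply (σ : (unravelGame O hK).Strategy) (p : G.Pos) (s : Commitments G) :
    G.Pos × Commitments G :=
  if h : s.IsLegal O K p then ((σ h.toPos).pos, (σ h.toPos).made)
  else ((default : G.Strategy) p, ⊥)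

variable {σ : (unravelGame O hK).Strategy}

theorem reply_of_isLegal (h : s.IsLegal O K p) :
    reply σ p s = ((σ h.toPos).pos, (σ h.toPos).made) := dif_pos h

theorem isChild_reply (σ : (unravelGame O hK).Strategy) (p : G.Pos) (s : Commitments G) :
    G.IsChild p (reply σ p s).1 := by
  rw [reply]
  split_ifs with h
  · exact (isChild_unravelGame_iff.1 (σ.isChild h.toPos)).1
  · exact (default : G.Strategy).isChild p

theorem reply_congr_trunc (h : s.trunc K (G.len p) = t.trunc K (G.len p)) :
    reply σ p s = reply σ p t := by
  by_cases hs : s.IsLegal O K p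
  · have : hs.toPos = (hs.congr h).toPos := UnravelPos.ext rfl h
    rw [reply_of_isLegal hs, reply_of_isLegal (hs.congr h), this]
  · have ht : ¬ t.IsLegal O K p := fun ht => hs (ht.congr h.symm)
    rw [reply, dif_neg hs, reply, dif_neg ht]

theorem reply_congr_strategy {σ' : (unravelGame O hK).Strategy} {n : ℕ}
    (h : ∀ q, (unravelGame O hK).len q ≤ n → σ q = σ' q) (hp : G.len p ≤ n) :
    reply σ p s = reply σ' p s := by
  by_cases hs : s.IsLegal O K p
  · rw [reply_of_isLegal hs, reply_of_isLegal hs, h hs.toPos hp]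
  · rw [reply, dif_neg hs, reply, dif_neg hs]

theorem isLegal_reply (h : s.IsLegal O K p) :
    (reply σ p s).2.IsLegal O K (reply σ p s).1 := by
  rw [reply_of_isLegal h]
  exact (σ h.toPos).isLegal

theorem reply_trunc (h : s.IsLegal O K p) :
    (reply σ p s).2.trunc K (G.len p) = s.trunc K (G.len p) := by
  rw [reply_of_isLegal h]
  exact (isChild_unravelGame_iff.1 (σ.isChild h.toPos)).2

theorem reply_quasi (h : s.IsLegal O K p) (hp : K + 1 ≤ G.len p) :
    (reply σ p s).2.quasi = s.quasi := by
  rw [← Commitments.trunc_quasi hp, reply_trunc h, Commitments.trunc_quasi hp]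

theorem reply_claim (h : s.IsLegal O K p) (hp : K + 2 ≤ G.len p) :
    (reply σ p s).2.claim = s.claim := by
  rw [← Commitments.trunc_claim hp, reply_trunc h, Commitments.trunc_claim hp]

theorem reply_mem_arena (h : s.IsLegal O K p) (hp : K + 1 ≤ G.len p) :
    (reply σ p s).1 ∈ (reply σ p s).2.claim.arena :=
  (isLegal_reply h).mem_arena (by have := (isChild_reply σ p s).2; omega)

theorem reply_eq_ancestor (h : s.IsLegal O K p) (hp : K + 1 ≤ G.len p) {u : G.Pos}
    (hclaim : (reply σ p s).2.claim = .inl u) (hu : G.len p < G.len u) :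
    (reply σ p s).1 = G.ancestor (G.len p + 1) u := by
  have hlen := (isChild_reply σ p s).2
  have hmem := reply_mem_arena (σ := σ) h hp
  rwa [hclaim, Claim.mem_arena_inl_of_len_le (by omega), hlen] at hmem

theorem exists_lift_of_reply {b : Bool} {x : ℕ → G.Pos} (hx : G.IsRun x)
    (hs : ∀ n, s.IsLegal O K (x n)) (hpos : ∀ n, n.bodd = b → (reply σ (x n) s).1 = x (n + 1))
    (hquasi : K.bodd = b → (reply σ (x K) s).2.quasi = s.quasi)
    (hclaim : (K + 1).bodd = b → (reply σ (x (K + 1)) s).2.claim = s.claim) :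
    ∃ x' : ℕ → UnravelPos O K, (unravelGame O hK).IsRun x' ∧ (unravelGame O hK).Follows b σ x' ∧
      ∀ n, (x' n).pos = x n := by
  refine ⟨fun n => (hs n).toPos, fun n => ⟨hx.len_eq n, ?_⟩, fun n hn => ?_, fun n => rfl⟩
  · refine (isChild_unravelGame_iff (hK := hK).2 ⟨hx.isChild n, ?_⟩).1
    exact Commitments.trunc_trunc ((hx.len_eq n).le.trans (by rw [hx.len_eq]; omega))
  · have hreply := reply_of_isLegal (σ := σ) (hs n)
    have hnext : (σ (hs n).toPos).pos = x (n + 1) := by rw [← hpos n hn, hreply]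
    have hmade : (σ (hs n).toPos).made = (reply σ (x n) s).2 := by rw [hreply]
    refine UnravelPos.ext hnext.symm (Eq.trans ?_ (σ (hs n).toPos).made_trunc)
    rw [hnext, hmade]
    change s.trunc K _ = _
    rw [hx.len_eq]
    refine Commitments.trunc_eq_trunc (fun h => ?_) fun h => ?_
    · rcases eq_or_ne n K with rfl | hnK
      · exact (hquasi hn).symm
      · exact (reply_quasi (hs n) (by rw [hx.len_eq]; omega)).symm
    · rcases eq_or_ne n (K + 1) with rfl | hnK
      · exact (hclaim hn).symm
      · exact (reply_claim (hs n) (by rw [hx.len_eq]; omega)).symm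

end UnravelGame

section UnravelTransport

variable {G : GameTree.{u}} {O : Set (ℕ → G.Pos)} {K : ℕ} {hK : K.bodd = false}

/-- The part of `S` on which the play is decided in favour of `O`. -/
def decidedPart (O : Set (ℕ → G.Pos)) (S : Set G.Pos) : Set G.Pos := {q ∈ S | G.IsDecided O q}

/-- The largest quasi-strategy of player `true` within `S` and beyond `b` (of length `K + 2`) from
which player `false` cannot force a decision in favour of `O` while staying in `S`. -/
def evasion (O : Set (ℕ → G.Pos)) (K : ℕ) (S : Set G.Pos) (b : G.Pos) : Set G.Pos :=
  {q ∈ S | G.ancestor (K + 2) q = b} ∩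
    G.avoiding (K + 2) (G.attractor false S (decidedPart O S))

/-- The largest quasi-strategy of player `false` beyond `a` (of length `K + 1`) from which player
`true` cannot force the play into `U`. -/
def avoidance (K : ℕ) (U : Set G.Pos) (a : G.Pos) : Set G.Pos :=
  {q | G.ancestor (K + 1) q = a} ∩ G.avoiding (K + 1) (G.attractor true Set.univ U)

theorem IsQuasiStrategy.isEvasion_evasion {S : Set G.Pos} {a : G.Pos}
    (hS : G.IsQuasiStrategy K a S) (b : G.Pos) : IsEvasion O K S (evasion O K S b) where
  mem _ hq := hq.1.1
  not_isDecided _ hq hdecided :=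
    notMem_of_mem_avoiding hq.2 (subset_attractor ⟨hq.1.1, hdecided⟩)
  le_len _ hq := hq.2.1
  parent_mem q hq hlen := by
    refine ⟨⟨hS.parent_mem q hq.1.1 hq.2.1, ?_⟩, parent_mem_avoiding hq.2 hlen⟩
    rw [ancestor_parent q hlen, hq.1.2]
  mem_of_even q hq hb r hqr hr := by
    refine ⟨⟨hr, ?_⟩, hqr.mem_avoiding_attractor hq.2 hb hr⟩
    rw [hqr.ancestor_eq hq.2.1, hq.1.2]
  exists_of_odd q hq hb := by
    obtain ⟨r, hqr, hr⟩ := exists_isChild_mem_avoiding_attractor hq.2 (by simp [hb])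
    refine ⟨r, hqr, ⟨hS.mem_of_odd q hq.1.1 hb r hqr, ?_⟩, hr⟩
    rw [hqr.ancestor_eq hq.2.1, hq.1.2]

theorem IsRun.mem_avoiding {x : ℕ → G.Pos} (hx : G.IsRun x) {l n : ℕ} {U : Set G.Pos} (hn : l ≤ n)
    (hU : ∀ j, l ≤ j → j ≤ n → x j ∉ U) : x n ∈ G.avoiding l U := by
  refine ⟨by rwa [hx.len_eq], fun j hj hjn => ?_⟩
  rw [hx.len_eq] at hjn
  rw [hx.ancestor_eq hjn]
  exact hU j hj hjn

theorem isQuasiStrategy_avoidance {U : Set G.Pos} {a : G.Pos} (ha : G.len a = K + 1)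
    (haU : a ∉ G.attractor true Set.univ U) : G.IsQuasiStrategy K a (avoidance K U a) where
  root_mem := by
    refine ⟨ancestor_of_len_le a ha.le, ha.ge, fun n hn _ => ?_⟩
    rwa [ancestor_of_len_le a (by omega)]
  ancestor_eq _ hq := hq.1
  parent_mem q hq hlen :=
    ⟨(ancestor_parent q hlen).trans hq.1, parent_mem_avoiding hq.2 hlen⟩
  mem_of_odd q hq hb r hqr :=
    ⟨(hqr.ancestor_eq hq.2.1).trans hq.1, hqr.mem_avoiding_attractor hq.2 hb trivial⟩
  exists_of_even q hq hb := by
    obtain ⟨r, hqr, hr⟩ := exists_isChild_mem_avoiding_attractor hq.2 (by simp [hb])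
    exact ⟨r, hqr, (hqr.ancestor_eq hq.2.1).trans hq.1, hr⟩

/-- The quasi-strategy to which `σ`, a strategy of player `false`, commits at the position `p` of
length `K`. -/
noncomputable def announcedQuasi (σ : (unravelGame O hK).Strategy) (p : G.Pos) : Set G.Pos :=
  (reply σ p ⊥).2.quasi

/-- The claim with which `σ`, a strategy of player `true`, answers the quasi-strategy `S` at the
position `a` of length `K + 1`. -/
noncomputable def announcedClaim (σ : (unravelGame O hK).Strategy) (a : G.Pos) (S : Set G.Pos) :
    Claim G :=
  (reply σ a ⟨S, .inr ∅⟩).2.claim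

/-- The positions through which player `true`, answering some quasi-strategy by `f`, claims that the
play will run. -/
def claimedPart (K : ℕ) (f : Set G.Pos → Claim G) (a : G.Pos) : Set G.Pos :=
  {u | K + 2 ≤ G.len u ∧ ∃ S, G.IsQuasiStrategy K a S ∧ f S = .inl u}

open Classical in
/-- A quasi-strategy that is answered by claiming `u`. -/
noncomputable def provoking (K : ℕ) (f : Set G.Pos → Claim G) (a u : G.Pos) : Set G.Pos :=
  if h : ∃ S, G.IsQuasiStrategy K a S ∧ f S = .inl u then h.choose else ∅

/-- The moves beyond length `K` derived from a strategy `σ` of the unravelled game. Player `false`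
pretends that the opponent has claimed to evade a decision, until a decision is reached; player
`true` pretends that the opponent has committed to avoiding the positions that `σ` may claim, until
such a position is reached. -/
noncomputable def lateMove (σ : (unravelGame O hK).Strategy) : Bool → G.Pos → G.Pos
  | false, p =>
    let S := announcedQuasi σ (G.ancestor K p)
    G.steer false S (decidedPart O S) (K + 2) (fun u => (reply σ p ⟨S, .inl u⟩).1)
      (reply σ p ⟨S, .inr (evasion O K S (G.ancestor (K + 2) p))⟩).1 p
  | true, p =>
    let a := G.ancestor (K + 1) p
    let f := announcedClaim σ a
    let U := claimedPart K f a
    G.steer true Set.univ U (K + 2) (fun u => (reply σ p ⟨provoking K f a u, .inl u⟩).1)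
      (reply σ p ⟨avoidance K U a, f (avoidance K U a)⟩).1 p

/-- The moves of `G` derived from a strategy of the unravelled game, which are copied from that
strategy up to length `K`. -/
noncomputable def unravelMove (σ : (unravelGame O hK).Strategy) (b : Bool) (p : G.Pos) : G.Pos :=
  if G.len p ≤ K then (reply σ p ⊥).1 else lateMove σ b p

theorem isChild_unravelMove (σ : (unravelGame O hK).Strategy) (b : Bool) (p : G.Pos) :
    G.IsChild p (unravelMove σ b p) := by
  rw [unravelMove]
  split_ifs
  · exact isChild_reply σ p _
  · cases b <;> exact isChild_steer (fun _ => isChild_reply σ p _) (isChild_reply σ p _)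

theorem unravelMove_congr {σ σ' : (unravelGame O hK).Strategy} {n : ℕ} {b : Bool}
    (h : ∀ q, (unravelGame O hK).len q ≤ n → σ q = σ' q) {p : G.Pos} (hp : G.len p ≤ n) :
    unravelMove σ b p = unravelMove σ' b p := by
  have hreply (s : Commitments G) : reply σ p s = reply σ' p s := reply_congr_strategy h hp
  simp only [unravelMove, hreply]
  split_ifs with hlen
  · rfl
  · have hprefix {k : ℕ} (hk : k ≤ K + 1) (s : Commitments G) :
        reply σ (G.ancestor k p) s = reply σ' (G.ancestor k p) s :=
      reply_congr_strategy h (by rw [len_ancestor p (by omega)]; omega)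
    cases b with
    | false =>
      have hquasi : announcedQuasi σ (G.ancestor K p) = announcedQuasi σ' (G.ancestor K p) := by
        rw [announcedQuasi, announcedQuasi, hprefix K.le_succ]
      simp only [lateMove, hreply, hquasi]
    | true =>
      have hclaim : announcedClaim σ (G.ancestor (K + 1) p) =
          announcedClaim σ' (G.ancestor (K + 1) p) := by
        funext S
        rw [announcedClaim, announcedClaim, hprefix le_rfl]
      simp only [lateMove, hreply, hclaim]

section Run

variable {σ : (unravelGame O hK).Strategy} {x : ℕ → G.Pos} {b : Bool}

theorem IsRun.isLegal_of_mem_arena {s : Commitments G} (hx : G.IsRun x)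
    (hquasi : G.IsQuasiStrategy K (x (K + 1)) s.quasi) (hclaim : s.claim.IsLegal O K s.quasi)
    {n : ℕ} (hn : K + 2 ≤ n → x n ∈ s.claim.arena) : s.IsLegal O K (x n) := by
  refine ⟨fun h => ?_, fun _ => hclaim, fun h => hn (by rwa [hx.len_eq] at h)⟩
  rw [hx.len_eq] at h
  rwa [hx.ancestor_eq h]

theorem IsRun.isLegal_inl (hx : G.IsRun x) {S : Set G.Pos} {m : ℕ}
    (hquasi : G.IsQuasiStrategy K (x (K + 1)) S)
    (hclaim : Claim.IsLegal O K S (.inl (x m))) (n : ℕ) :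
    (⟨S, .inl (x m)⟩ : Commitments G).IsLegal O K (x n) :=
  hx.isLegal_of_mem_arena hquasi hclaim fun _ => hx.mem_arena_inl m n

theorem reply_pos_of_le (hx : G.IsRun x) (hσ : ∀ n, n.bodd = b → x (n + 1) = unravelMove σ b (x n))
    {n : ℕ} (hn : n ≤ K) (hb : n.bodd = b) (s : Commitments G) :
    (reply σ (x n) s).1 = x (n + 1) := by
  have hlen : G.len (x n) ≤ K := by rwa [hx.len_eq]
  rw [hσ n hb, unravelMove, if_pos hlen, reply_congr_trunc (Commitments.trunc_eq_trunc_of_le hlen)]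

theorem reply_quasi_announcedQuasi (hx : G.IsRun x) (c : Claim G) :
    (reply σ (x K) ⟨announcedQuasi σ (x K), c⟩).2.quasi = announcedQuasi σ (x K) := by
  rw [reply_congr_trunc (Commitments.trunc_eq_trunc_of_le (hx.len_eq K).le), announcedQuasi]

theorem add_two_le_of_even {n : ℕ} (hK : K.bodd = false) (hn : n.bodd = false) (h : K < n) :
    K + 2 ≤ n := by
  refine (Nat.succ_le_of_lt h).lt_of_ne ?_
  rintro rfl
  simp [hK] at hn

/-! #### Lifting the runs of player `false` -/

theorem isQuasiStrategy_announcedQuasi (hx : G.IsRun x)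
    (hσ : ∀ n, n.bodd = false → x (n + 1) = unravelMove σ false (x n)) :
    G.IsQuasiStrategy K (x (K + 1)) (announcedQuasi σ (x K)) := by
  have hlegal : (⊥ : Commitments G).IsLegal O K (x K) :=
    Commitments.isLegal_of_len_le (hx.len_eq K).le
  have h := (isLegal_reply (σ := σ) hlegal).isQuasiStrategy
  rw [reply_pos_of_le hx hσ le_rfl hK, hx.ancestor_eq le_rfl, hx.len_eq] at h
  exact h le_rfl

theorem eq_steer_of_even (hx : G.IsRun x)
    (hσ : ∀ n, n.bodd = false → x (n + 1) = unravelMove σ false (x n))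
    {n : ℕ} (hn : K < n) (hb : n.bodd = false) :
    x (n + 1) = G.steer false (announcedQuasi σ (x K)) (decidedPart O (announcedQuasi σ (x K)))
      (K + 2) (fun u => (reply σ (x n) ⟨announcedQuasi σ (x K), .inl u⟩).1)
      (reply σ (x n) ⟨announcedQuasi σ (x K),
        .inr (evasion O K (announcedQuasi σ (x K)) (x (K + 2)))⟩).1 (x n) := by
  have hn₂ := add_two_le_of_even hK hb hn
  rw [hσ n hb, unravelMove, if_neg (by rw [hx.len_eq]; omega)]
  simp only [lateMove, hx.ancestor_eq hn.le, hx.ancestor_eq hn₂]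

theorem exists_lift_of_mem_decidedPart (hx : G.IsRun x)
    (hσ : ∀ n, n.bodd = false → x (n + 1) = unravelMove σ false (x n))
    {m : ℕ} (hm : K + 2 ≤ m)
    (hmS : x m ∈ decidedPart O (announcedQuasi σ (x K)))
    (hmin : ∀ j, K + 2 ≤ j → j < m → x j ∉ decidedPart O (announcedQuasi σ (x K))) :
    ∃ x' : ℕ → UnravelPos O K, (unravelGame O hK).IsRun x' ∧
      (unravelGame O hK).Follows false σ x' ∧ ∀ n, (x' n).pos = x n := by
  set s : Commitments G := ⟨announcedQuasi σ (x K), .inl (x m)⟩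
  have hlegal : ∀ n, s.IsLegal O K (x n) :=
    hx.isLegal_inl (isQuasiStrategy_announcedQuasi hx hσ) ⟨hmS.1, hmS.2, by rwa [hx.len_eq]⟩
  refine exists_lift_of_reply hx hlegal (fun n hb => ?_)
    (fun _ => reply_quasi_announcedQuasi hx _) (fun h => by simp [hK] at h)
  rcases Nat.lt_or_ge K n with hn | hn
  · rcases Nat.lt_or_ge n m with hnm | hmn
    · have hn₂ : K + 2 ≤ G.len (x n) := by
        rw [hx.len_eq]
        exact add_two_le_of_even hK hb hn
      rw [reply_eq_ancestor (hlegal n) (by omega) (reply_claim (hlegal n) hn₂)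
        (by rwa [hx.len_eq, hx.len_eq]), hx.len_eq, hx.ancestor_eq hnm]
    · rw [eq_steer_of_even hx hσ hn hb, hx.steer_of_hasEntered hm hmS hmin hmn]
  · exact reply_pos_of_le hx hσ hn hb s

theorem exists_lift_of_notMem_decidedPart (hx : G.IsRun x)
    (hσ : ∀ n, n.bodd = false → x (n + 1) = unravelMove σ false (x n))
    (hS : ∀ n ≥ K + 2, x n ∉ decidedPart O (announcedQuasi σ (x K))) :
    ∃ x' : ℕ → UnravelPos O K, (unravelGame O hK).IsRun x' ∧
      (unravelGame O hK).Follows false σ x' ∧ ∀ n, (x' n).pos = x n := by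
  set S := announcedQuasi σ (x K)
  set s : Commitments G := ⟨S, .inr (evasion O K S (x (K + 2)))⟩
  have hquasi : G.IsQuasiStrategy K (x (K + 1)) S := isQuasiStrategy_announcedQuasi hx hσ
  have hattractor (n : ℕ) (hn : K + 2 ≤ n) : x n ∉ G.attractor false S (decidedPart O S) :=
    hx.notMem_attractor_of_steer (k := K + 2) hS (fun m hm _ => hm)
      (fun n hn hb => eq_steer_of_even hx hσ (by omega) hb) hn
  have hreply (n : ℕ) (hn : K < n) (hb : n.bodd = false) : (reply σ (x n) s).1 = x (n + 1) := by
    rw [eq_steer_of_even hx hσ hn hb,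
      hx.steer_of_notMem_attractor hS (hattractor n (add_two_le_of_even hK hb hn))]
  have hlegal (n : ℕ) (hn : n ≤ K ∨ x n ∈ S) : s.IsLegal O K (x n) :=
    hx.isLegal_of_mem_arena (s := s) hquasi (hquasi.isEvasion_evasion _) fun h =>
      ⟨⟨hn.resolve_left (by omega), hx.ancestor_eq h⟩,
        hx.mem_avoiding h fun j hj _ => hattractor j hj⟩
  have hmem (n : ℕ) (hn : K + 1 ≤ n) : x n ∈ S := by
    induction n, hn using Nat.le_induction with
    | base => exact hquasi.root_mem
    | succ n hn ih =>
      cases hb : n.bodd with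
      | true => exact hquasi.mem_of_odd _ ih (by rwa [hx.len_eq]) _ (hx.isChild n)
      | false =>
        have hn₂ : K + 2 ≤ G.len (x n) := by
          rw [hx.len_eq]
          exact add_two_le_of_even hK hb hn
        have h := reply_mem_arena (σ := σ) (hlegal n (.inr ih)) (by omega)
        rw [hreply n hn hb, reply_claim (hlegal n (.inr ih)) hn₂] at h
        exact h.1.1
  refine exists_lift_of_reply hx (fun n => hlegal n ((le_or_gt n K).imp_right (hmem n)))
    (fun n hb => ?_) (fun _ => reply_quasi_announcedQuasi hx _) (fun h => by simp [hK] at h)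
  rcases Nat.lt_or_ge K n with hn | hn
  exacts [hreply n hn hb, reply_pos_of_le hx hσ hn hb s]

/-! #### Lifting the runs of player `true` -/

theorem isLegal_of_len_eq {a : G.Pos} {S : Set G.Pos} (ha : G.len a = K + 1)
    (hS : G.IsQuasiStrategy K a S) (c : Claim G) : (⟨S, c⟩ : Commitments G).IsLegal O K a := by
  refine ⟨fun _ => ?_, by omega, by omega⟩
  rwa [ancestor_of_len_le a ha.le]

theorem reply_claim_announcedClaim {a : G.Pos} (ha : G.len a = K + 1) (S : Set G.Pos)
    (c : Claim G) : (reply σ a ⟨S, c⟩).2.claim = announcedClaim σ a S := by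
  have h : (⟨S, c⟩ : Commitments G).trunc K (G.len a) = (⟨S, .inr ∅⟩ : Commitments G).trunc K _ :=
    Commitments.trunc_eq_trunc_of_le_succ ha.le rfl
  rw [announcedClaim, reply_congr_trunc h]

theorem isLegal_announcedClaim {a : G.Pos} {S : Set G.Pos} (ha : G.len a = K + 1)
    (hS : G.IsQuasiStrategy K a S) : Claim.IsLegal O K S (announcedClaim σ a S) := by
  have hlegal := isLegal_of_len_eq (O := O) ha hS (.inr ∅)
  have h := (isLegal_reply (σ := σ) hlegal).isLegal_claim
    (by have := (isChild_reply σ a ⟨S, .inr ∅⟩).2; omega)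
  rwa [reply_quasi hlegal ha.ge] at h

theorem provoking_spec {f : Set G.Pos → Claim G} {a u : G.Pos} (hu : u ∈ claimedPart K f a) :
    G.IsQuasiStrategy K a (provoking K f a u) ∧ f (provoking K f a u) = .inl u := by
  rw [provoking, dif_pos hu.2]
  exact hu.2.choose_spec

theorem exists_announcedClaim_avoidance {a : G.Pos} (ha : G.len a = K + 1)
    (hS : G.IsQuasiStrategy K a (avoidance K (claimedPart K (announcedClaim σ a) a) a)) :
    ∃ T, announcedClaim σ a (avoidance K (claimedPart K (announcedClaim σ a) a) a) = .inr T := by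
  have hlegal := isLegal_announcedClaim (σ := σ) ha hS
  rcases hclaim : announcedClaim σ a (avoidance K (claimedPart K (announcedClaim σ a) a) a)
    with u | T
  · rw [hclaim] at hlegal
    exact (notMem_of_mem_avoiding hlegal.1.2
      (subset_attractor ⟨hlegal.2.2, _, hS, hclaim⟩)).elim
  · exact ⟨T, rfl⟩

theorem eq_steer_of_odd (hx : G.IsRun x)
    (hσ : ∀ n, n.bodd = true → x (n + 1) = unravelMove σ true (x n))
    {n : ℕ} (hn : K < n) (hb : n.bodd = true) {a : G.Pos} (ha : x (K + 1) = a)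
    {f : Set G.Pos → Claim G} (hf : announcedClaim σ a = f) {S : Set G.Pos}
    (hS : avoidance K (claimedPart K f a) a = S) :
    x (n + 1) = G.steer true Set.univ (claimedPart K f a) (K + 2)
      (fun u => (reply σ (x n) ⟨provoking K f a u, .inl u⟩).1)
      (reply σ (x n) ⟨S, f S⟩).1 (x n) := by
  subst ha hf hS
  rw [hσ n hb, unravelMove, if_neg (by rw [hx.len_eq]; omega)]
  simp only [lateMove, hx.ancestor_eq hn]

theorem exists_lift_of_mem_claimedPart (hx : G.IsRun x)
    (hσ : ∀ n, n.bodd = true → x (n + 1) = unravelMove σ true (x n))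
    {m : ℕ} (hm : K + 2 ≤ m)
    (hmU : x m ∈ claimedPart K (announcedClaim σ (x (K + 1))) (x (K + 1)))
    (hmin : ∀ j, K + 2 ≤ j → j < m →
      x j ∉ claimedPart K (announcedClaim σ (x (K + 1))) (x (K + 1))) :
    ∃ x' : ℕ → UnravelPos O K, (unravelGame O hK).IsRun x' ∧
      (unravelGame O hK).Follows true σ x' ∧ ∀ n, (x' n).pos = x n := by
  obtain ⟨hquasi, hclaim⟩ := provoking_spec hmU
  set S := provoking K (announcedClaim σ (x (K + 1))) (x (K + 1)) (x m)
  set s : Commitments G := ⟨S, .inl (x m)⟩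
  have ha : G.len (x (K + 1)) = K + 1 := hx.len_eq _
  have hlegal : ∀ n, s.IsLegal O K (x n) :=
    hx.isLegal_inl hquasi (hclaim ▸ isLegal_announcedClaim ha hquasi)
  have hreply : (reply σ (x (K + 1)) s).2.claim = s.claim :=
    (reply_claim_announcedClaim ha S _).trans hclaim
  refine exists_lift_of_reply hx hlegal (fun n hb => ?_) (fun h => by simp [hK] at h)
    (fun _ => hreply)
  rcases Nat.lt_or_ge K n with hn | hn
  · rcases Nat.lt_or_ge n m with hnm | hmn
    · have hclaim_n : (reply σ (x n) s).2.claim = s.claim := by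
        rcases (Nat.succ_le_of_lt hn).eq_or_lt with rfl | hn₂
        exacts [hreply, reply_claim (hlegal n) (by rwa [hx.len_eq])]
      rw [reply_eq_ancestor (hlegal n) (by rwa [hx.len_eq]) hclaim_n
        (by rwa [hx.len_eq, hx.len_eq]), hx.len_eq, hx.ancestor_eq hnm]
    · rw [eq_steer_of_odd hx hσ hn hb rfl rfl rfl, hx.steer_of_hasEntered hm hmU hmin hmn]
  · exact reply_pos_of_le hx hσ hn hb s

theorem exists_lift_of_notMem_claimedPart (hx : G.IsRun x)
    (hσ : ∀ n, n.bodd = true → x (n + 1) = unravelMove σ true (x n))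
    (hU : ∀ n ≥ K + 2, x n ∉ claimedPart K (announcedClaim σ (x (K + 1))) (x (K + 1))) :
    ∃ x' : ℕ → UnravelPos O K, (unravelGame O hK).IsRun x' ∧
      (unravelGame O hK).Follows true σ x' ∧ ∀ n, (x' n).pos = x n := by
  have ha : G.len (x (K + 1)) = K + 1 := hx.len_eq _
  set U := claimedPart K (announcedClaim σ (x (K + 1))) (x (K + 1))
  set S := avoidance K U (x (K + 1)) with hS
  have hsteer {n : ℕ} (hn : K < n) (hb : n.bodd = true) :=
    eq_steer_of_odd hx hσ hn hb rfl rfl hS.symm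
  have hattractor (n : ℕ) (hn : K + 1 ≤ n) : x n ∉ G.attractor true Set.univ U :=
    hx.notMem_attractor_of_steer (k := K + 1) hU
      (fun m _ hm => by simpa only [hx.len_eq] using hm.1) (fun n hn hb => hsteer hn hb) hn
  have hquasi : G.IsQuasiStrategy K (x (K + 1)) S :=
    isQuasiStrategy_avoidance ha (hattractor _ le_rfl)
  have hmem (n : ℕ) (hn : K + 1 ≤ n) : x n ∈ S :=
    ⟨hx.ancestor_eq hn, hx.mem_avoiding hn fun j hj _ => hattractor j hj⟩
  obtain ⟨T, hT⟩ := exists_announcedClaim_avoidance (σ := σ) ha hquasi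
  have hclaim : Claim.IsLegal O K S (.inr T) := hT ▸ isLegal_announcedClaim ha hquasi
  set s : Commitments G := ⟨S, .inr T⟩
  have hreply (n : ℕ) (hn : K < n) (hb : n.bodd = true) : (reply σ (x n) s).1 = x (n + 1) := by
    rw [hsteer hn hb, hx.steer_of_notMem_attractor hU (hattractor n hn), hT]
  have hreply_claim : (reply σ (x (K + 1)) s).2.claim = .inr T :=
    (reply_claim_announcedClaim ha S _).trans hT
  have hlegal (n : ℕ) (hn : K + 2 ≤ n → x n ∈ T) : s.IsLegal O K (x n) :=
    hx.isLegal_of_mem_arena (s := s) hquasi hclaim hn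
  have hmemT (n : ℕ) (hn : K + 2 ≤ n) : x n ∈ T := by
    induction n, hn using Nat.le_induction with
    | base =>
      have h := reply_mem_arena (σ := σ) (hlegal (K + 1) (by omega)) ha.ge
      rwa [hreply _ K.lt_succ_self (by simp [hK]), hreply_claim] at h
    | succ n hn ih =>
      cases hb : n.bodd with
      | false =>
        exact hclaim.mem_of_even _ ih (by rwa [hx.len_eq]) _ (hx.isChild n) (hmem _ (by omega))
      | true =>
        have h := reply_mem_arena (σ := σ) (hlegal n fun _ => ih) (by rw [hx.len_eq]; omega)
        rwa [hreply n (by omega) hb,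
          reply_claim (hlegal n fun _ => ih) (by rwa [hx.len_eq])] at h
  refine exists_lift_of_reply hx (fun n => hlegal n (hmemT n)) (fun n hb => ?_)
    (fun h => by simp [hK] at h) (fun _ => hreply_claim)
  rcases Nat.lt_or_ge K n with hn | hn
  exacts [hreply n hn hb, reply_pos_of_le hx hσ hn hb s]

end Run

section Unravel

theorem exists_lift_unravelMove {σ : (unravelGame O hK).Strategy} {x : ℕ → G.Pos} {b : Bool}
    (hx : G.IsRun x) (hσ : ∀ n, n.bodd = b → x (n + 1) = unravelMove σ b (x n)) :
    ∃ x' : ℕ → UnravelPos O K, (unravelGame O hK).IsRun x' ∧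
      (unravelGame O hK).Follows b σ x' ∧ ∀ n, (x' n).pos = x n := by
  classical
  have first_or_never (U : Set G.Pos) : (∃ m, K + 2 ≤ m ∧ x m ∈ U ∧
      ∀ j, K + 2 ≤ j → j < m → x j ∉ U) ∨ ∀ n ≥ K + 2, x n ∉ U := by
    by_cases h : ∃ m, K + 2 ≤ m ∧ x m ∈ U
    · obtain ⟨hm, hmU⟩ := Nat.find_spec h
      exact .inl ⟨_, hm, hmU, fun j hj hjm hjU => Nat.find_min h hjm ⟨hj, hjU⟩⟩
    · exact .inr fun n hn hnU => h ⟨n, hn, hnU⟩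
  cases b with
  | false =>
    rcases first_or_never (decidedPart O (announcedQuasi σ (x K))) with ⟨m, hm, hmS, hmin⟩ | hS
    exacts [exists_lift_of_mem_decidedPart hx hσ hm hmS hmin,
      exists_lift_of_notMem_decidedPart hx hσ hS]
  | true =>
    rcases first_or_never (claimedPart K (announcedClaim σ (x (K + 1))) (x (K + 1)))
      with ⟨m, hm, hmU, hmin⟩ | hU
    exacts [exists_lift_of_mem_claimedPart hx hσ hm hmU hmin,
      exists_lift_of_notMem_claimedPart hx hσ hU]

/-- The covering of `G` by the auxiliary game that unravels `O`. -/
noncomputable def unravelCovering (O : Set (ℕ → G.Pos)) (hK : K.bodd = false) :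
    Covering (unravelGame O hK) G where
  proj p := p.pos
  transport b σ := ⟨unravelMove σ b, isChild_unravelMove σ b⟩
  len_proj _ := rfl
  parent_proj _ := rfl
  transport_local _ _ _ _ h _ hp := unravelMove_congr h hp
  exists_lift _ _ _ hx hσ := exists_lift_unravelMove hx hσ

theorem UnravelPos.eq_toPos {p : UnravelPos O K} {q : G.Pos} (hp : G.len p.pos ≤ K)
    (hq : q = p.pos) (s : Commitments G) :
    (Commitments.isLegal_of_len_le (s := s) (O := O) (hq ▸ hp)).toPos = p := by
  subst hq
  refine UnravelPos.ext rfl (Eq.trans ?_ p.made_trunc)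
  exact Commitments.trunc_eq_trunc_of_le hp

theorem unravelCovering_isTrivialUpTo : (unravelCovering O hK).IsTrivialUpTo K where
  inj p q hp h := by
    rw [← UnravelPos.eq_toPos (p := p) hp rfl ⊥]
    exact UnravelPos.eq_toPos (hp.trans' (congrArg G.len h).ge) h ⊥
  surj p hp := ⟨(Commitments.isLegal_of_len_le (s := ⊥) hp).toPos, rfl⟩
  transport_proj b σ p hp := by
    have hlen : G.len p.pos ≤ K := hp.le
    change unravelMove σ b p.pos = (σ p).pos
    rw [unravelMove, if_pos hlen, reply_of_isLegal (Commitments.isLegal_of_len_le hlen),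
      UnravelPos.eq_toPos hlen rfl]

theorem IsRun.claim_eq {x : ℕ → UnravelPos O K} (hx : (unravelGame O hK).IsRun x) {n : ℕ}
    (hn : K + 2 ≤ n) : (x n).made.claim = (x (K + 2)).made.claim := by
  induction n, hn using Nat.le_induction with
  | base => rfl
  | succ n hn ih =>
    rw [← ih, ← (isChild_unravelGame_iff.1 (hx.isChild n)).2,
      Commitments.trunc_claim (hn.trans (hx.len_eq n).ge)]

theorem IsOpenOnRuns.preimage_proj (hO : G.IsOpenOnRuns O) {G' : GameTree.{u}} (c : Covering G' G) :
    G'.IsOpenOnRuns {x | (fun n => c.proj (x n)) ∈ O} := by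
  intro x hx hxO
  obtain ⟨n, hn⟩ := hO _ (c.isRun_proj hx) hxO
  exact ⟨n, fun y hy h => hn _ (c.isRun_proj hy) (congrArg c.proj h)⟩

theorem IsRun.mem_of_claim_eq_inl {x : ℕ → UnravelPos O K} (hx : (unravelGame O hK).IsRun x)
    {u : G.Pos} (hu : (x (K + 2)).made.claim = .inl u) : (fun n => (x n).pos) ∈ O := by
  have hrun : G.IsRun fun n => (x n).pos := (unravelCovering O hK).isRun_proj hx
  have hclaim := (x (K + 2)).isLegal.isLegal_claim (hrun.len_eq _).ge
  rw [hu] at hclaim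
  have hmem := (x (G.len u)).isLegal.mem_arena (hclaim.2.2.trans (hrun.len_eq _).ge)
  rw [hx.claim_eq hclaim.2.2, hu, Claim.mem_arena_inl_of_le_len (hrun.len_eq _).ge,
    hrun.ancestor_eq le_rfl] at hmem
  exact hclaim.2.1 _ hrun hmem

theorem IsRun.notMem_of_claim_eq_inr {x : ℕ → UnravelPos O K} (hO : G.IsOpenOnRuns O)
    (hx : (unravelGame O hK).IsRun x) {T : Set G.Pos} (hT : (x (K + 2)).made.claim = .inr T) :
    (fun n => (x n).pos) ∉ O := by
  intro hxO
  have hrun : G.IsRun fun n => (x n).pos := (unravelCovering O hK).isRun_proj hx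
  obtain ⟨n, hn⟩ := hO _ hrun hxO
  have hlen := (le_max_right n (K + 2)).trans (hrun.len_eq _).ge
  have hclaim := (x (max n (K + 2))).isLegal.isLegal_claim hlen
  have hmem := (x (max n (K + 2))).isLegal.mem_arena hlen
  rw [hx.claim_eq (le_max_right _ _), hT] at hclaim hmem
  refine hclaim.not_isDecided _ hmem fun z hz hzx => hn z hz ?_
  rw [hrun.len_eq] at hzx
  exact hz.eq_of_le hrun hzx (le_max_left _ _)

theorem IsOpenOnRuns.compl_unravelCovering (hO : G.IsOpenOnRuns O) :
    (unravelGame O hK).IsOpenOnRuns {x | (fun n => (unravelCovering O hK).proj (x n)) ∈ O}ᶜ := by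
  intro x hx hxO
  refine ⟨K + 2, fun y hy hyx => ?_⟩
  rcases hclaim : (x (K + 2)).made.claim with u | T
  · exact absurd (hx.mem_of_claim_eq_inl hclaim) hxO
  · exact IsRun.notMem_of_claim_eq_inr hO hy (hyx ▸ hclaim)

theorem IsOpenOnRuns.exists_covering (hO : G.IsOpenOnRuns O) (k : ℕ) :
    ∃ (G' : GameTree.{u}) (c : Covering G' G), c.IsTrivialUpTo k ∧
      G'.IsOpenOnRuns {x | (fun n => c.proj (x n)) ∈ O} ∧
      G'.IsOpenOnRuns {x | (fun n => c.proj (x n)) ∈ O}ᶜ := by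
  have hK : (2 * k).bodd = false := by simp
  exact ⟨_, unravelCovering O hK, unravelCovering_isTrivialUpTo.mono (by omega),
    hO.preimage_proj _, hO.compl_unravelCovering⟩

end Unravel

end UnravelTransport

/-! ### Borel determinacy -/

/-- The game in which the players alternately choose natural numbers. Positions are lists of moves,
latest move first. -/
abbrev baireTree : GameTree.{0} where
  Pos := List ℕ
  len := List.length
  parent := List.tail
  len_parent p := by simp
  parent_eq_self p h := by rw [List.length_eq_zero_iff.1 h, List.tail_nil]
  exists_child p := ⟨0 :: p, rfl, rfl⟩

/-- The sequence of moves made along a run of `baireTree`. -/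
def moves (x : ℕ → List ℕ) (n : ℕ) : ℕ := (x (n + 1)).headD 0

theorem IsRun.moves_eq {x y : ℕ → List ℕ} (hx : baireTree.IsRun x) (hy : baireTree.IsRun y)
    {m n : ℕ} (h : x n = y n) (hm : m < n) : moves x m = moves y m := by
  rw [moves, moves, hx.eq_of_le hy h hm]

/-- Every covering of `baireTree` can be refined to a covering over which the payoff set `A`
becomes clopen, by a covering that is trivial up to any prescribed length. -/
def IsUnravelled (A : Set (ℕ → ℕ)) : Prop :=
  ∀ (G : GameTree.{0}) (c : Covering G baireTree) (k : ℕ),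
    ∃ (G' : GameTree.{0}) (c' : Covering G' G), c'.IsTrivialUpTo k ∧
      G'.IsOpenOnRuns {x | moves (fun n => (c.comp c').proj (x n)) ∈ A} ∧
      G'.IsOpenOnRuns {x | moves (fun n => (c.comp c').proj (x n)) ∈ A}ᶜ

theorem isUnravelled_of_isOpen {A : Set (ℕ → ℕ)} (hA : IsOpen A) : IsUnravelled A := by
  intro G c k
  refine IsOpenOnRuns.exists_covering (O := {x | moves (fun n => c.proj (x n)) ∈ A}) ?_ k
  intro x hx hxA
  obtain ⟨_, ⟨⟨a, n, rfl⟩, hxa, haA⟩⟩ :=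
    (PiNat.isTopologicalBasis_cylinders fun _ => ℕ).exists_subset_of_mem_open hxA hA
  refine ⟨n, fun y hy hyx => haA fun i hi => ?_⟩
  rw [← hxa i hi]
  exact (c.isRun_proj hy).moves_eq (c.isRun_proj hx) (congrArg c.proj hyx) hi

theorem IsUnravelled.compl {A : Set (ℕ → ℕ)} (hA : IsUnravelled A) : IsUnravelled Aᶜ := by
  intro G c k
  obtain ⟨G', c', htrivial, hopen, hcompl⟩ := hA G c k
  refine ⟨G', c', htrivial, hcompl, ?_⟩
  rw [Set.compl_ofPred]
  simpa only [Set.mem_compl_iff, not_not] using hopen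

theorem exists_covering_forall_isOpenOnRuns {A : ℕ → Set (ℕ → ℕ)} (hA : ∀ i, IsUnravelled (A i))
    {G : GameTree.{0}} (c : Covering G baireTree) (k : ℕ) :
    ∃ (G' : GameTree.{0}) (c' : Covering G' G), c'.IsTrivialUpTo k ∧
      ∀ i, G'.IsOpenOnRuns {x | moves (fun n => (c.comp c').proj (x n)) ∈ A i} := by
  choose H d htrivial hopen _ using hA
  let tower (i : ℕ) : Σ G : GameTree.{0}, Covering G baireTree := Nat.rec ⟨G, c⟩
    (fun i e => ⟨H i e.1 e.2 (k + i), e.2.comp (d i e.1 e.2 (k + i))⟩) i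
  let step (i : ℕ) : Covering (tower (i + 1)).1 (tower i).1 :=
    d i (tower i).1 (tower i).2 (k + i)
  have hstep (i : ℕ) : (step i).IsTrivialUpTo (k + i) := htrivial i _ _ _
  have hproj (p : Thread (fun i => (tower i).1) step) (i : ℕ) :
      (tower i).2.proj (p.1 i) = c.proj (p.1 0) := by
    induction i with
    | zero => rfl
    | succ i ih =>
      rw [← ih, ← p.2 i]
      rfl
  refine ⟨limit hstep, limitCovering (G := fun i => (tower i).1) hstep,
    limitCovering_isTrivialUpTo hstep, fun i x hx hxA => ?_⟩
  have hcoord (y : ℕ → Thread (fun i => (tower i).1) step) :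
      moves (fun n => c.proj ((y n).1 0)) ∈ A i ↔
        moves (fun n => ((tower i).2.comp (step i)).proj ((y n).1 (i + 1))) ∈ A i := by
    simp only [← hproj _ (i + 1)]
    rfl
  obtain ⟨n, hn⟩ := hopen i _ _ _ (fun n => (x n).1 (i + 1)) (hx.limit_apply hstep (i + 1))
    ((hcoord x).1 hxA)
  exact ⟨n, fun y hy hyx => (hcoord y).2 <| hn _ (hy.limit_apply hstep (i + 1)) <|
    congrArg (fun p : Thread (fun i => (tower i).1) step => p.1 (i + 1)) hyx⟩

theorem IsUnravelled.iUnion {A : ℕ → Set (ℕ → ℕ)} (hA : ∀ i, IsUnravelled (A i)) :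
    IsUnravelled (⋃ i, A i) := by
  intro G c k
  obtain ⟨G', c', htrivial, hopen⟩ := exists_covering_forall_isOpenOnRuns hA c k
  have hunion : G'.IsOpenOnRuns {x | moves (fun n => (c.comp c').proj (x n)) ∈ ⋃ i, A i} := by
    intro x hx hxA
    obtain ⟨i, hi⟩ := Set.mem_iUnion.1 hxA
    obtain ⟨n, hn⟩ := hopen i x hx hi
    exact ⟨n, fun y hy hyx => Set.mem_iUnion.2 ⟨i, hn y hy hyx⟩⟩
  obtain ⟨G'', c'', htrivial', hopen', hcompl⟩ := hunion.exists_covering k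
  exact ⟨G'', c'.comp c'', htrivial.comp htrivial', hopen', hcompl⟩

theorem isUnravelled_of_measurableSet {A : Set (ℕ → ℕ)} (hA : MeasurableSet A) :
    IsUnravelled A := by
  induction A, hA using MeasurableSet.induction_on_open with
  | isOpen U hU => exact isUnravelled_of_isOpen hU
  | compl A _ ih => exact ih.compl
  | iUnion A _ _ ih => exact IsUnravelled.iUnion ih

theorem Covering.IsTrivialUpTo.determined {G G' : GameTree.{u}} {c : Covering G' G}
    (hc : c.IsTrivialUpTo 0) {S : Set (ℕ → G.Pos)}
    (hS : G'.IsOpenOnRuns {x | (fun n => c.proj (x n)) ∈ S}) {r : G.Pos} (hr : G.len r = 0) :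
    (∃ σ : G.Strategy, ∀ x, G.IsRun x → x 0 = r → G.Follows false σ x → x ∈ S) ∨
    (∃ σ : G.Strategy, ∀ x, G.IsRun x → x 0 = r → G.Follows true σ x → x ∉ S) := by
  obtain ⟨r', rfl⟩ := hc.surj r hr.le
  have lift {b : Bool} {σ : G'.Strategy} {x : ℕ → G.Pos} (hx : G.IsRun x) (h₀ : x 0 = c.proj r')
      (hσ : G.Follows b (c.transport b σ) x) : ∃ x', G'.IsRun x' ∧ x' 0 = r' ∧
        G'.Follows b σ x' ∧ (fun n => c.proj (x' n)) = x := by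
    obtain ⟨x', hx', hσ', hproj⟩ := c.exists_lift b σ x hx hσ
    exact ⟨x', hx', hc.inj _ _ (hx'.len_eq 0).le ((hproj 0).trans h₀), hσ', funext hproj⟩
  rcases hS.determined r' with ⟨σ, hσ⟩ | ⟨σ, hσ⟩
  · refine .inl ⟨c.transport false σ, fun x hx h₀ hxσ => ?_⟩
    obtain ⟨x', hx', h₀', hσ', rfl⟩ := lift hx h₀ hxσ
    exact hσ x' hx' h₀' hσ'
  · refine .inr ⟨c.transport true σ, fun x hx h₀ hxσ => ?_⟩
    obtain ⟨x', hx', h₀', hσ', rfl⟩ := lift hx h₀ hxσ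
    exact hσ x' hx' h₀' hσ'

theorem borel_determinacy {A : Set (ℕ → ℕ)} (hA : MeasurableSet A) :
    (∃ σ : baireTree.Strategy, ∀ x, baireTree.IsRun x → baireTree.Follows false σ x →
      moves x ∈ A) ∨
    (∃ σ : baireTree.Strategy, ∀ x, baireTree.IsRun x → baireTree.Follows true σ x →
      moves x ∉ A) := by
  obtain ⟨G, c, htrivial, hopen, _⟩ :=
    isUnravelled_of_measurableSet hA baireTree (Covering.refl baireTree) 0
  have hroot {x : ℕ → List ℕ} (hx : baireTree.IsRun x) : x 0 = [] :=
    List.length_eq_zero_iff.1 (hx.len_eq 0)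
  exact (htrivial.determined (S := {x | moves x ∈ A}) hopen (r := []) rfl).imp
    (fun ⟨σ, hσ⟩ => ⟨σ, fun x hx => hσ x hx (hroot hx)⟩)
    (fun ⟨σ, hσ⟩ => ⟨σ, fun x hx => hσ x hx (hroot hx)⟩)

/-! ### Wadge's lemma -/

/-- The play in which player `b` follows `σ` and the opponent makes the moves `y`. -/
def playAgainst (b : Bool) (σ : baireTree.Strategy) (y : ℕ → ℕ) : ℕ → List ℕ
  | 0 => []
  | n + 1 =>
    if n.bodd = b then σ.toFun (playAgainst b σ y n) else y (n / 2) :: playAgainst b σ y n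

section PlayAgainst

variable {b : Bool} {σ : baireTree.Strategy} {y z : ℕ → ℕ}

theorem isChild_playAgainst (n : ℕ) :
    baireTree.IsChild (playAgainst b σ y n) (playAgainst b σ y (n + 1)) := by
  rw [playAgainst]
  split_ifs
  exacts [σ.isChild _, ⟨rfl, rfl⟩]

theorem isRun_playAgainst : baireTree.IsRun (playAgainst b σ y) := by
  refine fun n => ⟨?_, (isChild_playAgainst n).1⟩
  induction n with
  | zero => rfl
  | succ n ih => rw [(isChild_playAgainst n).2, ih]

theorem follows_playAgainst : baireTree.Follows b σ (playAgainst b σ y) :=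
  fun _ hn => if_pos hn

theorem moves_playAgainst {n : ℕ} (hn : n.bodd ≠ b) :
    moves (playAgainst b σ y) n = y (n / 2) := by
  rw [moves, playAgainst, if_neg hn, List.headD_cons]

theorem playAgainst_congr {n : ℕ} (h : ∀ i < n, i.bodd ≠ b → y (i / 2) = z (i / 2)) :
    playAgainst b σ y n = playAgainst b σ z n := by
  induction n with
  | zero => rfl
  | succ n ih =>
    rw [playAgainst, playAgainst, ih fun i hi => h i (hi.trans n.lt_succ_self)]
    split_ifs with hb
    · rfl
    · rw [h n n.lt_succ_self hb]

end PlayAgainst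

/-- The moves of player `b` in the play in which this player follows `σ` and the opponent makes the
moves `y`. -/
def responses (b : Bool) (σ : baireTree.Strategy) (y : ℕ → ℕ) (n : ℕ) : ℕ :=
  moves (playAgainst b σ y) (2 * n + b.toNat)

theorem responses_congr (b : Bool) (σ : baireTree.Strategy) {y z : ℕ → ℕ} {n : ℕ}
    (h : ∀ i < n + b.toNat, y i = z i) : responses b σ y n = responses b σ z n := by
  rw [responses, responses, moves, moves, playAgainst_congr]
  intro i hi hb
  have hne : i ≠ 2 * n + b.toNat := by
    rintro rfl
    cases b <;> simp at hb
  exact h _ (by cases b <;> simp at hi hne ⊢ <;> omega)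

/-- The payoff set of the Wadge game of `A` and `B`, in which player `false` builds a point `x`,
player `true` builds a point `y`, and player `false` wins if `x ∈ A` is not equivalent to
`y ∈ B`. -/
def wadgePayoff (A B : Set (ℕ → ℕ)) : Set (ℕ → ℕ) :=
  {z | ¬ ((fun n => z (2 * n)) ∈ A ↔ (fun n => z (2 * n + 1)) ∈ B)}

theorem measurableSet_wadgePayoff {A B : Set (ℕ → ℕ)} (hA : MeasurableSet A)
    (hB : MeasurableSet B) : MeasurableSet (wadgePayoff A B) := by
  have hcoord (f : ℕ → ℕ) : Measurable fun (z : ℕ → ℕ) n => z (f n) := by fun_prop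
  have := (((hcoord (2 * ·)) hA).symmDiff ((hcoord (2 * · + 1)) hB))
  convert this using 1
  ext z
  simp only [wadgePayoff, Set.mem_symmDiff, Set.mem_preimage, Set.mem_ofPred_eq]
  tauto

end GameTree

/-- A self-map of Baire space such that the first `n` coordinates of the value depend only on the
first `n` coordinates of the argument. -/
def IsNonexpanding (f : (ℕ → ℕ) → ℕ → ℕ) : Prop :=
  ∀ n x y, (∀ i ≤ n, x i = y i) → f x n = f y n

/-- A self-map of Baire space such that the first `n + 1` coordinates of the value depend only on
the first `n` coordinates of the argument. -/
def IsContracting (f : (ℕ → ℕ) → ℕ → ℕ) : Prop :=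
  ∀ n x y, (∀ i < n, x i = y i) → f x n = f y n

theorem IsContracting.isNonexpanding {f : (ℕ → ℕ) → ℕ → ℕ} (hf : IsContracting f) :
    IsNonexpanding f :=
  fun n x y h => hf n x y fun i hi => h i hi.le

theorem IsNonexpanding.continuous {f : (ℕ → ℕ) → ℕ → ℕ} (hf : IsNonexpanding f) :
    Continuous f := by
  refine continuous_pi fun n => continuous_iff_continuousAt.2 fun x => ?_
  suffices (fun y => f y n) =ᶠ[nhds x] fun _ => f x n from continuousAt_const.congr this.symm
  filter_upwards [(PiNat.isOpen_cylinder _ x (n + 1)).mem_nhds (PiNat.self_mem_cylinder _ _)]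
    with y hy
  exact hf n y x fun i hi => hy i (Nat.lt_succ_of_le hi)

open GameTree in
theorem wadge_lemma {A B : Set (ℕ → ℕ)} (hA : MeasurableSet A) (hB : MeasurableSet B) :
    (∃ f, IsNonexpanding f ∧ ∀ x, x ∈ A ↔ f x ∈ B) ∨
    (∃ g, IsContracting g ∧ ∀ x, x ∈ B ↔ g x ∉ A) := by
  rcases borel_determinacy (measurableSet_wadgePayoff hA hB) with ⟨σ, hσ⟩ | ⟨σ, hσ⟩
  · refine .inr ⟨responses false σ, fun n x y h => responses_congr false σ h, fun y => ?_⟩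
    have h := hσ _ isRun_playAgainst (follows_playAgainst (y := y))
    have hy : (fun n => moves (playAgainst false σ y) (2 * n + 1)) = y := by
      funext n
      rw [moves_playAgainst (by simp)]
      congr 1
      omega
    rw [wadgePayoff, Set.mem_ofPred_eq, hy] at h
    change ¬ (responses false σ y ∈ A ↔ y ∈ B) at h
    tauto
  · refine .inl ⟨responses true σ,
      fun n x y h => responses_congr true σ fun i hi => h i (Nat.lt_succ_iff.1 hi), fun y => ?_⟩
    have h := hσ _ isRun_playAgainst (follows_playAgainst (y := y))
    have hy : (fun n => moves (playAgainst true σ y) (2 * n)) = y := by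
      funext n
      rw [moves_playAgainst (by simp)]
      congr 1
      omega
    rw [wadgePayoff, Set.mem_ofPred_eq, hy] at h
    change ¬ ¬ (y ∈ A ↔ responses true σ y ∈ B) at h
    tauto

section Cantor

open Set Topology PiNat TopologicalSpace

/-! ### Wadge reducibility of relative Borel sets -/

/-- Cantor space. -/
abbrev Cantor : Type := ℕ → Bool

theorem exists_cylinder_subset {X : ℕ → Type*} [∀ n, TopologicalSpace (X n)]
    [∀ n, DiscreteTopology (X n)] {U : Set (∀ n, X n)} (hU : IsOpen U) {x : ∀ n, X n}
    (hx : x ∈ U) : ∃ m, cylinder x m ⊆ U := by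
  obtain ⟨_, ⟨a, n, rfl⟩, hxa, haU⟩ :=
    (isTopologicalBasis_cylinders X).exists_subset_of_mem_open hx hU
  exact ⟨n, (mem_cylinder_iff_eq.1 hxa).trans_subset haU⟩

/-- A set `T` presented as a continuous image of Baire space, with a section of the parametrization
that is continuous on `T`. -/
structure BaireCoding {α : Type*} [TopologicalSpace α] (T : Set α) where
  code : α → ℕ → ℕ
  decode : (ℕ → ℕ) → α
  continuousOn_code : ContinuousOn code T
  continuous_decode : Continuous decode
  decode_mem : ∀ y, decode y ∈ T
  decode_code : ∀ x ∈ T, decode (code x) = x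

/-- A natural number `y n` codes the bit `(y n).unpair.1 = 1` together with the natural number
`(y n).unpair.2`; this is the sequence of the bits. -/
def decodeBits (y : ℕ → ℕ) : Cantor := fun n => decide ((y n).unpair.1 = 1)

theorem continuous_decodeBits : Continuous decodeBits := by
  refine continuous_pi fun n => ?_
  exact (continuous_of_discreteTopology (f := fun k : ℕ => decide (k.unpair.1 = 1))).comp
    (continuous_apply n)

/-- The sequences coding a point `x` of `⋂ n, U n` and, for every `n`, the length of an initial
segment of `x` which witnesses `x ∈ U n`. -/
def codeSet (U : ℕ → Set Cantor) : Set (ℕ → ℕ) :=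
  {y | ∀ n, cylinder (decodeBits y) (y n).unpair.2 ⊆ U n}

theorem isClosed_codeSet (U : ℕ → Set Cantor) : IsClosed (codeSet U) := by
  rw [codeSet, ofPred_forall]
  refine isClosed_iInter fun n => ?_
  rw [← isOpen_compl_iff, isOpen_iff_mem_nhds]
  intro y hy
  have hcoord : {y' : ℕ → ℕ | y' n = y n} ∈ 𝓝 y :=
    (continuous_apply (A := fun _ : ℕ => ℕ) n).continuousAt (by simp : {y n} ∈ 𝓝 (y n))
  have hbits : decodeBits ⁻¹' cylinder (decodeBits y) (y n).unpair.2 ∈ 𝓝 y :=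
    continuous_decodeBits.continuousAt
      ((isOpen_cylinder _ _ _).mem_nhds (self_mem_cylinder _ _))
  filter_upwards [hcoord, hbits] with y' hcoord hbits hy'
  rw [mem_ofPred_eq, hcoord] at hy'
  exact hy ((mem_cylinder_iff_eq.1 hbits).symm.trans_subset hy')

/-- The element of `codeSet U` coding `x`, with all witnesses least possible. -/
noncomputable def encodeIn (U : ℕ → Set Cantor) (x : Cantor) (n : ℕ) : ℕ :=
  Nat.pair (x n).toNat (sInf {m | cylinder x m ⊆ U n})

theorem decodeBits_encodeIn (U : ℕ → Set Cantor) (x : Cantor) : decodeBits (encodeIn U x) = x := by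
  funext n
  simp [decodeBits, encodeIn]

theorem encodeIn_mem_codeSet {U : ℕ → Set Cantor} (hU : ∀ n, IsOpen (U n)) {x : Cantor}
    (hx : x ∈ ⋂ n, U n) : encodeIn U x ∈ codeSet U := by
  intro n
  rw [decodeBits_encodeIn, encodeIn, Nat.unpair_pair]
  exact Nat.sInf_mem (exists_cylinder_subset (hU n) (mem_iInter.1 hx n))

theorem continuousOn_encodeIn {U : ℕ → Set Cantor} (hU : ∀ n, IsOpen (U n)) :
    ContinuousOn (encodeIn U) (⋂ n, U n) := by
  refine continuousOn_pi.2 fun n x hx => ContinuousAt.continuousWithinAt ?_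
  set m := sInf {m | cylinder x m ⊆ U n} with hm
  have hmem : cylinder x m ⊆ U n :=
    Nat.sInf_mem (exists_cylinder_subset (hU n) (mem_iInter.1 hx n))
  suffices (fun y => encodeIn U y n) =ᶠ[𝓝 x] fun _ => encodeIn U x n from
    continuousAt_const.congr this.symm
  filter_upwards [(isOpen_cylinder _ x (max m (n + 1))).mem_nhds (self_mem_cylinder _ _)] with y hy
  have hcylinder (k : ℕ) (hk : k ≤ m) : cylinder y k = cylinder x k :=
    mem_cylinder_iff_eq.1 (cylinder_anti _ (hk.trans (le_max_left _ _)) hy)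
  have hle : sInf {m | cylinder y m ⊆ U n} ≤ m :=
    Nat.sInf_le ((hcylinder m le_rfl).trans_subset hmem)
  rw [encodeIn, encodeIn, hy n (by omega), ← hm, hle.antisymm (Nat.sInf_le ?_)]
  rw [mem_ofPred_eq, ← hcylinder _ hle]
  exact Nat.sInf_mem (s := {m | cylinder y m ⊆ U n}) ⟨m, (hcylinder m le_rfl).trans_subset hmem⟩

theorem nonempty_baireCoding {T : Set Cantor} (hT : IsGδ T) (hne : T.Nonempty) :
    Nonempty (BaireCoding T) := by
  obtain ⟨U, hU, rfl⟩ := hT.eq_iInter_nat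
  obtain ⟨x₀, hx₀⟩ := hne
  obtain ⟨ρ, hρ, hrange, hcont⟩ :=
    exists_retraction_of_isClosed (isClosed_codeSet U) ⟨_, encodeIn_mem_codeSet hU hx₀⟩
  exact ⟨{
    code := encodeIn U
    decode := decodeBits ∘ ρ
    continuousOn_code := continuousOn_encodeIn hU
    continuous_decode := continuous_decodeBits.comp hcont
    decode_mem := fun y => mem_iInter.2 fun n =>
      (hrange ▸ mem_range_self y : ρ y ∈ codeSet U) n (self_mem_cylinder _ _)
    decode_code := fun x hx => by
      rw [Function.comp_apply, hρ _ (encodeIn_mem_codeSet hU hx), decodeBits_encodeIn] }⟩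

/-- Relative Wadge reducibility: some map that is continuous on `S` and sends `S` into `T` reduces
membership of points of `S` in `A` to membership of points of `T` in `B`. -/
def WadgeReducible {α β : Type*} [TopologicalSpace α] [TopologicalSpace β] (S A : Set α)
    (T B : Set β) : Prop :=
  ∃ f : α → β, ContinuousOn f S ∧ MapsTo f S T ∧ ∀ x ∈ S, x ∈ A ↔ f x ∈ B

namespace WadgeReducible

variable {α β γ : Type*} [TopologicalSpace α] [TopologicalSpace β] [TopologicalSpace γ]
  {S A : Set α} {T B : Set β} {R D : Set γ}

theorem trans (h : WadgeReducible S A T B) (h' : WadgeReducible T B R D) :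
    WadgeReducible S A R D := by
  obtain ⟨f, hf, hmaps, hAB⟩ := h
  obtain ⟨g, hg, hmaps', hBD⟩ := h'
  exact ⟨g ∘ f, hg.comp hf hmaps, hmaps'.comp hmaps,
    fun x hx => (hAB x hx).trans (hBD _ (hmaps hx))⟩

theorem compl (h : WadgeReducible S A T B) : WadgeReducible S Aᶜ T Bᶜ := by
  obtain ⟨f, hf, hmaps, hAB⟩ := h
  exact ⟨f, hf, hmaps, fun x hx => not_congr (hAB x hx)⟩

theorem mono {S' : Set α} {T' : Set β} (h : WadgeReducible S A T B) (hS : S' ⊆ S) (hT : T ⊆ T') :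
    WadgeReducible S' A T' B := by
  obtain ⟨f, hf, hmaps, hAB⟩ := h
  exact ⟨f, hf.mono hS, (hmaps.mono_left hS).mono_right hT, fun x hx => hAB x (hS hx)⟩

theorem of_baireCoding (c : BaireCoding S) (d : BaireCoding T) {f : (ℕ → ℕ) → ℕ → ℕ}
    (hf : Continuous f) (h : ∀ y, y ∈ c.decode ⁻¹' A ↔ f y ∈ d.decode ⁻¹' B) :
    WadgeReducible S A T B := by
  refine ⟨fun x => d.decode (f (c.code x)),
    (d.continuous_decode.comp hf).comp_continuousOn c.continuousOn_code,
    fun x _ => d.decode_mem _, fun x hx => ?_⟩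
  simpa only [mem_preimage, c.decode_code x hx] using h (c.code x)

end WadgeReducible

theorem wadgeReducible_or_wadgeReducible_compl {S A T B : Set Cantor} (hS : IsGδ S)
    (hS' : S.Nonempty) (hT : IsGδ T) (hT' : T.Nonempty) (hA : MeasurableSet A)
    (hB : MeasurableSet B) : WadgeReducible S A T B ∨ WadgeReducible T B S Aᶜ := by
  obtain ⟨c⟩ := nonempty_baireCoding hS hS'
  obtain ⟨d⟩ := nonempty_baireCoding hT hT'
  rcases wadge_lemma (c.continuous_decode.measurable hA) (d.continuous_decode.measurable hB)
    with ⟨f, hf, hAB⟩ | ⟨g, hg, hBA⟩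
  · exact .inl (.of_baireCoding c d hf.continuous hAB)
  · exact .inr (.of_baireCoding d c hg.isNonexpanding.continuous hBA)

/-! ### The Martin–Monk argument -/

/-- Change the `n`-th coordinate of a point of Cantor space. -/
def flipBit (n : ℕ) : Cantor ≃ₜ Cantor where
  toFun z := Function.update z n (!z n)
  invFun z := Function.update z n (!z n)
  left_inv z := by simp
  right_inv z := by simp
  continuous_toFun := continuous_id.update n
    ((continuous_of_discreteTopology (f := not)).comp (continuous_apply n))
  continuous_invFun := continuous_id.update n
    ((continuous_of_discreteTopology (f := not)).comp (continuous_apply n))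

theorem flipBit_apply_self (n : ℕ) (z : Cantor) : flipBit n z n = !z n :=
  Function.update_self ..

theorem flipBit_apply_of_ne {n k : ℕ} (h : k ≠ n) (z : Cantor) : flipBit n z k = z k :=
  Function.update_of_ne h ..

theorem not_residualEq_of_flipBit_mem_iff {M U : Set Cantor} (h : ∀ z n, flipBit n z ∈ M ↔ z ∉ M)
    (hU : IsOpen U) (hne : U.Nonempty) : ¬ M =ᶠ[residual Cantor] U := by
  intro hMU
  obtain ⟨z, hz⟩ := hne
  obtain ⟨n, hn⟩ := exists_cylinder_subset hU hz
  have hiff : ∀ᶠ z in residual Cantor, z ∈ M ↔ z ∈ U := hMU.mono fun z hz => iff_of_eq hz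
  have hflip : ∀ᶠ z in residual Cantor, flipBit n z ∈ M ↔ flipBit n z ∈ U :=
    (tendsto_residual_of_isOpenMap (flipBit n).continuous (flipBit n).isOpenMap).eventually hiff
  obtain ⟨y, ⟨hy, hy'⟩, hyz⟩ := (dense_of_mem_residual (hiff.and hflip)).exists_mem_open
    (isOpen_cylinder _ z n) ⟨z, self_mem_cylinder _ _⟩
  have hfU : flipBit n y ∈ U :=
    hn fun i hi => by rw [flipBit_apply_of_ne hi.ne, hyz i hi]
  have := h y n
  have := hn hyz
  tauto

theorem not_measurableSet_of_flipBit_mem_iff {M : Set Cantor}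
    (h : ∀ z n, flipBit n z ∈ M ↔ z ∉ M) : ¬ MeasurableSet M := by
  intro hM
  have residualEq_empty {M : Set Cantor} (h : ∀ z n, flipBit n z ∈ M ↔ z ∉ M)
      (hM : MeasurableSet M) : M =ᶠ[residual Cantor] (∅ : Set Cantor) := by
    obtain ⟨U, hU, hMU⟩ := hM.residualEq_isOpen
    rcases U.eq_empty_or_nonempty with rfl | hne
    exacts [hMU, absurd hMU (not_residualEq_of_flipBit_mem_iff h hU hne)]
  obtain ⟨y, hy, hy'⟩ := (dense_of_mem_residual ((residualEq_empty h hM).and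
    (residualEq_empty (fun z n => not_congr (h z n)) hM.compl))).nonempty
  have hyM : y ∉ M := fun hyM => (iff_of_eq hy).1 hyM
  exact (iff_of_eq hy').1 hyM

theorem not_measurableSet_of_reduction_tower {α : Type*} [MeasurableSpace α] {A : ℕ → Set α}
    {g : ℕ → Bool → α → α} {x : ℕ → Cantor → α}
    (hg : ∀ n i y, y ∈ A (n + 1) ↔ (g n i y ∈ A n ↔ i = false))
    (hx : ∀ n z, x n z = g n (z n) (x (n + 1) z))
    (hdep : ∀ n z z', (∀ k, n ≤ k → z k = z' k) → x n z = x n z') (hmeas : Measurable (x 0)) :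
    ¬ MeasurableSet (A 0) := by
  intro hA
  refine not_measurableSet_of_flipBit_mem_iff (fun z n => ?_) (hmeas hA)
  suffices ∀ k ≤ n, x k (flipBit n z) ∈ A k ↔ x k z ∉ A k from this 0 n.zero_le
  intro k hk
  have hflip := hg k (flipBit n z k) (x (k + 1) (flipBit n z))
  have horig := hg k (z k) (x (k + 1) z)
  rw [← hx] at hflip horig
  induction hk using Nat.decreasingInduction with
  | self =>
    rw [hdep (n + 1) (flipBit n z) z fun k hk => flipBit_apply_of_ne (by omega) z,
      flipBit_apply_self] at hflip
    cases h : z n <;> simp [h] at hflip horig <;> tauto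
  | of_succ k hk ih =>
    rw [flipBit_apply_of_ne hk.ne] at hflip
    have := ih (by rw [hx (k + 1)]; exact hg _ _ _) (by rw [hx (k + 1)]; exact hg _ _ _)
    tauto

/-- The value at `p` of the composition `g n (z n) ∘ ⋯ ∘ g (n + d - 1) (z (n + d - 1))`. -/
def composeAlong {α : Type*} (g : ℕ → Bool → α → α) (p : α) : ℕ → ℕ → Cantor → α
  | _, 0, _ => p
  | n, d + 1, z => g n (z n) (composeAlong g p (n + 1) d z)

section ComposeAlong

variable {α : Type*} {g : ℕ → Bool → α → α}

theorem composeAlong_succ' (p : α) (n d : ℕ) (z : Cantor) :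
    composeAlong g p n (d + 1) z = composeAlong g (g (n + d) (z (n + d)) p) n d z := by
  induction d generalizing n with
  | zero => rfl
  | succ d ih =>
    rw [composeAlong, ih (n + 1), composeAlong, show n + 1 + d = n + (d + 1) by omega]

theorem composeAlong_congr (p : α) {n d : ℕ} {z z' : Cantor} (h : ∀ k, n ≤ k → z k = z' k) :
    composeAlong g p n d z = composeAlong g p n d z' := by
  induction d generalizing n with
  | zero => rfl
  | succ d ih =>
    rw [composeAlong, composeAlong, h n le_rfl, ih fun k hk => h k (by omega)]

theorem continuous_composeAlong [TopologicalSpace α] (hg : ∀ n i, Continuous (g n i)) (p : α)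
    (n d : ℕ) : Continuous (composeAlong g p n d) := by
  induction d generalizing n with
  | zero => exact continuous_const
  | succ d ih =>
    have hprod : Continuous fun q : Bool × α => g n q.1 q.2 :=
      continuous_prod_of_discrete_left.2 (hg n)
    exact hprod.comp ((continuous_apply n).prodMk (ih (n + 1)))

end ComposeAlong

section MartinMonk

variable {A : ℕ → Set (ℕ → ℕ)} {g : ℕ → Bool → (ℕ → ℕ) → ℕ → ℕ}

theorem not_measurableSet_of_composeAlong_stabilizes (p : ℕ → ℕ)
    (hg : ∀ n i y, y ∈ A (n + 1) ↔ (g n i y ∈ A n ↔ i = false)) (hc : ∀ n i, Continuous (g n i))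
    (hs : ∀ n d z m, m < d → composeAlong g p n (d + 1) z m = composeAlong g p n d z m) :
    ¬ MeasurableSet (A 0) := by
  have hstable (n d : ℕ) (z : Cantor) (m : ℕ) (hm : m < d) :
      composeAlong g p n d z m = composeAlong g p n (m + 1) z m := by
    induction d, hm using Nat.le_induction with
    | base => rfl
    | succ d hd ih => rw [hs n d z m hd, ih]
  let x (n : ℕ) (z : Cantor) (m : ℕ) : ℕ := composeAlong g p n (m + 1) z m
  have hlim (n : ℕ) (z : Cantor) :
      Filter.Tendsto (fun d => composeAlong g p n d z) Filter.atTop (𝓝 (x n z)) := by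
    refine tendsto_pi_nhds.2 fun m => tendsto_const_nhds.congr' ?_
    filter_upwards [Filter.eventually_gt_atTop m] with d hd
    exact (hstable n d z m hd).symm
  refine not_measurableSet_of_reduction_tower (x := x) hg (fun n z => ?_) (fun n z z' h => ?_) ?_
  · exact tendsto_nhds_unique ((hlim n z).comp (Filter.tendsto_add_atTop_nat 1))
      (((hc n (z n)).tendsto _).comp (hlim (n + 1) z))
  · exact funext fun m => congrFun (composeAlong_congr p h) m
  · have : Continuous (x 0) := continuous_pi fun m =>
      (continuous_apply m).comp (continuous_composeAlong hc p 0 (m + 1))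
    exact this.measurable

theorem not_measurableSet_of_isContracting
    (hg : ∀ n i y, y ∈ A (n + 1) ↔ (g n i y ∈ A n ↔ i = false))
    (hc : ∀ n i, IsContracting (g n i)) : ¬ MeasurableSet (A 0) := by
  refine not_measurableSet_of_composeAlong_stabilizes 0 hg
    (fun n i => (hc n i).isNonexpanding.continuous) fun n d z m hm => ?_
  induction d generalizing n m with
  | zero => omega
  | succ d ih => exact hc n (z n) m _ _ fun k hk => ih (n + 1) k (by omega)

end MartinMonk

theorem exists_forall_mapsTo_cylinder {H : Set ((ℕ → ℕ) → ℕ → ℕ)} (hfin : H.Finite)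
    (hcont : ∀ h ∈ H, Continuous h) (x : ℕ → ℕ) (n : ℕ) :
    ∃ k, ∀ h ∈ H, MapsTo h (cylinder x k) (cylinder (h x) n) := by
  have hopen : IsOpen (⋂ h ∈ H, h ⁻¹' cylinder (h x) n) :=
    hfin.isOpen_biInter fun h hh => (isOpen_cylinder _ _ _).preimage (hcont h hh)
  obtain ⟨k, hk⟩ := exists_cylinder_subset hopen (x := x) (by simp)
  exact ⟨k, fun h hh y hy => mem_iInter₂.1 (hk hy) h hh⟩

theorem exists_seq_composeAlong_stabilizes {G : ℕ → Bool → (ℕ → ℕ) → ℕ → ℕ} {x : ℕ → ℕ}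
    (hc : ∀ m i, Continuous (G m i)) (hG : ∀ m i y, G m i y ∈ cylinder x m) :
    ∃ k : ℕ → ℕ, ∀ n d z m, m < d →
      composeAlong (fun n => G (k n)) x n (d + 1) z m =
        composeAlong (fun n => G (k n)) x n d z m := by
  let S := {H : Set ((ℕ → ℕ) → ℕ → ℕ) // H.Finite ∧ ∀ h ∈ H, Continuous h}
  choose k hk using fun (n : ℕ) (H : S) => exists_forall_mapsTo_cylinder H.2.1 H.2.2 x n
  -- `H n` is the set of all compositions `g i _ ∘ ⋯ ∘ g (n - 1) _` with `i ≤ n`; the next maps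
  -- `g n _` take values so close to `x` that no map in `H n` can tell them apart from `x`.
  let next (n : ℕ) (H : S) : S :=
    ⟨insert id (⋃ i : Bool, (fun h => h ∘ G (k n H) i) '' H.1),
      (Set.finite_iUnion fun i => H.2.1.image _).insert _, by
        rintro h (rfl | hh)
        · exact continuous_id
        · obtain ⟨i, h', hh', rfl⟩ := mem_iUnion.1 hh
          exact (H.2.2 h' hh').comp (hc _ _)⟩
  let H (n : ℕ) : S := Nat.rec ⟨{id}, by simp, by simp [continuous_id]⟩ next n
  have hid (n : ℕ) : id ∈ (H n).1 := by
    cases n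
    exacts [rfl, .inl rfl]
  have hmem (n d : ℕ) (z : Cantor) : ∃ h ∈ (H (n + d)).1,
      ∀ p, composeAlong (fun n => G (k n (H n))) p n d z = h p := by
    induction d with
    | zero => exact ⟨id, hid _, fun p => rfl⟩
    | succ d ih =>
      obtain ⟨h, hh, hcomp⟩ := ih
      refine ⟨h ∘ G (k (n + d) (H (n + d))) (z (n + d)),
        .inr (mem_iUnion.2 ⟨z (n + d), h, hh, rfl⟩), fun p => ?_⟩
      rw [composeAlong_succ', hcomp, Function.comp_apply]
  refine ⟨fun n => k n (H n), fun n d z m hm => ?_⟩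
  obtain ⟨h, hh, hcomp⟩ := hmem n d z
  rw [composeAlong_succ', hcomp, hcomp]
  exact hk (n + d) (H (n + d)) h hh (hG _ _ _) m (by omega)

theorem not_measurableSet_of_forall_cylinder_selfDual {Y : Set (ℕ → ℕ)} (x : ℕ → ℕ)
    (h : ∀ m i, ∃ g : (ℕ → ℕ) → ℕ → ℕ, Continuous g ∧ (∀ y, g y ∈ cylinder x m) ∧
      ∀ y, y ∈ Y ↔ (g y ∈ Y ↔ i = false)) : ¬ MeasurableSet Y := by
  choose G hc hG hY using h
  obtain ⟨k, hk⟩ := exists_seq_composeAlong_stabilizes hc hG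
  exact not_measurableSet_of_composeAlong_stabilizes (A := fun _ => Y) (g := fun n => G (k n)) x
    (fun n => hY (k n)) (fun n => hc (k n)) hk

/-! ### Countable partitions into h-homogeneous Gδ sets -/

theorem pairwise_disjoint_option_elim {α ι : Type*} {D : Set α} {R : ι → Set α}
    (hD : ∀ i, Disjoint D (R i)) (hR : Pairwise (Function.onFun Disjoint R)) :
    Pairwise (Function.onFun Disjoint fun o : Option ι => o.elim D R) := by
  rintro (_ | i) (_ | j) hij
  · exact absurd rfl hij
  · exact hD j
  · exact (hD i).symm
  · exact hR (ne_of_apply_ne some hij)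

theorem isGδ_image_subtypeVal {X : Type*} [TopologicalSpace X] {T : Set X} (hT : IsGδ T)
    {S : Set T} (hS : IsGδ S) : IsGδ (Subtype.val '' S) := by
  obtain ⟨U, hU, rfl⟩ := hS.eq_iInter_nat
  choose V hV hVU using fun n => isOpen_induced_iff.mp (hU n)
  have himage : (Subtype.val '' ⋂ n, U n) = T ∩ ⋂ n, V n := by
    simp_rw [← hVU, ← preimage_iInter, Subtype.image_preimage_coe]
  rw [himage]
  exact hT.inter (IsGδ.iInter_of_isOpen hV)

/-- The trace of `T` on the subspace `Y` is the subspace `Y ∩ T` of the ambient space. -/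
noncomputable def preimageValHomeomorphInter {X : Type*} [TopologicalSpace X] (Y T : Set X) :
    (Subtype.val ⁻¹' T : Set Y) ≃ₜ (Y ∩ T : Set X) :=
  (IsEmbedding.subtypeVal.homeomorphImage _).trans
    (Homeomorph.setCongr (Subtype.image_preimage_coe _ _))

namespace HHomogeneous

variable {A B : Type*} [TopologicalSpace A] [TopologicalSpace B]

theorem congr (h : HHomogeneous A) (e : A ≃ₜ B) : HHomogeneous B := by
  intro U hU hne
  obtain ⟨k⟩ := h (e ⁻¹' U) (hU.preimage e.continuous) (hne.preimage e.surjective)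
  have restrict : (e ⁻¹' U : Set A) ≃ₜ U := (e.isEmbedding.homeomorphImage _).trans
    (Homeomorph.setCongr (image_preimage_eq _ e.surjective))
  exact ⟨restrict.symm.trans (k.trans e)⟩

theorem of_subsingleton [Subsingleton A] : HHomogeneous A := by
  intro U _ hne
  rw [Subsingleton.eq_univ_of_nonempty hne]
  exact ⟨Homeomorph.Set.univ A⟩

end HHomogeneous

/-- A space is *σ-h-homogeneous* if it admits a countable partition into h-homogeneous Gδ
subspaces. The pieces are allowed to be empty. -/
def SigmaHHomogeneous (Y : Type*) [TopologicalSpace Y] : Prop :=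
  ∃ f : ℕ → Set Y, Pairwise (Function.onFun Disjoint f) ∧ (∀ i, IsGδ (f i)) ∧
    (∀ i, HHomogeneous (f i)) ∧ ⋃ i, f i = univ

namespace SigmaHHomogeneous

variable {X Y ι : Type*} [TopologicalSpace X] [TopologicalSpace Y] [Countable ι]

theorem of_countable (f : ι → Set X) (hdisj : Pairwise (Function.onFun Disjoint f))
    (hGδ : ∀ i, IsGδ (f i)) (hf : ∀ i, HHomogeneous (f i)) (hcover : ⋃ i, f i = univ) :
    SigmaHHomogeneous X := by
  obtain ⟨enc, henc⟩ := exists_injective_nat ι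
  have hpiece (n : ℕ) : IsGδ (⋃ (i) (_ : enc i = n), f i) ∧
      HHomogeneous (⋃ (i) (_ : enc i = n), f i : Set X) := by
    by_cases hn : ∃ i, enc i = n
    · obtain ⟨i, rfl⟩ := hn
      have hfi : (⋃ (j) (_ : enc j = enc i), f j) = f i := by simp [henc.eq_iff]
      rw [hfi]
      exact ⟨hGδ i, hf i⟩
    · have hempty : (⋃ (j) (_ : enc j = n), f j) = ∅ := by simp_all
      rw [hempty]
      exact ⟨isOpen_empty.isGδ, .of_subsingleton⟩
  refine ⟨fun n => ⋃ (i) (_ : enc i = n), f i, fun a b hab => ?_, fun n => (hpiece n).1,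
    fun n => (hpiece n).2, ?_⟩
  · simp only [Function.onFun, disjoint_iUnion_left, disjoint_iUnion_right]
    rintro i rfl j rfl
    exact hdisj fun hij => hab (congrArg enc hij)
  · rw [← hcover, iUnion_comm]
    simp

theorem congr (h : SigmaHHomogeneous X) (e : X ≃ₜ Y) : SigmaHHomogeneous Y := by
  obtain ⟨f, hdisj, hGδ, hf, hcover⟩ := h
  refine ⟨fun i => e.symm ⁻¹' f i, fun i j hij => (hdisj hij).preimage _,
    fun i => (hGδ i).preimage e.symm.continuous, fun i => (hf i).congr ?_, ?_⟩
  · exact ((e.symm.isEmbedding.homeomorphImage _).trans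
      (Homeomorph.setCongr (image_preimage_eq _ e.symm.surjective))).symm
  · rw [← preimage_iUnion, hcover, preimage_univ]

theorem isClopen (h : SigmaHHomogeneous X) {U : Set X} (hU : IsClopen U) :
    SigmaHHomogeneous U := by
  obtain ⟨f, hdisj, hGδ, hf, hcover⟩ := h
  refine ⟨fun i => Subtype.val ⁻¹' f i, fun i j hij => (hdisj hij).preimage _,
    fun i => (hGδ i).preimage continuous_subtype_val, fun i => ?_, ?_⟩
  · rcases (Subtype.val ⁻¹' U : Set (f i)).eq_empty_or_nonempty with hempty | hne
    · have : IsEmpty (Subtype.val ⁻¹' f i : Set U) :=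
        ⟨fun x => (hempty ▸ x.1.2 : (⟨x.1, x.2⟩ : f i) ∈ (∅ : Set (f i)))⟩
      exact .of_subsingleton
    · obtain ⟨k⟩ := hf i (Subtype.val ⁻¹' U) (hU.preimage continuous_subtype_val) hne
      exact (hf i).congr (k.symm.trans ((preimageValHomeomorphInter (f i) U).trans
        ((Homeomorph.setCongr (inter_comm _ _)).trans (preimageValHomeomorphInter U (f i)).symm)))
  · rw [← preimage_iUnion, hcover, preimage_univ]

theorem of_partition (T : ι → Set X) (hdisj : Pairwise (Function.onFun Disjoint T))
    (hGδ : ∀ i, IsGδ (T i)) (hT : ∀ i, SigmaHHomogeneous (T i)) (hcover : ⋃ i, T i = univ) :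
    SigmaHHomogeneous X := by
  choose f f_disj f_Gδ f_hom f_cover using hT
  refine of_countable (fun p : ι × ℕ => Subtype.val '' f p.1 p.2) ?_
    (fun p => isGδ_image_subtypeVal (hGδ p.1) (f_Gδ p.1 p.2))
    (fun p => (f_hom p.1 p.2).congr (IsEmbedding.subtypeVal.homeomorphImage _)) ?_
  · rintro ⟨i, n⟩ ⟨j, m⟩ hne
    obtain rfl | hij := eq_or_ne i j
    · refine (disjoint_image_iff Subtype.val_injective).mpr (f_disj i fun hnm =>
        hne (Prod.ext rfl hnm))
    · exact (hdisj hij).mono (Subtype.coe_image_subset _ _) (Subtype.coe_image_subset _ _)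
  · rw [iUnion_prod']
    simp_rw [← image_iUnion, f_cover, image_univ, Subtype.range_coe, hcover]

theorem of_partition_ambient {Y : Set X} (T : ι → Set X)
    (hdisj : Pairwise (Function.onFun Disjoint T)) (hGδ : ∀ i, IsGδ (T i))
    (hT : ∀ i, SigmaHHomogeneous (Y ∩ T i : Set X)) (hcover : Y ⊆ ⋃ i, T i) :
    SigmaHHomogeneous Y := by
  refine of_partition (fun i => Subtype.val ⁻¹' T i) (fun i j hij => (hdisj hij).preimage _)
    (fun i => (hGδ i).preimage continuous_subtype_val)
    (fun i => (hT i).congr (preimageValHomeomorphInter Y (T i)).symm) ?_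
  rw [← preimage_iUnion, eq_univ_iff_forall]
  exact fun x => hcover x.2

theorem of_hHomogeneous (h : HHomogeneous X) : SigmaHHomogeneous X :=
  of_countable (fun _ : Unit => univ) (fun _ _ hij => absurd rfl hij) (fun _ => IsGδ.univ)
    (fun _ => h.congr (Homeomorph.Set.univ X).symm) (iUnion_const _)

theorem of_countable_compl [T1Space X] [FirstCountableTopology X] {D : Set X} (hD : IsGδ D)
    (hDc : Dᶜ.Countable) (h : SigmaHHomogeneous D) : SigmaHHomogeneous X := by
  have := hDc.to_subtype
  refine of_partition (fun o : Option (Dᶜ : Set X) => o.elim D fun q => {q.1})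
    (pairwise_disjoint_option_elim (fun q => disjoint_singleton_right.mpr q.2)
      fun a b hab => disjoint_singleton.mpr fun h => hab (Subtype.ext h)) ?_ ?_ ?_
  · rintro (_ | a)
    · exact hD
    · exact IsGδ.singleton _
  · rintro (_ | a)
    · exact h
    · exact .of_hHomogeneous (.of_subsingleton (A := ({a.1} : Set X)))
  · ext x
    simp [iUnion_option, Classical.em]

end SigmaHHomogeneous

/-! ### Zero-dimensional Polish spaces -/

theorem isClopen_cylinder {X : ℕ → Type*} [∀ n, TopologicalSpace (X n)]
    [∀ n, DiscreteTopology (X n)] (x : ∀ n, X n) (n : ℕ) : IsClopen (cylinder x n) := by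
  refine ⟨?_, isOpen_cylinder _ _ _⟩
  rw [cylinder_eq_pi]
  exact isClosed_set_pi fun i _ => isClosed_discrete _

theorem isClopen_disjointed {X : Type*} [TopologicalSpace X] {G : ℕ → Set X}
    (hG : ∀ n, IsClopen (G n)) (n : ℕ) : IsClopen (disjointed G n) := by
  rw [disjointed_eq_inter_compl]
  exact (hG n).inter ((Set.finite_lt_nat n).isClopen_biInter fun i _ => (hG i).compl)

theorem isTopologicalBasis_isClopen_subtype {X : Type*} [TopologicalSpace X]
    (hX : IsTopologicalBasis {s : Set X | IsClopen s}) (Y : Set X) :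
    IsTopologicalBasis {s : Set Y | IsClopen s} := by
  refine isTopologicalBasis_of_isOpen_of_nhds (fun s hs => hs.isOpen) fun x U hx hU => ?_
  obtain ⟨V, hV, rfl⟩ := isOpen_induced_iff.mp hU
  obtain ⟨B, hB, hxB, hBV⟩ := hX.exists_subset_of_mem_open hx hV
  exact ⟨_, IsClopen.preimage hB continuous_subtype_val, hxB, preimage_mono hBV⟩

theorem polishSpace_of_isGδ {X : Type*} [TopologicalSpace X] [PolishSpace X] {T : Set X}
    (hT : IsGδ T) : PolishSpace T := by
  obtain ⟨U, hU, rfl⟩ := hT.eq_iInter_nat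
  have (n : ℕ) : PolishSpace (U n) := (hU n).polishSpace
  let diagonal : (⋂ n, U n : Set X) → ∀ n, U n := fun x n => ⟨x.1, mem_iInter.mp x.2 n⟩
  have hcont : Continuous diagonal := continuous_pi fun n => continuous_subtype_val.subtype_mk _
  have hrange : range diagonal = {y | ∀ n, (y n).1 = (y 0).1} := by
    refine Subset.antisymm (range_subset_iff.mpr fun x n => rfl) fun y hy => ?_
    exact ⟨⟨(y 0).1, mem_iInter.mpr fun n => hy n ▸ (y n).2⟩, 
      funext fun n => Subtype.ext (hy n).symm⟩
  have hclosed : IsClosedEmbedding diagonal := by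
    refine ⟨⟨?_, fun x y h => Subtype.ext (congrArg (fun z => (z 0).1) h)⟩, ?_⟩
    · exact IsInducing.of_comp hcont (g := fun y => (y 0).1) (by fun_prop) IsInducing.subtypeVal
    · rw [hrange, ofPred_forall]
      exact isClosed_iInter fun n => isClosed_eq (by fun_prop) (by fun_prop)
  exact hclosed.polishSpace

section Splitting

variable {X : Type*} [MetricSpace X] {P : Set X}

theorem exists_isClopen_ediam_le_of_mem_open (hX : IsTopologicalBasis {s : Set X | IsClopen s})
    {O : Set X} (hO : IsOpen O) {x : X} (hx : x ∈ O) {ε : ENNReal} (hε : 0 < ε) :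
    ∃ B, IsClopen B ∧ x ∈ B ∧ B ⊆ O ∧ Metric.ediam B ≤ ε := by
  obtain ⟨B, hB, hxB, hBO⟩ := hX.exists_subset_of_mem_open
    (show x ∈ O ∩ Metric.eball x (ε / 2) from
      ⟨hx, Metric.mem_eball_self (ENNReal.half_pos hε.ne')⟩) (hO.inter Metric.isOpen_eball)
  refine ⟨B, hB, hxB, hBO.trans inter_subset_left, ?_⟩
  calc Metric.ediam B ≤ Metric.ediam (Metric.eball x (ε / 2)) :=
        Metric.ediam_mono (hBO.trans inter_subset_right)
    _ ≤ 2 * (ε / 2) := Metric.ediam_eball_le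
    _ = ε := ENNReal.mul_div_cancel (by norm_num) (by norm_num)

variable [SecondCountableTopology X]

theorem exists_seq_isClopen_cover_without_finite_subcover
    (hX : IsTopologicalBasis {s : Set X | IsClopen s}) (hP : IsClopen P) (hnc : ¬ IsCompact P)
    {ε : ENNReal} (hε : 0 < ε) :
    ∃ G : ℕ → Set X, (∀ n, IsClopen (G n) ∧ Metric.ediam (G n) ≤ ε) ∧ ⋃ n, G n = P ∧
      ∀ s : Finset ℕ, ¬ P ⊆ ⋃ n ∈ s, G n := by
  classical
  rw [isCompact_iff_finite_subcover] at hnc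
  push Not at hnc
  obtain ⟨ι, U, hU, hPU, hfin⟩ := hnc
  have hloc : ∀ x ∈ P, ∃ B : Set X, IsClopen B ∧ x ∈ B ∧ Metric.ediam B ≤ ε ∧
      ∃ i, B ⊆ P ∩ U i := by
    intro x hx
    obtain ⟨i, hi⟩ := mem_iUnion.mp (hPU hx)
    obtain ⟨B, hB, hxB, hBU, hdiam⟩ :=
      exists_isClopen_ediam_le_of_mem_open hX (hP.isOpen.inter (hU i)) ⟨hx, hi⟩ hε
    exact ⟨B, hB, hxB, hdiam, i, hBU⟩
  choose! B hB hxB hdiam hBU using hloc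
  obtain ⟨t, htP, htc, htB⟩ := countable_cover_nhdsWithin (s := P) (f := B)
    fun x hx => mem_nhdsWithin_of_mem_nhds ((hB x hx).isOpen.mem_nhds (hxB x hx))
  have htne : t.Nonempty := by
    rw [nonempty_iff_ne_empty]
    rintro rfl
    exact hfin ∅ (htB.trans (by simp))
  obtain ⟨s, rfl⟩ := htc.exists_eq_range htne
  have hsP (n : ℕ) : s n ∈ P := htP (mem_range_self n)
  choose i hi using fun n => hBU (s n) (hsP n)
  refine ⟨fun n => B (s n), fun n => ⟨hB _ (hsP n), hdiam _ (hsP n)⟩, ?_, fun F hF => ?_⟩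
  · refine (iUnion_subset fun n => (hi n).trans inter_subset_left).antisymm ?_
    rwa [biUnion_range] at htB
  · refine hfin (F.image i) (hF.trans ?_)
    rw [Finset.set_biUnion_finset_image]
    exact iUnion₂_mono fun n _ => (hi n).trans inter_subset_right

theorem exists_seq_isClopen_partition (hX : IsTopologicalBasis {s : Set X | IsClopen s})
    (hP : IsClopen P) (hnc : ¬ IsCompact P) {ε : ENNReal} (hε : 0 < ε) :
    ∃ D : ℕ → Set X, (∀ n, IsClopen (D n) ∧ (D n).Nonempty ∧ Metric.ediam (D n) ≤ ε) ∧
      Pairwise (Function.onFun Disjoint D) ∧ ⋃ n, D n = P := by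
  obtain ⟨G, hG, hGP, hfin⟩ :=
    exists_seq_isClopen_cover_without_finite_subcover hX hP hnc hε
  have hinf : {n | (disjointed G n).Nonempty}.Infinite := by
    intro hf
    refine hfin hf.toFinset ?_
    rw [← hGP, ← iUnion_disjointed]
    exact iUnion_subset fun n x hx =>
      mem_iUnion₂.mpr ⟨n, hf.mem_toFinset.mpr ⟨x, hx⟩, disjointed_subset G n hx⟩
  have := hinf.to_subtype
  let o := Nat.Subtype.orderIsoOfNat {n | (disjointed G n).Nonempty}
  refine ⟨fun n => disjointed G (o n), fun n => ⟨isClopen_disjointed (fun n => (hG n).1) _, (o n).2,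
    (Metric.ediam_mono (disjointed_subset _ _)).trans (hG _).2⟩, fun a b hab => ?_, ?_⟩
  · exact disjoint_disjointed G fun h => hab (o.injective (Subtype.ext h))
  · rw [← hGP, ← iUnion_disjointed (f := G)]
    refine (iUnion_subset fun n => subset_iUnion (disjointed G) (o n)).antisymm ?_
    refine iUnion_subset fun n x hx => mem_iUnion.mpr ?_
    obtain ⟨m, hm⟩ := o.surjective ⟨n, ⟨x, hx⟩⟩
    exact ⟨m, by rwa [hm]⟩

end Splitting

section AlexandroffUrysohn

theorem exists_clopen_scheme {X : Type*} [MetricSpace X] [SecondCountableTopology X] [Nonempty X]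
    (hX : IsTopologicalBasis {s : Set X | IsClopen s})
    (hnc : ∀ U : Set X, IsClopen U → U.Nonempty → ¬ IsCompact U) :
    ∃ A : List ℕ → Set X, A [] = univ ∧ (∀ l, ⋃ k, A (k :: l) = A l) ∧
      (∀ l, IsClopen (A l) ∧ (A l).Nonempty) ∧ CantorScheme.Disjoint A ∧
      CantorScheme.VanishingDiam A := by
  have hsplit : ∀ (P : Set X) (n : ℕ), IsClopen P ∧ P.Nonempty → ∃ D : ℕ → Set X,
      (∀ k, IsClopen (D k) ∧ (D k).Nonempty ∧ Metric.ediam (D k) ≤ (2⁻¹ : ENNReal) ^ n) ∧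
      Pairwise (Function.onFun Disjoint D) ∧ ⋃ k, D k = P := fun P n hP =>
    exists_seq_isClopen_partition hX hP.1 (hnc P hP.1 hP.2) (ENNReal.pow_pos (by simp) n)
  choose! D hD hDdisj hDunion using hsplit
  let A : List ℕ → Set X := fun l => List.rec univ (fun k l P => D P l.length k) l
  have hA (l : List ℕ) : IsClopen (A l) ∧ (A l).Nonempty := by
    induction l with
    | nil => exact ⟨isClopen_univ, univ_nonempty⟩
    | cons k l ih => exact ⟨(hD (A l) l.length ih k).1, (hD (A l) l.length ih k).2.1⟩
  refine ⟨A, rfl, fun l => hDunion (A l) l.length (hA l), hA,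
    fun l a b hab => hDdisj (A l) l.length (hA l) hab, fun x => ?_⟩
  refine (Filter.tendsto_add_atTop_iff_nat 1).mp ?_
  refine tendsto_of_tendsto_of_tendsto_of_le_of_le tendsto_const_nhds
    (ENNReal.tendsto_pow_atTop_nhds_zero_of_lt_one (r := 2⁻¹) (by simp)) (fun n => zero_le)
    fun n => ?_
  simpa [A] using (hD (A (res x n)) (res x n).length (hA _) (x n)).2.2

variable {X : Type*} {A : List ℕ → Set X}

theorem exists_forall_mem_res (hnil : A [] = univ) (hcons : ∀ l, ⋃ k, A (k :: l) = A l) (y : X) :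
    ∃ x : ℕ → ℕ, ∀ n, y ∈ A (res x n) := by
  have hnext : ∀ l : List ℕ, y ∈ A l → ∃ k, y ∈ A (k :: l) := fun l hl =>
    mem_iUnion.mp ((hcons l).symm ▸ hl)
  choose! k hk using hnext
  let L : ℕ → List ℕ := fun n => n.rec [] fun _ l => k l :: l
  have hres (n : ℕ) : res (fun n => k (L n)) n = L n := by
    induction n with
    | zero => rfl
    | succ n ih => rw [res_succ, ih]
  refine ⟨fun n => k (L n), fun n => ?_⟩
  rw [hres]
  induction n with
  | zero => exact hnil ▸ mem_univ y
  | succ n ih => exact hk _ ih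

theorem res_eq_res_of_mem (hanti : CantorScheme.Antitone A) (hdisj : CantorScheme.Disjoint A)
    {x x' : ℕ → ℕ} {y : X} {n : ℕ} (h : y ∈ A (res x n)) (h' : y ∈ A (res x' n)) :
    res x n = res x' n := by
  induction n with
  | zero => rfl
  | succ n ih =>
    have hpre : res x n = res x' n := ih (hanti _ _ h) (hanti _ _ h')
    rw [res_succ] at h h'
    rw [← hpre] at h'
    rw [res_succ, res_succ, ← hpre]
    congr 1
    by_contra hne
    exact disjoint_left.mp (hdisj _ hne) h h'

theorem nonempty_homeomorph_of_clopen_scheme [MetricSpace X] [CompleteSpace X]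
    (hnil : A [] = univ) (hcons : ∀ l, ⋃ k, A (k :: l) = A l)
    (hA : ∀ l, IsClopen (A l) ∧ (A l).Nonempty) (hdisj : CantorScheme.Disjoint A)
    (hvan : CantorScheme.VanishingDiam A) : Nonempty ((ℕ → ℕ) ≃ₜ X) := by
  have hanti : CantorScheme.Antitone A := fun l a => by
    rw [← hcons l]
    exact subset_iUnion (fun k => A (k :: l)) a
  have hdom := (hanti.closureAntitone fun l => (hA l).1.isClosed).map_of_vanishingDiam hvan
    fun l => (hA l).2
  let f : (ℕ → ℕ) → X := fun x => (CantorScheme.inducedMap A).2 ⟨x, hdom ▸ mem_univ x⟩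
  have hf_mem (x : ℕ → ℕ) (n : ℕ) : f x ∈ A (res x n) :=
    CantorScheme.map_mem (A := A) ⟨x, hdom ▸ mem_univ x⟩ n
  have hf_eq {x : ℕ → ℕ} {y : X} (hy : ∀ n, y ∈ A (res x n)) : f x = y := by
    by_contra hne
    obtain ⟨n, hn⟩ := hvan.dist_lt (dist (f x) y) (dist_pos.mpr hne) x
    exact lt_irrefl _ (hn _ (hf_mem x n) _ (hy n))
  have hf_image (x : ℕ → ℕ) (n : ℕ) : f '' cylinder x n = A (res x n) := by
    rw [cylinder_eq_res]
    refine (image_subset_iff.mpr fun y hy => hy ▸ hf_mem y n).antisymm fun y hy => ?_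
    obtain ⟨x', hx'⟩ := exists_forall_mem_res hnil hcons y
    exact ⟨x', res_eq_res_of_mem hanti hdisj (hx' n) hy, hf_eq hx'⟩
  have hf_inj : Function.Injective f := fun x y h =>
    congrArg Subtype.val (hdisj.map_injective h)
  have hf_surj : Function.Surjective f := fun y =>
    (exists_forall_mem_res hnil hcons y).imp fun _ => hf_eq
  have hf_open : IsOpenMap f := by
    refine (isTopologicalBasis_cylinders fun _ => ℕ).isOpenMap_iff.mpr ?_
    rintro _ ⟨x, n, rfl⟩
    exact hf_image x n ▸ (hA _).1.isOpen
  exact ⟨(Equiv.ofBijective f ⟨hf_inj, hf_surj⟩).toHomeomorphOfContinuousOpen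
    (hvan.map_continuous.comp (by fun_prop)) hf_open⟩

end AlexandroffUrysohn

section ZeroDimensionalPolish

variable {X : Type*} [TopologicalSpace X] [PolishSpace X]

/-- The **Alexandroff–Urysohn theorem**. -/
theorem nonempty_homeomorph_baire_of_nowhere_compact [Nonempty X]
    (hX : IsTopologicalBasis {s : Set X | IsClopen s})
    (hnc : ∀ U : Set X, IsClopen U → U.Nonempty → ¬ IsCompact U) :
    Nonempty ((ℕ → ℕ) ≃ₜ X) := by
  let _ := upgradeIsCompletelyMetrizable X
  obtain ⟨A, hnil, hcons, hA, hdisj, hvan⟩ := exists_clopen_scheme hX hnc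
  exact nonempty_homeomorph_of_clopen_scheme hnil hcons hA hdisj hvan

theorem HHomogeneous.of_nowhere_compact (hX : IsTopologicalBasis {s : Set X | IsClopen s})
    (hnc : ∀ U : Set X, IsClopen U → U.Nonempty → ¬ IsCompact U) : HHomogeneous X := by
  intro U hU hne
  have : Nonempty X := hne.to_type
  have : Nonempty U := hne.to_subtype
  have : PolishSpace U := hU.isClosed.polishSpace
  have hncU : ∀ V : Set U, IsClopen V → V.Nonempty → ¬ IsCompact V := fun V hV hVne hc =>
    hnc (Subtype.val '' V) ⟨hU.isClosed.isClosedMap_subtype_val _ hV.isClosed,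
      hU.isOpen.isOpenMap_subtype_val _ hV.isOpen⟩ (hVne.image _) (hc.image continuous_subtype_val)
  obtain ⟨e⟩ := nonempty_homeomorph_baire_of_nowhere_compact hX hnc
  obtain ⟨e'⟩ := nonempty_homeomorph_baire_of_nowhere_compact
    (isTopologicalBasis_isClopen_subtype hX U) hncU
  exact ⟨e'.symm.trans e⟩

theorem not_isCompact_of_isClopen_of_dense_of_dense_compl {Y : Type*} [TopologicalSpace Y]
    [T2Space Y] {D : Set Y} (hD : Dense D) (hDc : Dense Dᶜ) {U : Set D} (hU : IsClopen U)
    (hne : U.Nonempty) : ¬ IsCompact U := by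
  intro hc
  obtain ⟨O, hO, rfl⟩ := isOpen_induced_iff.mp hU.isOpen
  have hclosed : IsClosed (D ∩ O) := by
    simpa only [Subtype.image_preimage_coe] using (hc.image continuous_subtype_val).isClosed
  have hmeet : (O ∩ (D ∩ O)ᶜ).Nonempty := by
    obtain ⟨q, hqD, hqO⟩ := hDc.exists_mem_open hO ⟨_, hne.some_mem⟩
    exact ⟨q, hqO, fun h => hqD h.1⟩
  obtain ⟨y, hyD, hyO, hy⟩ := hD.exists_mem_open (hO.inter hclosed.isOpen_compl) hmeet
  exact hy ⟨hyD, hyO⟩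

theorem dense_compl_of_countable [PerfectSpace X] {Q : Set X} (hQ : Q.Countable) : Dense Qᶜ := by
  have hcompl : Qᶜ = ⋂ q ∈ Q, ({q}ᶜ : Set X) := by
    rw [← compl_iUnion₂, biUnion_of_singleton]
  rw [hcompl]
  exact dense_biInter_of_isOpen (fun q _ => isOpen_compl_singleton) hQ fun q _ =>
    dense_compl_singleton q

theorem SigmaHHomogeneous.of_perfectSpace [PerfectSpace X]
    (hX : IsTopologicalBasis {s : Set X | IsClopen s}) : SigmaHHomogeneous X := by
  obtain ⟨Q, hQ, hQdense⟩ := exists_countable_dense X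
  have : PolishSpace (Qᶜ : Set X) := polishSpace_of_isGδ hQ.isGδ_compl
  refine .of_countable_compl hQ.isGδ_compl (by rwa [compl_compl]) (.of_hHomogeneous ?_)
  exact .of_nowhere_compact (isTopologicalBasis_isClopen_subtype hX _) fun U hU hne =>
    not_isCompact_of_isClopen_of_dense_of_dense_compl (dense_compl_of_countable hQ)
      (by rwa [compl_compl]) hU hne

theorem perfectSpace_of_perfect {Y : Type*} [TopologicalSpace Y] {D : Set Y} (hD : Perfect D) :
    PerfectSpace D := by
  refine ⟨preperfect_iff_nhds.mpr fun x _ U hU => ?_⟩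
  obtain ⟨V, hV, hVU⟩ := mem_nhds_subtype _ _ _ |>.mp hU
  obtain ⟨y, hy, hne⟩ := preperfect_iff_nhds.mp hD.acc x x.2 V hV
  exact ⟨⟨y, hy.2⟩, ⟨hVU hy.1, mem_univ _⟩, fun h => hne (congrArg Subtype.val h)⟩

theorem SigmaHHomogeneous.of_polishSpace (hX : IsTopologicalBasis {s : Set X | IsClopen s}) :
    SigmaHHomogeneous X := by
  obtain ⟨V, D, hV, hD, hVD⟩ := exists_countable_union_perfect_of_isClosed (isClosed_univ (X := X))
  have : PolishSpace D := hD.closed.polishSpace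
  have : PerfectSpace D := perfectSpace_of_perfect hD
  have hDc : Dᶜ.Countable := hV.mono fun x hx =>
    (show x ∈ V ∪ D from hVD ▸ mem_univ x).resolve_right hx
  exact .of_countable_compl hD.closed.isGδ hDc
    (.of_perfectSpace (isTopologicalBasis_isClopen_subtype hX D))

end ZeroDimensionalPolish

instance : PolishSpace Cantor where

theorem sigmaHHomogeneous_of_isGδ {T : Set Cantor} (hT : IsGδ T) : SigmaHHomogeneous T :=
  have := polishSpace_of_isGδ hT
  .of_polishSpace (isTopologicalBasis_isClopen_subtype isTopologicalBasis_isClopen T)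

/-! ### Minimal counterexamples to σ-h-homogeneity -/

theorem SigmaHHomogeneous.of_locally {X : Type*} [TopologicalSpace X] [SecondCountableTopology X]
    (h : ∀ x : X, ∃ B : Set X, IsClopen B ∧ x ∈ B ∧ SigmaHHomogeneous B) :
    SigmaHHomogeneous X := by
  choose B hB hxB hσ using h
  rcases isEmpty_or_nonempty X with hempty | hne
  · exact .of_hHomogeneous .of_subsingleton
  obtain ⟨t, htc, htB⟩ := TopologicalSpace.countable_cover_nhds fun x =>
    (hB x).isOpen.mem_nhds (hxB x)
  have htne : t.Nonempty := by
    rw [nonempty_iff_ne_empty]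
    rintro rfl
    rw [biUnion_empty] at htB
    exact empty_ne_univ htB
  obtain ⟨s, rfl⟩ := htc.exists_eq_range htne
  have hclopen := isClopen_disjointed fun n => hB (s n)
  refine .of_partition (disjointed fun n => B (s n)) (disjoint_disjointed _)
    (fun n => (hclopen n).isOpen.isGδ) (fun n => ?_) ?_
  · refine ((hσ (s n)).isClopen ((hclopen n).preimage continuous_subtype_val)).congr
      ((preimageValHomeomorphInter _ _).trans (Homeomorph.setCongr ?_))
    exact inter_eq_right.mpr (disjointed_subset (fun n => B (s n)) n)
  · rw [iUnion_disjointed, ← htB, biUnion_range]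

theorem isGδ_inter_preimage {α β : Type*} [TopologicalSpace α] [TopologicalSpace β] {T : Set α}
    {R : Set β} {f : α → β} (hT : IsGδ T) (hf : ContinuousOn f T) (hR : IsGδ R) :
    IsGδ (T ∩ f ⁻¹' R) := by
  obtain ⟨U, hU, rfl⟩ := hR.eq_iInter_nat
  choose V hV hVU using fun n => continuousOn_iff'.mp hf (U n) (hU n)
  have hinter : T ∩ f ⁻¹' (⋂ n, U n) = T ∩ ⋂ n, V n := by
    rw [preimage_iInter, inter_iInter, inter_iInter]
    exact iInter_congr fun n => by rw [inter_comm, hVU, inter_comm]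
  rw [hinter]
  exact hT.inter (IsGδ.iInter_of_isOpen hV)

/-- The Borel set `B`, relative to the Gδ subspace `T` of Cantor space, is not σ-h-homogeneous. -/
structure IsCounterexample (T B : Set Cantor) : Prop where
  isGδ : IsGδ T
  measurableSet : MeasurableSet B
  not_sigmaHHomogeneous : ¬ SigmaHHomogeneous (B ∩ T : Set Cantor)

namespace IsCounterexample

variable {T B : Set Cantor}

theorem inter_nonempty (h : IsCounterexample T B) : (B ∩ T).Nonempty := by
  rw [nonempty_iff_ne_empty]
  intro hempty
  apply h.not_sigmaHHomogeneous
  rw [hempty]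
  exact .of_hHomogeneous .of_subsingleton

theorem nonempty (h : IsCounterexample T B) : T.Nonempty :=
  h.inter_nonempty.right

theorem diff_nonempty (h : IsCounterexample T B) : (T \ B).Nonempty := by
  rw [nonempty_iff_ne_empty, Ne, sdiff_eq_empty]
  intro hTB
  apply h.not_sigmaHHomogeneous
  rw [inter_eq_right.mpr hTB]
  exact sigmaHHomogeneous_of_isGδ h.isGδ

theorem exists_inter_preimage (h : IsCounterexample T B) {f : Cantor → Cantor}
    (hf : ContinuousOn f T) {ι : Type*} [Countable ι] {R : ι → Set Cantor}
    (hdisj : Pairwise (Function.onFun Disjoint R)) (hGδ : ∀ i, IsGδ (R i))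
    (hcover : ⋃ i, R i = univ) : ∃ i, IsCounterexample (T ∩ f ⁻¹' R i) B := by
  by_contra! hcon
  have hσ : ∀ i, SigmaHHomogeneous (B ∩ T ∩ (T ∩ f ⁻¹' R i) : Set Cantor) := by
    intro i
    rw [inter_assoc, ← inter_assoc T T, inter_self]
    by_contra hi
    exact hcon i ⟨isGδ_inter_preimage h.isGδ hf (hGδ i), h.measurableSet, hi⟩
  refine h.not_sigmaHHomogeneous (.of_partition_ambient (fun i => T ∩ f ⁻¹' R i) ?_
    (fun i => isGδ_inter_preimage h.isGδ hf (hGδ i)) hσ ?_)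
  · exact fun i j hij => ((hdisj hij).preimage f).mono inter_subset_right inter_subset_right
  · rw [← inter_iUnion, ← preimage_iUnion, hcover, preimage_univ, inter_univ]
    exact inter_subset_right

theorem exists_forall_inter_cylinder (h : IsCounterexample T B) (c : BaireCoding T) :
    ∃ z, ∀ m, IsCounterexample (T ∩ c.code ⁻¹' cylinder z m) B := by
  obtain ⟨x, hx⟩ : ∃ x : (B ∩ T : Set Cantor),
      ∀ U : Set (B ∩ T : Set Cantor), IsClopen U → x ∈ U → ¬ SigmaHHomogeneous U := by
    by_contra! hcon
    exact h.not_sigmaHHomogeneous (.of_locally hcon)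
  have hcode : Continuous fun w : (B ∩ T : Set Cantor) => c.code w.1 :=
    (c.continuousOn_code.mono inter_subset_right).domRestrict
  refine ⟨c.code x, fun m => ⟨isGδ_inter_preimage h.isGδ c.continuousOn_code
    (isOpen_cylinder _ _ _).isGδ, h.measurableSet, fun hσ => ?_⟩⟩
  refine hx _ ((isClopen_cylinder (c.code x) m).preimage hcode) (self_mem_cylinder _ _) ?_
  rw [← inter_assoc] at hσ
  exact hσ.congr (preimageValHomeomorphInter (B ∩ T) (c.code ⁻¹' cylinder (c.code x) m)).symm

end IsCounterexample

/-- A counterexample that is Wadge reducible to every counterexample or to its complement. -/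
structure IsMinimalCounterexample (S Y : Set Cantor) : Prop extends IsCounterexample S Y where
  minimal : ∀ T B, IsCounterexample T B → WadgeReducible S Y T B ∨ WadgeReducible S Y T Bᶜ

theorem exists_isContracting_of_not_wadgeReducible {S A T B : Set Cantor} (c : BaireCoding S)
    (d : BaireCoding T) (hA : MeasurableSet A) (hB : MeasurableSet B)
    (h : ¬ WadgeReducible S A T B) (h' : ¬ WadgeReducible S A T Bᶜ) (i : Bool) :
    ∃ g, IsContracting g ∧ ∀ y, y ∈ d.decode ⁻¹' B ↔ (g y ∈ c.decode ⁻¹' A ↔ i = false) := by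
  have hA' := c.continuous_decode.measurable hA
  have hB' := d.continuous_decode.measurable hB
  cases i
  · rcases wadge_lemma hA' hB'.compl with ⟨f, hf, hAB⟩ | ⟨g, hg, hBA⟩
    · exact absurd (.of_baireCoding c d hf.continuous hAB) h'
    · exact ⟨g, hg, fun y => by simpa using not_iff_not.mp (hBA y)⟩
  · rcases wadge_lemma hA' hB' with ⟨f, hf, hAB⟩ | ⟨g, hg, hBA⟩
    · exact absurd (.of_baireCoding c d hf.continuous hAB) h
    · exact ⟨g, hg, fun y => by simpa using hBA y⟩

/-- Otherwise there is a sequence of counterexamples none of which is Wadge reducible to its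
successor or to the complement of its successor. -/
theorem exists_isMinimalCounterexample {B : Set Cantor} (hB : MeasurableSet B)
    (h : ¬ SigmaHHomogeneous B) : ∃ S Y, IsMinimalCounterexample S Y := by
  by_contra! hcon
  let Counterexample := {p : Set Cantor × Set Cantor // IsCounterexample p.1 p.2}
  have hsucc (p : Counterexample) : ∃ q : Counterexample,
      ¬ WadgeReducible p.1.1 p.1.2 q.1.1 q.1.2 ∧ ¬ WadgeReducible p.1.1 p.1.2 q.1.1 q.1.2ᶜ := by
    by_contra! hp
    exact hcon _ _ ⟨p.2, fun T B hTB => or_iff_not_imp_left.mpr (hp ⟨(T, B), hTB⟩)⟩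
  choose next hnext hnext' using hsucc
  let p : ℕ → Counterexample :=
    fun n => n.rec ⟨(univ, B), IsGδ.univ, hB, by rwa [inter_univ]⟩ fun _ => next
  let c (n : ℕ) := (nonempty_baireCoding (p n).2.isGδ (p n).2.nonempty).some
  have hred (n : ℕ) := exists_isContracting_of_not_wadgeReducible (c n) (c (n + 1))
    (p n).2.measurableSet (p (n + 1)).2.measurableSet (hnext (p n)) (hnext' (p n))
  choose g hg hgp using hred
  exact not_measurableSet_of_isContracting (A := fun n => (c n).decode ⁻¹' (p n).1.2) hgp hg
    ((c 0).continuous_decode.measurable (p 0).2.measurableSet)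

theorem wadgeReducible_of_constant {R A S Y : Set Cantor}
    (hA : (∀ x ∈ R, x ∈ A) ∨ (∀ x ∈ R, x ∉ A)) (hYS : (Y ∩ S).Nonempty) (hSY : (S \ Y).Nonempty) :
    WadgeReducible R A S Y := by
  obtain ⟨a, haY, haS⟩ := hYS
  obtain ⟨b, hbS, hbY⟩ := hSY
  rcases hA with hA | hA
  · exact ⟨fun _ => a, continuousOn_const, fun _ _ => haS, fun x hx => by simp [hA x hx, haY]⟩
  · exact ⟨fun _ => b, continuousOn_const, fun _ _ => hbS, fun x hx => by simp [hA x hx, hbY]⟩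

theorem exists_seq_isGδ_partition_compl {S : Set Cantor} (hS : IsGδ S) :
    ∃ D : ℕ → Set Cantor, Pairwise (Function.onFun Disjoint D) ∧ (∀ n, IsGδ (D n)) ∧
      ⋃ n, D n = Sᶜ := by
  obtain ⟨U, hU, rfl⟩ := hS.eq_iInter_nat
  refine ⟨disjointed fun n => (U n)ᶜ, disjoint_disjointed _, fun n => ?_, ?_⟩
  · rw [disjointed_eq_inter_compl]
    simp only [compl_compl]
    exact (hU n).isClosed_compl.isGδ.inter
      ((Set.finite_lt_nat n).isOpen_biInter fun i _ => hU i).isGδ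
  · rw [iUnion_disjointed, compl_iInter]

namespace IsMinimalCounterexample

variable {S Y : Set Cantor}

/-- If `Y` were self-dual on `S` then, by minimality, it would be reducible to itself and to its
complement with values in an arbitrarily small neighbourhood of some point. -/
theorem not_wadgeReducible_compl (h : IsMinimalCounterexample S Y) :
    ¬ WadgeReducible S Y S Yᶜ := by
  intro hself
  obtain ⟨c⟩ := nonempty_baireCoding h.isGδ h.nonempty
  obtain ⟨z, hz⟩ := h.exists_forall_inter_cylinder c
  have hlocal (m : ℕ) (i : Bool) : ∃ g : Cantor → Cantor, ContinuousOn g S ∧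
      MapsTo g S (S ∩ c.code ⁻¹' cylinder z m) ∧ ∀ x ∈ S, x ∈ Y ↔ (g x ∈ Y ↔ i = false) := by
    have hboth : WadgeReducible S Y (S ∩ c.code ⁻¹' cylinder z m) Y ∧
        WadgeReducible S Y (S ∩ c.code ⁻¹' cylinder z m) Yᶜ := by
      rcases h.minimal _ _ (hz m) with hred | hred
      · exact ⟨hred, hself.trans hred.compl⟩
      · exact ⟨by simpa only [compl_compl] using hself.trans hred.compl, hred⟩
    cases i
    · simpa [WadgeReducible] using hboth.1
    · simpa [WadgeReducible] using hboth.2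
  refine not_measurableSet_of_forall_cylinder_selfDual (Y := c.decode ⁻¹' Y) z (fun m i => ?_)
    (c.continuous_decode.measurable h.measurableSet)
  obtain ⟨g, hg, hmaps, hgY⟩ := hlocal m i
  refine ⟨fun y => c.code (g (c.decode y)), ?_, fun y => (hmaps (c.decode_mem y)).2, fun y => ?_⟩
  · exact c.continuousOn_code.comp_continuous
      (hg.comp_continuous c.continuous_decode c.decode_mem) fun y => (hmaps (c.decode_mem y)).1
  · rw [mem_preimage, mem_preimage, c.decode_code _ (hmaps (c.decode_mem y)).1]
    exact hgY _ (c.decode_mem y)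

theorem wadgeReducible_of_partition {T A : Set Cantor} (h : IsMinimalCounterexample S Y)
    (hTS : T ⊆ S) (hT : IsCounterexample T Y) (hA : MeasurableSet A) {ι : Type*} [Countable ι]
    {R : ι → Set Cantor} (hdisj : Pairwise (Function.onFun Disjoint R)) (hGδ : ∀ i, IsGδ (R i))
    (hcover : ⋃ i, R i = univ) (hR : ∀ i, WadgeReducible (R i) A S Y) :
    WadgeReducible univ A T Y := by
  refine (wadgeReducible_or_wadgeReducible_compl .univ univ_nonempty hT.isGδ hT.nonempty hA
    hT.measurableSet).resolve_right ?_
  rintro ⟨f, hf, -, hfA⟩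
  obtain ⟨i, hi⟩ := hT.exists_inter_preimage hf hdisj hGδ hcover
  rcases h.minimal _ _ hi with hred | hred
  · have hfi : WadgeReducible (T ∩ f ⁻¹' R i) Y (R i) Aᶜ :=
      ⟨f, hf.mono inter_subset_left, fun x hx => hx.2, fun x hx => hfA x hx.1⟩
    exact h.not_wadgeReducible_compl (hred.trans (hfi.trans (hR i).compl))
  · exact h.not_wadgeReducible_compl (hred.mono le_rfl (inter_subset_left.trans hTS))

theorem wadgeReducible_inter (h : IsMinimalCounterexample S Y) :
    WadgeReducible univ (Y ∩ S) S Y := by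
  obtain ⟨D, hDdisj, hDGδ, hD⟩ := exists_seq_isGδ_partition_compl h.isGδ
  have hDS (n : ℕ) : Disjoint S (D n) :=
    disjoint_compl_right.mono_right (hD ▸ subset_iUnion D n)
  refine h.wadgeReducible_of_partition le_rfl h.toIsCounterexample
    (h.measurableSet.inter h.isGδ.measurableSet) (R := fun o : Option ℕ => o.elim S D)
    (pairwise_disjoint_option_elim hDS hDdisj) ?_ ?_ ?_
  · rintro (_ | n)
    exacts [h.isGδ, hDGδ n]
  · simp [iUnion_option, hD]
  · rintro (_ | n)
    · exact ⟨id, continuousOn_id, fun x hx => hx, fun x hx => and_iff_left hx⟩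
    · exact wadgeReducible_of_constant (.inr fun x hx hxS => disjoint_right.mp (hDS n) hx hxS.2)
        h.inter_nonempty h.diff_nonempty

end IsMinimalCounterexample

theorem exists_isMinimalCounterexample_univ {B : Set Cantor} (hB : MeasurableSet B)
    (h : ¬ SigmaHHomogeneous B) : ∃ Y, IsMinimalCounterexample univ Y := by
  obtain ⟨S, Y, hY⟩ := exists_isMinimalCounterexample hB h
  refine ⟨Y ∩ S, ⟨IsGδ.univ, hY.measurableSet.inter hY.isGδ.measurableSet, ?_⟩, fun T B hTB => ?_⟩
  · rw [inter_univ]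
    exact hY.not_sigmaHHomogeneous
  · exact (hY.minimal T B hTB).imp hY.wadgeReducible_inter.trans hY.wadgeReducible_inter.trans

/-! ### Embedding a minimal counterexample -/

/-- The homeomorphism of the Cantor space with its square that splits a sequence into its terms of
even and of odd index. -/
noncomputable def interleave : Cantor × Cantor ≃ₜ Cantor :=
  Homeomorph.sumArrowHomeomorphProdArrow.symm.trans
    (Homeomorph.piCongrLeft (Y := fun _ => Bool) Equiv.natSumNatEquivNat)

theorem isGδ_preimage_singleton_of_lowerSemicontinuous {X γ : Type*} [TopologicalSpace X]
    [PerfectlyNormalSpace X] [LinearOrder γ] [Countable γ] {f : X → γ} (hf : LowerSemicontinuous f)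
    (c : γ) : IsGδ (f ⁻¹' {c}) := by
  have hfiber : f ⁻¹' {c} = f ⁻¹' Iic c ∩ ⋂ a ∈ Iio c, f ⁻¹' Ioi a := by
    ext x
    simp only [mem_preimage, mem_singleton_iff, mem_inter_iff, mem_Iic, mem_iInter, mem_Iio,
      mem_Ioi]
    exact ⟨fun h => by simp [h], fun h => h.1.antisymm (le_of_forall_lt h.2)⟩
  rw [hfiber]
  exact (hf.isClosed_preimage c).isGδ.inter
    (.biInter (to_countable _) fun a _ => (hf.isOpen_preimage a).isGδ)

/-- One more than the position of the last `true` in `w`; it is `0` if there is none and `⊤` if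
there are infinitely many. -/
noncomputable def supportLength (w : Cantor) : ℕ∞ :=
  ⨆ k : ℕ, bif w k then (k + 1 : ℕ∞) else 0

theorem lowerSemicontinuous_supportLength : LowerSemicontinuous supportLength :=
  lowerSemicontinuous_iSup fun k => Continuous.lowerSemicontinuous <|
    (continuous_of_discreteTopology (f := fun b => bif b then (k + 1 : ℕ∞) else 0)).comp
      (continuous_apply k)

theorem add_one_le_supportLength {w : Cantor} {k : ℕ} (h : w k = true) :
    (k + 1 : ℕ∞) ≤ supportLength w :=
  le_iSup_of_le k (by rw [h, cond_true])

theorem supportLength_eq_add_one {w : Cantor} {k : ℕ} (hk : w k = true)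
    (h : ∀ j, k < j → w j = false) : supportLength w = k + 1 := by
  refine le_antisymm (iSup_le fun j => ?_) (add_one_le_supportLength hk)
  rcases le_or_gt j k with hjk | hkj
  · cases w j <;> simp [hjk]
  · simp [h j hkj]

theorem supportLength_eq_top {w : Cantor} (h : ∀ n, ∃ k, n ≤ k ∧ w k = true) :
    supportLength w = ⊤ := by
  refine ENat.eq_top_iff_forall_ge.mpr fun n => ?_
  obtain ⟨k, hnk, hk⟩ := h n
  exact le_trans (by exact_mod_cast Nat.le_succ_of_le hnk) (add_one_le_supportLength hk)

/-- On pairs whose second component has finite support, membership depends only on the parity of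
the support length; on the other pairs, only on whether the first component is in `A`. -/
def parityExtension (A : Set Cantor) : Set (Cantor × Cantor) :=
  {p | supportLength p.2 = ⊤ ∧ p.1 ∈ A ∨ ∃ m : ℕ, Even m ∧ supportLength p.2 = m}

theorem mem_parityExtension_of_eq_top {A : Set Cantor} {p : Cantor × Cantor}
    (h : supportLength p.2 = ⊤) : p ∈ parityExtension A ↔ p.1 ∈ A := by
  simp [parityExtension, h]

theorem mem_parityExtension_of_eq_natCast {A : Set Cantor} {p : Cantor × Cantor} {m : ℕ}
    (h : supportLength p.2 = m) : p ∈ parityExtension A ↔ Even m := by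
  simp [parityExtension, h]

theorem measurableSet_parityExtension {A : Set Cantor} (hA : MeasurableSet A) :
    MeasurableSet (parityExtension A) := by
  have hfiber (N : ℕ∞) : MeasurableSet {p : Cantor × Cantor | supportLength p.2 = N} :=
    measurable_snd (isGδ_preimage_singleton_of_lowerSemicontinuous
      lowerSemicontinuous_supportLength N).measurableSet
  have hunion : parityExtension A = {p | supportLength p.2 = ⊤} ∩ Prod.fst ⁻¹' A ∪
      ⋃ m : ℕ, ⋃ _ : Even m, {p | supportLength p.2 = m} := by
    ext p
    simp [parityExtension]
  rw [hunion]
  exact ((hfiber ⊤).inter (measurable_fst hA)).union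
    (.iUnion fun m => .iUnion fun _ => hfiber m)

theorem IsMinimalCounterexample.wadgeReducible_parityExtension {Y T A : Set Cantor}
    (h : IsMinimalCounterexample univ Y) (hT : IsCounterexample T Y) (hA : MeasurableSet A)
    (hred : WadgeReducible univ A univ Y) :
    WadgeReducible univ (interleave.symm ⁻¹' parityExtension A) T Y := by
  let length : Cantor → ℕ∞ := fun x => supportLength (interleave.symm x).2
  have hlength : LowerSemicontinuous length :=
    lowerSemicontinuous_supportLength.comp (continuous_snd.comp interleave.symm.continuous)
  refine h.wadgeReducible_of_partition (subset_univ _) hT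
    (interleave.symm.continuous.measurable (measurableSet_parityExtension hA))
    (R := fun N => length ⁻¹' {N}) (pairwise_disjoint_fiber length)
    (isGδ_preimage_singleton_of_lowerSemicontinuous hlength) ?_ fun N => ?_
  · rw [← preimage_iUnion, iUnion_of_singleton, preimage_univ]
  · induction N using ENat.recTopCoe with
    | top =>
      obtain ⟨f, hf, -, hfA⟩ := hred
      refine ⟨fun x => f (interleave.symm x).1, (hf.comp_continuous
        (continuous_fst.comp interleave.symm.continuous) fun _ => mem_univ _).continuousOn,
        fun _ _ => mem_univ _, fun x hx => ?_⟩
      exact (mem_parityExtension_of_eq_top hx).trans (hfA _ (mem_univ _))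
    | coe m =>
      refine wadgeReducible_of_constant ?_ h.inter_nonempty h.diff_nonempty
      by_cases hm : Even m
      · exact .inl fun x hx => (mem_parityExtension_of_eq_natCast hx).mpr hm
      · exact .inr fun x hx => mt (mem_parityExtension_of_eq_natCast hx).mp hm

/-- The sequences with a one at position `b` and only zeros strictly between `b` and `b'`. -/
def lastOneWithin (b b' : ℕ) : Set Cantor :=
  {w | w b = true ∧ ∀ j, b < j → j < b' → w j = false}

theorem isClosed_lastOneWithin (b b' : ℕ) : IsClosed (lastOneWithin b b') := by
  simp only [lastOneWithin, ofPred_and, ofPred_forall]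
  have hbit (j : ℕ) (i : Bool) : IsClosed {w : Cantor | w j = i} :=
    isClosed_eq (continuous_apply j) continuous_const
  exact (hbit _ _).inter (isClosed_iInter fun j => isClosed_iInter fun _ =>
    isClosed_iInter fun _ => hbit _ _)

theorem antitone_lastOneWithin (b : ℕ) : Antitone (lastOneWithin b) :=
  fun _ _ hle _ hw => ⟨hw.1, fun j hbj hj => hw.2 j hbj (hj.trans_le hle)⟩

theorem supportLength_of_forall_mem_lastOneWithin {b : ℕ} {w : Cantor}
    (h : ∀ n, w ∈ lastOneWithin b (b + 2 + n)) : supportLength w = (b + 1 : ℕ) :=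
  mod_cast supportLength_eq_add_one (h 0).1 fun j hj => (h j).2 j hj (by omega)

/-- By compactness: equal values of `g` at points whose support lengths have different parities
would contradict the reduction. -/
theorem exists_forall_lastOneWithin_ne {g : Cantor × Cantor → Cantor} (hg : Continuous g)
    {A Y : Set Cantor} (h : ∀ p, p ∈ parityExtension A ↔ g p ∈ Y) (b : ℕ) :
    ∃ b', b + 2 ≤ b' ∧ ∀ p p', p.2 ∈ lastOneWithin b b' → p'.2 ∈ lastOneWithin (b + 1) b' →
      g p ≠ g p' := by
  by_contra! hcon
  let F (n : ℕ) : Set ((Cantor × Cantor) × (Cantor × Cantor)) :=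
    {q | q.1.2 ∈ lastOneWithin b (b + 2 + n) ∧ q.2.2 ∈ lastOneWithin (b + 1) (b + 1 + 2 + n) ∧
      g q.1 = g q.2}
  have hF (n : ℕ) : IsClosed (F n) :=
    ((isClosed_lastOneWithin _ _).preimage (continuous_snd.comp continuous_fst)).inter
      (((isClosed_lastOneWithin _ _).preimage (continuous_snd.comp continuous_snd)).inter
        (isClosed_eq (hg.comp continuous_fst) (hg.comp continuous_snd)))
  obtain ⟨⟨p, p'⟩, hp⟩ := IsCompact.nonempty_iInter_of_sequence_nonempty_isCompact_isClosed F
    (fun n q hq => ⟨antitone_lastOneWithin _ (by omega) hq.1,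
      antitone_lastOneWithin _ (by omega) hq.2.1, hq.2.2⟩)
    (fun n => by
      obtain ⟨p, p', hp, hp', hgp⟩ := hcon (b + 1 + 2 + n) (by omega)
      exact ⟨(p, p'), antitone_lastOneWithin _ (by omega) hp, hp', hgp⟩)
    (hF 0).isCompact hF
  rw [mem_iInter] at hp
  have hlen := supportLength_of_forall_mem_lastOneWithin fun n => (hp n).1
  have hlen' := supportLength_of_forall_mem_lastOneWithin fun n => (hp n).2.1
  have hparity : Even (b + 1) ↔ Even (b + 1 + 1) := by
    rw [← mem_parityExtension_of_eq_natCast (A := A) hlen,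
      ← mem_parityExtension_of_eq_natCast (A := A) hlen', h, h, (hp 0).2.2]
  exact iff_not_self (hparity.trans Nat.even_add_one)

/-- The sequence with a one at each position `b k`, the bit `z k` at position `b k + 1`, and zeros
elsewhere. -/
noncomputable def sparseCode (b : ℕ → ℕ) (z : Cantor) : Cantor := by
  classical
  exact fun j => if j ∈ range b then true
    else (Function.partialInv (fun k => b k + 1) j).elim false z

theorem continuous_sparseCode (b : ℕ → ℕ) : Continuous (sparseCode b) := by
  refine continuous_pi fun j => ?_
  unfold sparseCode
  split_ifs
  · exact continuous_const
  · cases Function.partialInv (fun k => b k + 1) j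
    exacts [continuous_const, continuous_apply _]

theorem sparseCode_apply_self (b : ℕ → ℕ) (z : Cantor) (k : ℕ) : sparseCode b z (b k) = true :=
  if_pos (mem_range_self k)

theorem strictMono_of_add_two_le {b : ℕ → ℕ} (hb : ∀ k, b k + 2 ≤ b (k + 1)) : StrictMono b :=
  strictMono_nat_of_lt_succ fun k => (by omega : b k < b k + 2).trans_le (hb k)

theorem notMem_range_of_lt_of_lt {b : ℕ → ℕ} (hb : StrictMono b) {k j : ℕ} (hkj : b k < j)
    (hjk : j < b (k + 1)) : j ∉ range b := by
  rintro ⟨i, rfl⟩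
  have := hb.lt_iff_lt.mp hkj
  have := hb.lt_iff_lt.mp hjk
  omega

theorem sparseCode_apply_add_one {b : ℕ → ℕ} (hb : ∀ k, b k + 2 ≤ b (k + 1)) (z : Cantor) (k : ℕ) :
    sparseCode b z (b k + 1) = z k := by
  have hmono := strictMono_of_add_two_le hb
  have hinj : Function.Injective fun k => b k + 1 :=
    (add_left_injective 1).comp hmono.injective
  have hnot : b k + 1 ∉ range b := notMem_range_of_lt_of_lt hmono (Nat.lt_succ_self _) (hb k)
  have hinv : Function.partialInv (fun k => b k + 1) (b k + 1) = some k :=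
    Function.partialInv_left hinj k
  rw [sparseCode, if_neg hnot, hinv, Option.elim_some]

theorem sparseCode_apply_eq_false {b : ℕ → ℕ} (hb : ∀ k, b k + 2 ≤ b (k + 1)) (z : Cantor)
    {k j : ℕ} (hkj : b k + 1 < j) (hjk : j < b (k + 1)) : sparseCode b z j = false := by
  have hmono := strictMono_of_add_two_le hb
  have hinj : Function.Injective fun k => b k + 1 :=
    (add_left_injective 1).comp hmono.injective
  have hnot : j ∉ range b := notMem_range_of_lt_of_lt hmono (Nat.lt_of_succ_lt hkj) hjk
  have hinv : Function.partialInv (fun k => b k + 1) j = none := by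
    refine Option.eq_none_iff_forall_ne_some.mpr fun i hi => ?_
    obtain rfl : b i + 1 = j := (hinj.isPartialInv _ _).mp hi
    have := hmono.lt_iff_lt.mp (by omega : b k < b i)
    have := hmono.lt_iff_lt.mp (by omega : b i < b (k + 1))
    omega
  rw [sparseCode, if_neg hnot, hinv, Option.elim_none]

theorem sparseCode_mem_lastOneWithin {b : ℕ → ℕ} (hb : ∀ k, b k + 2 ≤ b (k + 1)) {z : Cantor}
    {k : ℕ} (hz : z k = false) : sparseCode b z ∈ lastOneWithin (b k) (b (k + 1)) := by
  refine ⟨sparseCode_apply_self b z k, fun j hkj hjk => ?_⟩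
  rcases (Nat.succ_le_of_lt hkj).eq_or_lt with rfl | hlt
  · rw [sparseCode_apply_add_one hb, hz]
  · exact sparseCode_apply_eq_false hb z hlt hjk

theorem sparseCode_mem_lastOneWithin_add_one {b : ℕ → ℕ} (hb : ∀ k, b k + 2 ≤ b (k + 1))
    {z : Cantor} {k : ℕ} (hz : z k = true) :
    sparseCode b z ∈ lastOneWithin (b k + 1) (b (k + 1)) :=
  ⟨(sparseCode_apply_add_one hb z k).trans hz, fun _ => sparseCode_apply_eq_false hb z⟩

theorem supportLength_sparseCode {b : ℕ → ℕ} (hb : ∀ k, b k + 2 ≤ b (k + 1)) (z : Cantor) :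
    supportLength (sparseCode b z) = ⊤ :=
  supportLength_eq_top fun n =>
    ⟨b n, (strictMono_of_add_two_le hb).id_le n, sparseCode_apply_self b z n⟩

namespace IsMinimalCounterexample

variable {Y T : Set Cantor}

theorem exists_injective_reduction {A : Set Cantor} (h : IsMinimalCounterexample univ Y)
    (hT : IsCounterexample T Y) (hA : MeasurableSet A) (hred : WadgeReducible univ A univ Y) :
    ∃ f : Cantor → Cantor, Continuous f ∧ Function.Injective f ∧ (∀ x, f x ∈ T) ∧
      ∀ x, f x ∈ Y ↔ x ∈ A := by
  obtain ⟨g', hg', hg'T, hg'Y⟩ := h.wadgeReducible_parityExtension hT hA hred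
  let g (p : Cantor × Cantor) : Cantor := g' (interleave p)
  have hg : Continuous g := (continuousOn_univ.mp hg').comp interleave.continuous
  have hgY (p : Cantor × Cantor) : p ∈ parityExtension A ↔ g p ∈ Y := by
    rw [← hg'Y _ (mem_univ _), mem_preimage, interleave.symm_apply_apply]
  choose next hnext hne using exists_forall_lastOneWithin_ne hg hgY
  let b : ℕ → ℕ := fun n => n.rec 0 fun _ => next
  have hb (k : ℕ) : b k + 2 ≤ b (k + 1) := hnext (b k)
  have hsep (z z' : Cantor) (k : ℕ) (hz : z k = false) (hz' : z' k = true) :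
      g (z, sparseCode b z) ≠ g (z', sparseCode b z') :=
    hne (b k) _ _ (sparseCode_mem_lastOneWithin hb hz) (sparseCode_mem_lastOneWithin_add_one hb hz')
  refine ⟨fun z => g (z, sparseCode b z), hg.comp (continuous_id.prodMk (continuous_sparseCode b)),
    fun z z' heq => ?_, fun z => hg'T (mem_univ _), fun z => ?_⟩
  · funext k
    cases hz : z k <;> cases hz' : z' k
    exacts [rfl, absurd heq (hsep z z' k hz hz'), absurd heq.symm (hsep z' z k hz' hz), rfl]
  · rw [← hgY, mem_parityExtension_of_eq_top (supportLength_sparseCode hb z)]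

/-- The reduction of `Y × Cantor` is restricted to a slice, so that perturbing the second
coordinate leaves the range. -/
theorem exists_injective_reduction_codense {V : Set Cantor} (h : IsMinimalCounterexample univ Y)
    (hT : IsCounterexample T Y) (hTV : T ⊆ V) :
    ∃ e : Cantor → Cantor, Continuous e ∧ Function.Injective e ∧ (∀ x, e x ∈ T) ∧
      (∀ x, e x ∈ Y ↔ x ∈ Y) ∧ V ⊆ closure (V \ range e) := by
  have hfst : Continuous fun x => (interleave.symm x).1 :=
    continuous_fst.comp interleave.symm.continuous
  obtain ⟨f, hf, hinj, hfT, hfY⟩ := h.exists_injective_reduction hT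
    (A := {x | (interleave.symm x).1 ∈ Y}) (hfst.measurable h.measurableSet)
    ⟨fun x => (interleave.symm x).1, hfst.continuousOn, fun _ _ => mem_univ _, fun _ _ => Iff.rfl⟩
  have hF : Continuous fun p => f (interleave p) := hf.comp interleave.continuous
  have hFinj : Function.Injective fun p => f (interleave p) := hinj.comp interleave.injective
  let zero : Cantor := fun _ => false
  refine ⟨fun z => f (interleave (z, zero)), hF.comp (.prodMk_left zero),
    hFinj.comp (Prod.mk_left_injective zero), fun x => hfT _, fun x => ?_, fun p hpV => ?_⟩
  · rw [hfY, Set.mem_ofPred_eq, interleave.symm_apply_apply]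
  · refine mem_closure_iff.mpr fun U hU hpU => ?_
    by_contra! hcon
    have hrange : ∀ q ∈ U, q ∈ V → q ∈ range fun z => f (interleave (z, zero)) := fun q hqU hqV =>
      by_contra fun hq => eq_empty_iff_forall_notMem.mp hcon q ⟨hqU, hqV, hq⟩
    obtain ⟨z, rfl⟩ := hrange p hpU hpV
    obtain ⟨m, hm⟩ := exists_cylinder_subset (hU.preimage (hF.comp (.prodMk_right z))) hpU
    have hflip : flipBit m zero ∈ cylinder zero m := fun i hi => flipBit_apply_of_ne (ne_of_lt hi) _
    obtain ⟨z', hz'⟩ := hrange _ (hm hflip) (hTV (hfT _))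
    have hbit := congrArg (fun p : Cantor × Cantor => p.2 m) (hFinj hz')
    simp [zero, flipBit_apply_self] at hbit

end IsMinimalCounterexample

/-! ### The back-and-forth construction -/

/-- The closed set `V` is nowhere σ-h-homogeneous relative to `Y`, but `Y` is constant, with value
`b`, on `V` outside the increasing sequence of closed nowhere dense sets `L n`. -/
structure IsGenericallyConstant (Y V : Set Cantor) (L : ℕ → Set Cantor) (b : Prop) : Prop where
  isClosed : IsClosed V
  nonempty : V.Nonempty
  isCounterexample : ∀ U, IsClopen U → (U ∩ V).Nonempty → IsCounterexample (U ∩ V) Y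
  layer_subset : ∀ n, L n ⊆ V
  isClosed_layer : ∀ n, IsClosed (L n)
  monotone_layer : Monotone L
  subset_closure_diff : ∀ n, V ⊆ closure (V \ L n)
  mem_iff : ∀ x ∈ V, (∀ n, x ∉ L n) → (x ∈ Y ↔ b)

/-- A pair of subsets of Cantor space, one for each side of the back-and-forth construction,
together with a partial matching between them; a matched pair is a function `Bool → Cantor`. -/
structure Block where
  side : Bool → Set Cantor
  matching : Set (Bool → Cantor)

theorem exists_mem_inter_notMem {X : Type*} [TopologicalSpace X] {V A O : Set X}
    (h : V ⊆ closure (V \ A)) (hO : IsOpen O) (hne : (O ∩ V).Nonempty) :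
    ∃ x ∈ O ∩ V, x ∉ A := by
  obtain ⟨x, hxO, hxV⟩ := hne
  obtain ⟨y, hyO, hyV, hyA⟩ := mem_closure_iff.mp (h hxV) O hO hxO
  exact ⟨y, ⟨hyO, hyV⟩, hyA⟩

namespace Block

variable {Y : Set Cantor} {V : Bool → Set Cantor} {L : Bool → ℕ → Set Cantor} {b : Prop}
  {N : Block} {D : Set Block}

/-- A block with clopen sides meeting `V`, whose matching is a closed, nowhere dense, injective
relation between the two sides that respects membership in `Y`. -/
structure IsValid (Y : Set Cantor) (V : Bool → Set Cantor) (N : Block) : Prop where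
  isClopen : ∀ s, IsClopen (N.side s)
  nonempty : ∀ s, (N.side s ∩ V s).Nonempty
  isClosed_matching : IsClosed N.matching
  mem_side : ∀ p ∈ N.matching, ∀ s, p s ∈ N.side s ∩ V s
  injOn : ∀ s, InjOn (Function.eval s) N.matching
  mem_iff : ∀ p ∈ N.matching, ∀ s t, p s ∈ Y ↔ p t ∈ Y
  subset_closure_diff : ∀ s, V s ⊆ closure (V s \ Function.eval s '' N.matching)

/-- The sides of the blocks in `D` partition the sides of `N`, compatibly with its matching. -/
structure IsPartition (Y : Set Cantor) (V : Bool → Set Cantor) (N : Block) (D : Set Block) :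
    Prop where
  isValid : ∀ M ∈ D, IsValid Y V M
  side_subset : ∀ M ∈ D, ∀ s, M.side s ⊆ N.side s
  exists_mem : ∀ s, ∀ x ∈ N.side s ∩ V s, ∃ M ∈ D, x ∈ M.side s
  eq_of_mem : ∀ s, ∀ x ∈ V s, ∀ M ∈ D, ∀ M' ∈ D, x ∈ M.side s → x ∈ M'.side s → M = M'
  coherent : ∀ p ∈ N.matching, ∀ M ∈ D, ∀ s t, p s ∈ M.side s → p t ∈ M.side t

/-- A partition into blocks whose matchings are the restrictions of the matching of `N`. -/
structure IsSubdivision (Y : Set Cantor) (V : Bool → Set Cantor) (N : Block) (D : Set Block) :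
    Prop extends IsPartition Y V N D where
  mem_matching_iff : ∀ M ∈ D, ∀ p, p ∈ M.matching ↔ p ∈ N.matching ∧ ∀ s, p s ∈ M.side s

/-! #### Subdividing blocks -/

theorem IsSubdivision.biUnion {F : Block → Set Block} (h : IsSubdivision Y V N D)
    (hF : ∀ M ∈ D, IsSubdivision Y V M (F M)) : IsSubdivision Y V N (⋃ M ∈ D, F M) where
  isValid M hM := by
    obtain ⟨K, hK, hMK⟩ := mem_iUnion₂.mp hM
    exact (hF K hK).isValid M hMK
  side_subset M hM s := by
    obtain ⟨K, hK, hMK⟩ := mem_iUnion₂.mp hM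
    exact ((hF K hK).side_subset M hMK s).trans (h.side_subset K hK s)
  exists_mem s x hx := by
    obtain ⟨K, hK, hxK⟩ := h.exists_mem s x hx
    obtain ⟨M, hM, hxM⟩ := (hF K hK).exists_mem s x ⟨hxK, hx.2⟩
    exact ⟨M, mem_biUnion hK hM, hxM⟩
  eq_of_mem s x hx M hM M' hM' hxM hxM' := by
    obtain ⟨K, hK, hMK⟩ := mem_iUnion₂.mp hM
    obtain ⟨K', hK', hMK'⟩ := mem_iUnion₂.mp hM'
    obtain rfl : K = K' := h.eq_of_mem s x hx K hK K' hK' ((hF K hK).side_subset M hMK s hxM)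
      ((hF K' hK').side_subset M' hMK' s hxM')
    exact (hF K hK).eq_of_mem s x hx M hMK M' hMK' hxM hxM'
  coherent p hp M hM s t hps := by
    obtain ⟨K, hK, hMK⟩ := mem_iUnion₂.mp hM
    have hpK : p ∈ K.matching := (h.mem_matching_iff K hK p).mpr
      ⟨hp, fun t => h.coherent p hp K hK s t ((hF K hK).side_subset M hMK s hps)⟩
    exact (hF K hK).coherent p hpK M hMK s t hps
  mem_matching_iff M hM p := by
    obtain ⟨K, hK, hMK⟩ := mem_iUnion₂.mp hM
    rw [(hF K hK).mem_matching_iff M hMK, h.mem_matching_iff K hK]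
    exact ⟨fun hp => ⟨hp.1.1, hp.2⟩,
      fun hp => ⟨⟨hp.1, fun s => (hF K hK).side_subset M hMK s (hp.2 s)⟩, hp.2⟩⟩

/-- The block cut down to `E s` on each side `s`. -/
def restrict (N : Block) (E : Bool → Set Cantor) : Block where
  side s := N.side s ∩ E s
  matching := {p ∈ N.matching | ∀ s, p s ∈ E s}

theorem IsValid.restrict (h : N.IsValid Y V) {E : Bool → Set Cantor} (hE : ∀ s, IsClopen (E s))
    (hne : ∀ s, (N.side s ∩ V s ∩ E s).Nonempty) : (N.restrict E).IsValid Y V where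
  isClopen s := (h.isClopen s).inter (hE s)
  nonempty s := by
    rw [Block.restrict, inter_right_comm]
    exact hne s
  isClosed_matching := by
    simp only [Block.restrict, ofPred_and, ofPred_forall]
    exact h.isClosed_matching.inter
      (isClosed_iInter fun s => (hE s).isClosed.preimage (continuous_apply s))
  mem_side p hp s := ⟨⟨(h.mem_side p hp.1 s).1, hp.2 s⟩, (h.mem_side p hp.1 s).2⟩
  injOn s := (h.injOn s).mono fun _ hp => hp.1
  mem_iff p hp := h.mem_iff p hp.1
  subset_closure_diff s := (h.subset_closure_diff s).trans
    (closure_mono (sdiff_subset_sdiff_right (image_mono fun _ hp => hp.1)))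

theorem IsValid.isSubdivision_restrict (h : N.IsValid Y V) {E : Bool → Set Cantor}
    (hE : ∀ s, IsClopen (E s)) (hmatch : ∀ p ∈ N.matching, ∀ s t, p s ∈ E s → p t ∈ E t)
    (hne : ∀ F ∈ ({E, Eᶜ} : Set (Bool → Set Cantor)), ∀ s t,
      (N.side s ∩ V s ∩ F s).Nonempty → (N.side t ∩ V t ∩ F t).Nonempty) :
    IsSubdivision Y V N (N.restrict '' {F ∈ ({E, Eᶜ} : Set (Bool → Set Cantor)) |
      ∀ s, (N.side s ∩ V s ∩ F s).Nonempty}) where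
  isValid := by
    rintro _ ⟨F, ⟨rfl | rfl, hF⟩, rfl⟩
    exacts [h.restrict hE hF, h.restrict (fun s => (hE s).compl) hF]
  side_subset := by
    rintro _ ⟨F, -, rfl⟩ s
    exact inter_subset_left
  exists_mem s x hx := by
    obtain ⟨F, hF, hxF⟩ : ∃ F ∈ ({E, Eᶜ} : Set (Bool → Set Cantor)), x ∈ F s := by
      by_cases hxE : x ∈ E s
      exacts [⟨E, .inl rfl, hxE⟩, ⟨Eᶜ, .inr rfl, hxE⟩]
    exact ⟨_, mem_image_of_mem _ ⟨hF, fun t => hne F hF s t ⟨x, hx, hxF⟩⟩, hx.1, hxF⟩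
  eq_of_mem := by
    rintro s x - _ ⟨F, ⟨rfl | rfl, -⟩, rfl⟩ _ ⟨F', ⟨rfl | rfl, -⟩, rfl⟩ hx hx'
    exacts [rfl, absurd hx.2 hx'.2, absurd hx'.2 hx.2, rfl]
  coherent := by
    rintro p hp _ ⟨F, ⟨rfl | rfl, -⟩, rfl⟩ s t hps
    · exact ⟨(h.mem_side p hp t).1, hmatch p hp s t hps.2⟩
    · exact ⟨(h.mem_side p hp t).1, fun hpt => hps.2 (hmatch p hp t s hpt)⟩
  mem_matching_iff := by
    rintro _ ⟨F, -, rfl⟩ p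
    exact ⟨fun hp => ⟨hp.1, fun s => ⟨(h.mem_side p hp.1 s).1, hp.2 s⟩⟩,
      fun hp => ⟨hp.1, fun s => (hp.2 s).2⟩⟩

theorem IsValid.exists_ne_notMem_image (hV : ∀ s, IsGenericallyConstant Y (V s) (L s) b)
    (h : N.IsValid Y V) (s : Bool) :
    ∃ x ∈ N.side s ∩ V s, ∃ y ∈ N.side s ∩ V s, x ≠ y ∧ x ∉ Function.eval s '' N.matching ∧
      y ∉ Function.eval s '' N.matching := by
  obtain ⟨x, hx, hxN⟩ :=
    exists_mem_inter_notMem (h.subset_closure_diff s) (h.isClopen s).isOpen (h.nonempty s)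
  have hbad := (hV s).isCounterexample _ (h.isClopen s) (h.nonempty s)
  obtain ⟨z, hzY, hz⟩ := hbad.inter_nonempty
  obtain ⟨w, hw, hwY⟩ := hbad.diff_nonempty
  have hne : (N.side s ∩ {x}ᶜ ∩ V s).Nonempty := by
    rcases eq_or_ne z x with rfl | hzx
    · exact ⟨w, ⟨hw.1, fun hwz => hwY (mem_singleton_iff.mp hwz ▸ hzY)⟩, hw.2⟩
    · exact ⟨z, ⟨hz.1, hzx⟩, hz.2⟩
  obtain ⟨y, hy, hyN⟩ := exists_mem_inter_notMem (h.subset_closure_diff s)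
    ((h.isClopen s).isOpen.inter isOpen_compl_singleton) hne
  exact ⟨x, hx, y, ⟨hy.1.1, hy.2⟩, Ne.symm hy.1.2, hxN, hyN⟩

theorem IsValid.exists_isClopen_separating (hV : ∀ s, IsGenericallyConstant Y (V s) (L s) b)
    (h : N.IsValid Y V) {B : Set Cantor} (hB : IsClopen B) (s t : Bool) :
    ∃ B', IsClopen B' ∧ (∀ p ∈ N.matching, p s ∈ B ↔ p t ∈ B') ∧
      (N.side t ∩ V t ∩ B').Nonempty ∧ (N.side t ∩ V t ∩ B'ᶜ).Nonempty := by
  obtain ⟨x, hx, y, hy, hxy, hxN, hyN⟩ := h.exists_ne_notMem_image hV t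
  let image (A : Set Cantor) : Set Cantor :=
    (fun p : Bool → Cantor => p t) '' {p ∈ N.matching | p s ∈ A}
  have himage {A : Set Cantor} (hA : IsClosed A) : IsClosed (image A) :=
    (((h.isClosed_matching.inter (hA.preimage (continuous_apply s))).isCompact).image
      (continuous_apply t)).isClosed
  have hdisj : image B ∪ {x} ⊆ (image Bᶜ ∪ {y})ᶜ := by
    rintro z (⟨p, ⟨hp, hpB⟩, rfl⟩ | rfl) (⟨q, ⟨hq, hqB⟩, hqz⟩ | hzy)
    · exact hqB (h.injOn t hq hp hqz ▸ hpB)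
    · exact hyN ⟨p, hp, hzy⟩
    · exact hxN ⟨q, hq, hqz⟩
    · exact hxy hzy
  obtain ⟨B', hB', hBB', hB'B⟩ := exists_clopen_of_closed_subset_open
    ((himage hB.isClosed).union isClosed_singleton)
    ((himage hB.compl.isClosed).union isClosed_singleton).isOpen_compl hdisj
  refine ⟨B', hB', fun p hp => ⟨fun hpB => hBB' (.inl ⟨p, ⟨hp, hpB⟩, rfl⟩), fun hpB' => ?_⟩,
    ⟨x, hx, hBB' (.inr rfl)⟩, ⟨y, hy, fun hyB' => hB'B hyB' (.inr rfl)⟩⟩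
  by_contra hpB
  exact hB'B hpB' (.inl ⟨p, ⟨hp, hpB⟩, rfl⟩)

theorem IsValid.exists_isClopen_compatible (hV : ∀ s, IsGenericallyConstant Y (V s) (L s) b)
    (h : N.IsValid Y V) {B : Set Cantor} (hB : IsClopen B) (s t : Bool) :
    ∃ B', IsClopen B' ∧ (∀ p ∈ N.matching, p s ∈ B ↔ p t ∈ B') ∧
      ((N.side s ∩ V s ∩ B).Nonempty ↔ (N.side t ∩ V t ∩ B').Nonempty) ∧
      ((N.side s ∩ V s ∩ Bᶜ).Nonempty ↔ (N.side t ∩ V t ∩ B'ᶜ).Nonempty) := by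
  by_cases hBne : (N.side s ∩ V s ∩ B).Nonempty
  · by_cases hBne' : (N.side s ∩ V s ∩ Bᶜ).Nonempty
    · obtain ⟨B', hB', hmatch, hne, hne'⟩ := h.exists_isClopen_separating hV hB s t
      exact ⟨B', hB', hmatch, iff_of_true hBne hne, iff_of_true hBne' hne'⟩
    · refine ⟨univ, isClopen_univ, fun p hp => iff_of_true ?_ trivial, iff_of_true hBne ?_,
        iff_of_false hBne' ?_⟩
      · by_contra hpB
        exact hBne' ⟨p s, h.mem_side p hp s, hpB⟩
      · rw [inter_univ]
        exact h.nonempty t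
      · simp
  · have hcompl : N.side s ∩ V s ⊆ Bᶜ := fun x hx hxB => hBne ⟨x, hx, hxB⟩
    refine ⟨∅, isClopen_empty, fun p hp => iff_of_false ?_ (notMem_empty _),
      iff_of_false hBne ?_, iff_of_true ?_ ?_⟩
    · exact hcompl (h.mem_side p hp s)
    · simp
    · rw [inter_eq_left.mpr hcompl]
      exact h.nonempty s
    · rw [compl_empty, inter_univ]
      exact h.nonempty t

theorem IsValid.exists_isSubdivision_subset_or (hV : ∀ s, IsGenericallyConstant Y (V s) (L s) b)
    (h : N.IsValid Y V) {B : Set Cantor} (hB : IsClopen B) (s : Bool) :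
    ∃ D, IsSubdivision Y V N D ∧ ∀ M ∈ D, M.side s ⊆ B ∨ M.side s ⊆ Bᶜ := by
  have hcompatible (t : Bool) : ∃ E, IsClopen E ∧ (t = s → E = B) ∧
      (∀ p ∈ N.matching, p s ∈ B ↔ p t ∈ E) ∧
      ((N.side s ∩ V s ∩ B).Nonempty ↔ (N.side t ∩ V t ∩ E).Nonempty) ∧
      ((N.side s ∩ V s ∩ Bᶜ).Nonempty ↔ (N.side t ∩ V t ∩ Eᶜ).Nonempty) := by
    rcases eq_or_ne t s with rfl | hts
    · exact ⟨B, hB, fun _ => rfl, fun _ _ => Iff.rfl, Iff.rfl, Iff.rfl⟩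
    · obtain ⟨E, hE, h⟩ := h.exists_isClopen_compatible hV hB s t
      exact ⟨E, hE, fun hts' => absurd hts' hts, h⟩
  choose E hE hEs hmatch hne hne' using hcompatible
  refine ⟨_, h.isSubdivision_restrict hE (fun p hp t u => ?_) ?_, ?_⟩
  · rw [← hmatch t p hp, ← hmatch u p hp]
    exact id
  · rintro F (rfl | rfl) t u
    · rw [← hne t, ← hne u]
      exact id
    · rw [Pi.compl_apply, Pi.compl_apply, ← hne' t, ← hne' u]
      exact id
  · rintro _ ⟨F, ⟨rfl | rfl, -⟩, rfl⟩
    · exact .inl (inter_subset_right.trans (hEs s rfl).subset)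
    · exact .inr (inter_subset_right.trans (congrArg compl (hEs s rfl)).subset)

theorem IsValid.exists_isSubdivision_eq_of_mem
    (hV : ∀ s, IsGenericallyConstant Y (V s) (L s) b) (h : N.IsValid Y V) (n : ℕ) :
    ∃ D, IsSubdivision Y V N D ∧ ∀ M ∈ D, ∀ s, ∀ x ∈ M.side s, ∀ y ∈ M.side s, x n = y n := by
  have hbit : IsClopen {x : Cantor | x n = true} :=
    (isClopen_discrete {true}).preimage (continuous_apply n)
  obtain ⟨D, hD, hDtrue⟩ := h.exists_isSubdivision_subset_or hV hbit true
  choose! F hF hFfalse using fun M hM =>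
    (hD.isValid M hM).exists_isSubdivision_subset_or hV hbit false
  refine ⟨_, hD.biUnion hF, fun M hM s => ?_⟩
  obtain ⟨K, hK, hMK⟩ := mem_iUnion₂.mp hM
  have hside : M.side s ⊆ {x | x n = true} ∨ M.side s ⊆ {x | x n = true}ᶜ := by
    cases s
    · exact hFfalse K hK M hMK
    · have hsub := (hF K hK).side_subset M hMK true
      exact (hDtrue K hK).imp hsub.trans hsub.trans
  intro x hx y hy
  rcases hside with hside | hside
  · exact (hside hx).trans (hside hy).symm
  · exact (Bool.eq_false_of_not_eq_true (hside hx)).trans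
      (Bool.eq_false_of_not_eq_true (hside hy)).symm

/-! #### Enlarging the matching -/

/-- The pairs with an entry in some `R s`, the other entry being its image under `e (!s)`. -/
def graphMatching (R : Bool → Set Cantor) (e : Bool → Cantor → Cantor) : Set (Bool → Cantor) :=
  {p | ∃ s, p s ∈ R s ∧ p (!s) = e (!s) (p s)}

section graphMatching

variable {R : Bool → Set Cantor} {e : Bool → Cantor → Cantor} {p : Bool → Cantor}

theorem mem_graphMatching_iff (s : Bool) :
    p ∈ graphMatching R e ↔
      (p s ∈ R s ∧ p (!s) = e (!s) (p s)) ∨ (p (!s) ∈ R (!s) ∧ p s = e s (p (!s))) := by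
  cases s <;> simp [graphMatching, or_comm]

theorem image_eval_graphMatching (s : Bool) :
    Function.eval s '' graphMatching R e = R s ∪ e s '' R (!s) := by
  ext x
  constructor
  · rintro ⟨p, hp, rfl⟩
    rcases (mem_graphMatching_iff s).mp hp with ⟨hps, -⟩ | ⟨hps, hp⟩
    exacts [.inl hps, .inr ⟨_, hps, hp.symm⟩]
  · rintro (hx | ⟨y, hy, rfl⟩)
    · exact ⟨fun t => if t = s then x else e t x, ⟨s, by simpa using hx, by simp⟩, by simp⟩
    · exact ⟨fun t => if t = s then e t y else y, ⟨!s, by simpa using hy, by simp⟩, by simp⟩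

theorem isClosed_graphMatching (hR : ∀ s, IsClosed (R s)) (he : ∀ s, Continuous (e s)) :
    IsClosed (graphMatching R e) := by
  have hunion : graphMatching R e =
      ⋃ s, {p : Bool → Cantor | p s ∈ R s} ∩ {p | p (!s) = e (!s) (p s)} := by
    ext p
    simp [graphMatching]
  rw [hunion]
  exact isClosed_iUnion_of_finite fun s => ((hR s).preimage (continuous_apply s)).inter
    (isClosed_eq (continuous_apply _) ((he _).comp (continuous_apply s)))

theorem injOn_eval_graphMatching (he : ∀ s, Function.Injective (e s))
    (hR : ∀ s x, e s x ∉ R s) (s : Bool) : InjOn (Function.eval s) (graphMatching R e) := by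
  intro p hp q hq hpq
  change p s = q s at hpq
  have hpq' : p (!s) = q (!s) := by
    rcases (mem_graphMatching_iff s).mp hp with ⟨hps, hp⟩ | ⟨-, hp⟩ <;>
      rcases (mem_graphMatching_iff s).mp hq with ⟨hqs, hq⟩ | ⟨-, hq⟩
    · rw [hp, hq, hpq]
    · exact absurd (hq ▸ hpq ▸ hps) (hR s _)
    · exact absurd (hp ▸ hpq ▸ hqs) (hR s _)
    · exact he s (by rw [← hp, ← hq, hpq])
  funext t
  rcases Bool.eq_or_eq_not t s with rfl | rfl
  exacts [hpq, hpq']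

end graphMatching

theorem subset_closure_diff_union {X : Type*} [TopologicalSpace X] {V A B : Set X}
    (hA : IsClosed A) (hVA : V ⊆ closure (V \ A)) (hVB : V ⊆ closure (V \ B)) :
    V ⊆ closure (V \ (A ∪ B)) := by
  refine fun x hx => mem_closure_iff.mpr fun O hO hxO => ?_
  obtain ⟨y, hy, hyA⟩ := exists_mem_inter_notMem hVA hO ⟨x, hxO, hx⟩
  obtain ⟨z, hz, hzB⟩ :=
    exists_mem_inter_notMem hVB (hO.inter hA.isOpen_compl) ⟨y, ⟨hy.1, hyA⟩, hy.2⟩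
  exact ⟨z, hz.1.1, hz.2, fun hzAB => hzAB.elim hz.1.2 hzB⟩

theorem IsValid.exists_isValid_layer_subset (hY : IsMinimalCounterexample univ Y)
    (hV : ∀ s, IsGenericallyConstant Y (V s) (L s) b) (h : N.IsValid Y V) (n : ℕ) :
    ∃ H, IsValid Y V ⟨N.side, H⟩ ∧ ∀ s, L s n ∩ N.side s ⊆ Function.eval s '' H := by
  have hgap (s : Bool) : ∃ U, IsClopen U ∧ U ⊆ N.side s \ L s n ∧ (U ∩ V s).Nonempty := by
    obtain ⟨x, hx, hxL⟩ := exists_mem_inter_notMem ((hV s).subset_closure_diff n)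
      (h.isClopen s).isOpen (h.nonempty s)
    obtain ⟨m, hm⟩ := exists_cylinder_subset
      ((h.isClopen s).isOpen.sdiff ((hV s).isClosed_layer n)) ⟨hx.1, hxL⟩
    exact ⟨_, isClopen_cylinder x m, hm, x, self_mem_cylinder x m, hx.2⟩
  choose U hU hUsub hUne using hgap
  choose e he heinj hemem heY heV using fun s => hY.exists_injective_reduction_codense
    ((hV s).isCounterexample (U s) (hU s) (hUne s)) inter_subset_right
  let R (s : Bool) : Set Cantor := L s n ∩ N.side s
  have hR (s : Bool) (x : Cantor) : e s x ∉ R s := fun hx => (hUsub s (hemem s x).1).2 hx.1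
  refine ⟨graphMatching R e, ⟨h.isClopen, h.nonempty, ?_, ?_, injOn_eval_graphMatching heinj hR,
    ?_, fun s => ?_⟩, fun s => ?_⟩
  · exact isClosed_graphMatching
      (fun s => ((hV s).isClosed_layer n).inter (h.isClopen s).isClosed) he
  · intro p hp s
    rcases (mem_graphMatching_iff s).mp hp with ⟨hps, -⟩ | ⟨-, hps⟩
    · exact ⟨hps.2, (hV s).layer_subset n hps.1⟩
    · exact hps ▸ ⟨(hUsub s (hemem s _).1).1, (hemem s _).2⟩
  · rintro p ⟨r, -, hr⟩ s t
    have hY' (s : Bool) : p s ∈ Y ↔ p r ∈ Y := by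
      rcases Bool.eq_or_eq_not s r with rfl | rfl
      exacts [Iff.rfl, hr ▸ heY _ _]
    rw [hY' s, hY' t]
  · refine (subset_closure_diff_union ((hV s).isClosed_layer n) ((hV s).subset_closure_diff n)
      (heV s)).trans (closure_mono (sdiff_subset_sdiff_right ?_))
    rw [image_eval_graphMatching]
    exact union_subset_union inter_subset_left (image_subset_range _ _)
  · rw [image_eval_graphMatching]
    exact subset_union_left

/-! #### Successors of a block -/

/-- The blocks in `D` are the successors of `N` at stage `n` of the construction: they decide the
`n`-th coordinate and each of them either keeps the matching of `N`, if some of it is left, or has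
a new matching that covers the `n`-th layer. -/
structure IsSuccessor (Y : Set Cantor) (V : Bool → Set Cantor) (L : Bool → ℕ → Set Cantor) (n : ℕ)
    (N : Block) (D : Set Block) : Prop extends IsPartition Y V N D where
  mem_matching : ∀ M ∈ D, ∀ p ∈ N.matching, (∀ s, p s ∈ M.side s) → p ∈ M.matching
  keep_or_cover : ∀ M ∈ D, (M.matching ⊆ N.matching ∧ M.matching.Nonempty) ∨
    ∀ s, L s n ∩ M.side s ⊆ Function.eval s '' M.matching
  apply_eq : ∀ M ∈ D, ∀ s, ∀ x ∈ M.side s, ∀ y ∈ M.side s, x n = y n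

theorem IsPartition.image {φ : Block → Block} (h : IsPartition Y V N D)
    (hside : ∀ M ∈ D, (φ M).side = M.side) (hvalid : ∀ M ∈ D, (φ M).IsValid Y V) :
    IsPartition Y V N (φ '' D) where
  isValid := by
    rintro _ ⟨M, hM, rfl⟩
    exact hvalid M hM
  side_subset := by
    rintro _ ⟨M, hM, rfl⟩
    rw [hside M hM]
    exact h.side_subset M hM
  exists_mem s x hx := by
    obtain ⟨M, hM, hxM⟩ := h.exists_mem s x hx
    exact ⟨φ M, mem_image_of_mem φ hM, by rwa [hside M hM]⟩
  eq_of_mem := by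
    rintro s x hx _ ⟨M, hM, rfl⟩ _ ⟨M', hM', rfl⟩
    rw [hside M hM, hside M' hM']
    exact fun hxM hxM' => congrArg φ (h.eq_of_mem s x hx M hM M' hM' hxM hxM')
  coherent := by
    rintro p hp _ ⟨M, hM, rfl⟩
    rw [hside M hM]
    exact h.coherent p hp M hM

theorem IsValid.exists_isSuccessor (hY : IsMinimalCounterexample univ Y)
    (hV : ∀ s, IsGenericallyConstant Y (V s) (L s) b) (h : N.IsValid Y V) (n : ℕ) :
    ∃ D, IsSuccessor Y V L n N D := by
  obtain ⟨D, hD, hbit⟩ := h.exists_isSubdivision_eq_of_mem hV n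
  have hextend (M : Block) (hM : M ∈ D) : ∃ M' : Block, M'.side = M.side ∧ M'.IsValid Y V ∧
      M.matching ⊆ M'.matching ∧ ((M'.matching ⊆ N.matching ∧ M'.matching.Nonempty) ∨
        ∀ s, L s n ∩ M.side s ⊆ Function.eval s '' M'.matching) := by
    rcases M.matching.eq_empty_or_nonempty with hempty | hne
    · obtain ⟨H, hH, hLH⟩ := (hD.isValid M hM).exists_isValid_layer_subset hY hV n
      exact ⟨⟨M.side, H⟩, rfl, hH, hempty ▸ empty_subset H, .inr hLH⟩
    · exact ⟨M, rfl, hD.isValid M hM, subset_rfl,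
        .inl ⟨fun p hp => ((hD.mem_matching_iff M hM p).mp hp).1, hne⟩⟩
  choose! φ hside hvalid hmatching halt using hextend
  refine ⟨φ '' D, hD.toIsPartition.image hside hvalid, ?_, ?_, ?_⟩ <;> rintro _ ⟨M, hM, rfl⟩
  · rw [hside M hM]
    exact fun p hp hpM => hmatching M hM ((hD.mem_matching_iff M hM p).mpr ⟨hp, hpM⟩)
  · rw [hside M hM]
    exact halt M hM
  · rw [hside M hM]
    exact hbit M hM

/-! #### Branches and the limit matching -/

/-- The block from which the construction starts: the whole space on both sides, nothing matched. -/
def root : Block where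
  side _ := univ
  matching := ∅

theorem isValid_root (hV : ∀ s, (V s).Nonempty) : root.IsValid Y V where
  isClopen _ := isClopen_univ
  nonempty s := (univ_inter (V s)).symm ▸ hV s
  isClosed_matching := isClosed_empty
  mem_side _ hp := hp.elim
  injOn _ := injOn_empty _
  mem_iff _ hp := hp.elim
  subset_closure_diff s := by simp [root, subset_closure]

/-- An infinite branch through the tree of blocks with successors `step n N`. -/
structure IsBranch (step : ℕ → Block → Set Block) (c : ℕ → Block) : Prop where
  zero : c 0 = root
  succ : ∀ n, c (n + 1) ∈ step n (c n)

/-- The pairs of points that lie in the same blocks of some branch. -/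
def limitMatching (V : Bool → Set Cantor) (step : ℕ → Block → Set Block) : Set (Bool → Cantor) :=
  {p | ∃ c, IsBranch step c ∧ ∀ n s, p s ∈ (c n).side s ∩ V s}

section Branch

variable {step : ℕ → Block → Set Block} {c c' : ℕ → Block} {s : Bool} {x y : Cantor}
  {p q : Bool → Cantor}

theorem IsBranch.isValid (hV : ∀ s, (V s).Nonempty)
    (hstep : ∀ n N, N.IsValid Y V → IsSuccessor Y V L n N (step n N)) (hc : IsBranch step c)
    (n : ℕ) : (c n).IsValid Y V := by
  induction n with
  | zero => exact hc.zero ▸ isValid_root hV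
  | succ n ih => exact (hstep n _ ih).isValid _ (hc.succ n)

theorem IsBranch.isSuccessor (hV : ∀ s, (V s).Nonempty)
    (hstep : ∀ n N, N.IsValid Y V → IsSuccessor Y V L n N (step n N)) (hc : IsBranch step c)
    (n : ℕ) : IsSuccessor Y V L n (c n) (step n (c n)) :=
  hstep n _ (hc.isValid hV hstep n)

theorem IsBranch.antitone_side (hV : ∀ s, (V s).Nonempty)
    (hstep : ∀ n N, N.IsValid Y V → IsSuccessor Y V L n N (step n N)) (hc : IsBranch step c)
    (s : Bool) : Antitone fun n => (c n).side s :=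
  antitone_nat_of_succ_le fun n =>
    (hc.isSuccessor hV hstep n).side_subset _ (hc.succ n) s

theorem IsBranch.eq_of_eventually_mem (hV : ∀ s, (V s).Nonempty)
    (hstep : ∀ n N, N.IsValid Y V → IsSuccessor Y V L n N (step n N)) (hc : IsBranch step c)
    (hx : ∀ᶠ n in Filter.atTop, x ∈ (c n).side s) (hy : ∀ᶠ n in Filter.atTop, y ∈ (c n).side s) :
    x = y := by
  funext n
  obtain ⟨k, ⟨hxk, hyk⟩, hk⟩ := ((hx.and hy).and (Filter.eventually_ge_atTop (n + 1))).exists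
  have hsub := hc.antitone_side hV hstep s hk
  exact (hc.isSuccessor hV hstep n).apply_eq _ (hc.succ n) s x (hsub hxk) y (hsub hyk)

theorem exists_isBranch (hV : ∀ s, (V s).Nonempty)
    (hstep : ∀ n N, N.IsValid Y V → IsSuccessor Y V L n N (step n N)) (hx : x ∈ V s) :
    ∃ c, IsBranch step c ∧ ∀ n, x ∈ (c n).side s := by
  have hnext (n : ℕ) (N : {N : Block // N.IsValid Y V ∧ x ∈ N.side s}) :
      ∃ M : {N : Block // N.IsValid Y V ∧ x ∈ N.side s}, M.1 ∈ step n N.1 := by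
    have hN := hstep n N N.2.1
    obtain ⟨M, hM, hxM⟩ := hN.exists_mem s x ⟨N.2.2, hx⟩
    exact ⟨⟨M, hN.isValid M hM, hxM⟩, hM⟩
  choose next hnext using hnext
  let c (n : ℕ) : {N : Block // N.IsValid Y V ∧ x ∈ N.side s} :=
    n.rec ⟨root, isValid_root hV, trivial⟩ next
  exact ⟨fun n => (c n).1, ⟨rfl, fun n => hnext n (c n)⟩, fun n => (c n).2.2⟩

theorem IsBranch.apply_eq_apply (hV : ∀ s, (V s).Nonempty)
    (hstep : ∀ n N, N.IsValid Y V → IsSuccessor Y V L n N (step n N)) (hc : IsBranch step c)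
    (hc' : IsBranch step c') (hx : x ∈ V s) {n : ℕ} (hxc : x ∈ (c n).side s)
    (hxc' : x ∈ (c' n).side s) : c n = c' n := by
  induction n with
  | zero => rw [hc.zero, hc'.zero]
  | succ n ih =>
    have heq := ih (hc.antitone_side hV hstep s n.le_succ hxc)
      (hc'.antitone_side hV hstep s n.le_succ hxc')
    exact (hc.isSuccessor hV hstep n).eq_of_mem s x hx _ (hc.succ n) _ (heq ▸ hc'.succ n) hxc hxc'

theorem injOn_eval_limitMatching (hV : ∀ s, (V s).Nonempty)
    (hstep : ∀ n N, N.IsValid Y V → IsSuccessor Y V L n N (step n N)) (s : Bool) :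
    InjOn (Function.eval s) (limitMatching V step) := by
  rintro p ⟨c, hc, hp⟩ q ⟨c', hc', hq⟩ (hpq : p s = q s)
  have hcc' (n : ℕ) : c n = c' n :=
    hc.apply_eq_apply hV hstep hc' (hp 0 s).2 (hp n s).1 (hpq ▸ (hq n s).1)
  funext t
  exact hc.eq_of_eventually_mem hV hstep (.of_forall fun n => (hp n t).1)
    (.of_forall fun n => hcc' n ▸ (hq n t).1)

theorem image_eval_limitMatching (hVc : ∀ s, IsClosed (V s)) (hV : ∀ s, (V s).Nonempty)
    (hstep : ∀ n N, N.IsValid Y V → IsSuccessor Y V L n N (step n N)) (s : Bool) :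
    Function.eval s '' limitMatching V step = V s := by
  refine subset_antisymm ?_ fun x hx => ?_
  · rintro _ ⟨p, ⟨c, -, hp⟩, rfl⟩
    exact (hp 0 s).2
  · obtain ⟨c, hc, hxc⟩ := exists_isBranch hV hstep hx
    have hclosed (t : Bool) (n : ℕ) : IsClosed ((c n).side t ∩ V t) :=
      ((hc.isValid hV hstep n).isClopen t).isClosed.inter (hVc t)
    choose p hp using fun t =>
      IsCompact.nonempty_iInter_of_sequence_nonempty_isCompact_isClosed
        (fun n => (c n).side t ∩ V t)
        (fun n => inter_subset_inter_left _ (hc.antitone_side hV hstep t n.le_succ))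
        (fun n => (hc.isValid hV hstep n).nonempty t) (hclosed t 0).isCompact (hclosed t)
    simp only [mem_iInter] at hp
    exact ⟨p, ⟨c, hc, fun n t => hp t n⟩, hc.eq_of_eventually_mem hV hstep
      (.of_forall fun n => (hp s n).1) (.of_forall hxc)⟩

theorem exists_isOpen_apply_eq_of_mem_limitMatching (hV : ∀ s, (V s).Nonempty)
    (hstep : ∀ n N, N.IsValid Y V → IsSuccessor Y V L n N (step n N))
    (hp : p ∈ limitMatching V step) (s t : Bool) (n : ℕ) :
    ∃ O, IsOpen O ∧ p s ∈ O ∧ ∀ q ∈ limitMatching V step, q s ∈ O → q t n = p t n := by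
  obtain ⟨c, hc, hp⟩ := hp
  refine ⟨_, ((hc.isValid hV hstep (n + 1)).isClopen s).isOpen, (hp _ s).1, ?_⟩
  rintro q ⟨c', hc', hq⟩ hqc
  have heq := hc.apply_eq_apply hV hstep hc' (hq 0 s).2 hqc (hq _ s).1
  exact (hc.isSuccessor hV hstep n).apply_eq _ (hc.succ n) t _ (heq ▸ (hq _ t).1) _ (hp _ t).1

theorem IsBranch.eq_of_eventually_mem_matching (hV : ∀ s, (V s).Nonempty)
    (hstep : ∀ n N, N.IsValid Y V → IsSuccessor Y V L n N (step n N)) (hc : IsBranch step c)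
    (hp : ∀ n s, p s ∈ (c n).side s) (hq : ∀ᶠ n in Filter.atTop, q ∈ (c n).matching) : q = p := by
  funext s
  exact hc.eq_of_eventually_mem hV hstep
    (hq.mono fun n hq => ((hc.isValid hV hstep n).mem_side q hq s).1) (.of_forall fun n => hp n s)

theorem IsBranch.mem_matching_of_le (hV : ∀ s, (V s).Nonempty)
    (hstep : ∀ n N, N.IsValid Y V → IsSuccessor Y V L n N (step n N)) (hc : IsBranch step c)
    (hx : ∀ n, x ∈ (c n).side s) (hqx : q s = x) {m k : ℕ} (hmk : m ≤ k)
    (hq : q ∈ (c m).matching) : q ∈ (c k).matching := by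
  induction k, hmk using Nat.le_induction with
  | base => exact hq
  | succ k _ ih =>
    have hk := hc.isSuccessor hV hstep k
    exact hk.mem_matching _ (hc.succ k) q ih fun t =>
      hk.coherent q ih _ (hc.succ k) s t (hqx ▸ hx (k + 1))

theorem IsBranch.exists_mem_matching (hV : ∀ s, (V s).Nonempty)
    (hstep : ∀ n N, N.IsValid Y V → IsSuccessor Y V L n N (step n N)) (hc : IsBranch step c)
    (hp : ∀ n s, p s ∈ (c n).side s) (hL : Monotone (L s)) {n : ℕ} (hn : p s ∈ L s n) :
    ∃ m, p ∈ (c m).matching := by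
  by_cases hcover : ∃ m ≥ n, L s m ∩ (c (m + 1)).side s ⊆ Function.eval s '' (c (m + 1)).matching
  · obtain ⟨m, hm, hcover⟩ := hcover
    obtain ⟨q, hq, hqp⟩ := hcover ⟨hL hm hn, hp (m + 1) s⟩
    have heq : q = p := hc.eq_of_eventually_mem_matching hV hstep hp <|
      Filter.eventually_atTop.mpr ⟨m + 1, fun k hk =>
        hc.mem_matching_of_le hV hstep (fun n => hp n s) hqp hk hq⟩
    exact ⟨m + 1, heq ▸ hq⟩
  · have hkeep (k : ℕ) : (c (n + k + 1)).matching ⊆ (c (n + k)).matching ∧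
        (c (n + k + 1)).matching.Nonempty :=
      ((hc.isSuccessor hV hstep (n + k)).keep_or_cover _ (hc.succ _)).resolve_right
        fun h => hcover ⟨n + k, Nat.le_add_right n k, h s⟩
    have hclosed (k : ℕ) := (hc.isValid hV hstep (n + k + 1)).isClosed_matching
    obtain ⟨q, hq⟩ := IsCompact.nonempty_iInter_of_sequence_nonempty_isCompact_isClosed
      (fun k => (c (n + k + 1)).matching) (fun k => (hkeep (k + 1)).1) (fun k => (hkeep k).2)
      (hclosed 0).isCompact hclosed
    rw [mem_iInter] at hq
    have heq : q = p := hc.eq_of_eventually_mem_matching hV hstep hp <|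
      Filter.eventually_atTop.mpr ⟨n + 1, fun k hk => by
        obtain ⟨j, rfl⟩ := Nat.exists_eq_add_of_le hk
        exact Nat.add_right_comm n 1 j ▸ hq j⟩
    exact ⟨_, heq ▸ hq 0⟩

theorem mem_iff_of_mem_limitMatching (hV : ∀ s, IsGenericallyConstant Y (V s) (L s) b)
    (hstep : ∀ n N, N.IsValid Y V → IsSuccessor Y V L n N (step n N))
    (hp : p ∈ limitMatching V step) (s t : Bool) : p s ∈ Y ↔ p t ∈ Y := by
  have hne (s : Bool) := (hV s).nonempty
  obtain ⟨c, hc, hp⟩ := hp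
  by_cases hL : ∃ r n, p r ∈ L r n
  · obtain ⟨r, n, hn⟩ := hL
    obtain ⟨m, hm⟩ :=
      hc.exists_mem_matching hne hstep (fun n s => (hp n s).1) (hV r).monotone_layer hn
    exact (hc.isValid hne hstep m).mem_iff p hm s t
  · push Not at hL
    rw [(hV s).mem_iff _ (hp 0 s).2 (hL s), (hV t).mem_iff _ (hp 0 t).2 (hL t)]

end Branch

end Block

theorem nonempty_homeomorph_of_bijOn_eval {ι : Type*} {M : Set (ι → Cantor)} {s : ι}
    {W : Set Cantor} (hM : BijOn (Function.eval s) M W)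
    (hloc : ∀ p ∈ M, ∀ t n, ∃ O, IsOpen O ∧ p s ∈ O ∧ ∀ q ∈ M, q s ∈ O → q t n = p t n) :
    Nonempty (M ≃ₜ W) := by
  obtain ⟨f, hf⟩ : ∃ f : M ≃ W, ∀ p, (f p : Cantor) = p.1 s := ⟨hM.equiv, fun _ => rfl⟩
  have hfsymm (x : W) : (f.symm x).1 s = x := by rw [← hf, f.apply_symm_apply]
  refine ⟨⟨f, continuous_induced_rng.mpr ?_, ?_⟩⟩
  · exact ((continuous_apply s).comp continuous_subtype_val).congr fun p => (hf p).symm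
  · refine .subtype_mk (continuous_pi fun t => continuous_pi fun n => ?_) _
    refine (IsLocallyConstant.iff_exists_open _).mpr (fun x => ?_) |>.continuous
    obtain ⟨O, hO, hxO, hq⟩ := hloc _ (f.symm x).2 t n
    exact ⟨_, hO.preimage continuous_subtype_val, by rwa [mem_preimage, ← hfsymm x],
      fun y hy => hq _ (f.symm y).2 (mem_of_eq_of_mem (hfsymm y) hy)⟩

theorem IsMinimalCounterexample.nonempty_homeomorph {Y : Set Cantor} {V : Bool → Set Cantor}
    {L : Bool → ℕ → Set Cantor} {b : Prop} (hY : IsMinimalCounterexample univ Y)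
    (hV : ∀ s, IsGenericallyConstant Y (V s) (L s) b) :
    Nonempty ((Y ∩ V true : Set Cantor) ≃ₜ (Y ∩ V false : Set Cantor)) := by
  have hne (s : Bool) := (hV s).nonempty
  choose! step hstep using fun n (N : Block) (hN : N.IsValid Y V) =>
    hN.exists_isSuccessor hY hV n
  let M := {p ∈ Block.limitMatching V step | p true ∈ Y}
  have hbij (s : Bool) : BijOn (Function.eval s) M (Y ∩ V s) := by
    have hinj := Block.injOn_eval_limitMatching hne hstep s
    have himage := Block.image_eval_limitMatching (fun s => (hV s).isClosed) hne hstep s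
    refine ⟨fun p hp => ?_, hinj.mono fun _ hp => hp.1, fun x hx => ?_⟩
    · exact ⟨(Block.mem_iff_of_mem_limitMatching hV hstep hp.1 true s).mp hp.2,
        himage ▸ mem_image_of_mem _ hp.1⟩
    · obtain ⟨p, hp, rfl⟩ := himage.symm ▸ hx.2
      exact ⟨p, ⟨hp, (Block.mem_iff_of_mem_limitMatching hV hstep hp s true).mp hx.1⟩, rfl⟩
  have hhomeo (s : Bool) : Nonempty (M ≃ₜ (Y ∩ V s : Set Cantor)) := by
    refine nonempty_homeomorph_of_bijOn_eval (hbij s) fun p hp t n => ?_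
    obtain ⟨O, hO, hpO, hq⟩ :=
      Block.exists_isOpen_apply_eq_of_mem_limitMatching hne hstep hp.1 s t n
    exact ⟨O, hO, hpO, fun q hqM => hq q hqM.1⟩
  obtain ⟨f⟩ := hhomeo true
  obtain ⟨g⟩ := hhomeo false
  exact ⟨f.symm.trans g⟩

/-! ### Baire category on closed sets -/

theorem exists_antitone_isOpen_dense_of_mem_residual {X : Type*} [TopologicalSpace X] {S : Set X}
    (hS : S ∈ residual X) :
    ∃ G : ℕ → Set X, (∀ n, IsOpen (G n)) ∧ (∀ n, Dense (G n)) ∧ Antitone G ∧ ⋂ n, G n ⊆ S := by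
  obtain ⟨T, hT_open, hT_dense, hT_countable, hTS⟩ := mem_residual_iff.mp hS
  obtain ⟨g, hg⟩ := (hT_countable.insert univ).exists_eq_range (insert_nonempty _ _)
  have hg_open (n : ℕ) : IsOpen (g n) := by
    rcases (hg ▸ mem_range_self n : g n ∈ insert univ T) with h | h
    · exact h ▸ isOpen_univ
    · exact hT_open _ h
  have hg_dense (n : ℕ) : Dense (g n) := by
    rcases (hg ▸ mem_range_self n : g n ∈ insert univ T) with h | h
    · exact h ▸ dense_univ
    · exact hT_dense _ h
  have hopen (n : ℕ) : IsOpen (dissipate g n) :=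
    (finite_Iic n).isOpen_biInter fun i _ => hg_open i
  refine ⟨dissipate g, hopen, fun n => ?_, antitone_dissipate, ?_⟩
  · induction n with
    | zero => simpa [dissipate_def] using hg_dense 0
    | succ n ih =>
      rw [dissipate_succ]
      exact ih.inter_of_isOpen_left (hg_dense _) (hopen n)
  · rw [iInter_dissipate, ← sInter_range, ← hg, sInter_insert, univ_inter]
    exact hTS

theorem exists_isOpen_mem_iff_of_isClosed {X : Type*} [TopologicalSpace X] [MeasurableSpace X]
    [BorelSpace X] {K Y : Set X} (hK : IsClosed K) (hY : MeasurableSet Y) :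
    ∃ (U : Set X) (F : ℕ → Set X), IsOpen U ∧ (∀ n, F n ⊆ K) ∧ (∀ n, IsClosed (F n)) ∧
      Monotone F ∧ (∀ n, K ⊆ closure (K \ F n)) ∧
      ∀ x ∈ K, (∀ n, x ∉ F n) → (x ∈ Y ↔ x ∈ U) := by
  have hYK : MeasurableSet (Subtype.val ⁻¹' Y : Set K) := measurable_subtype_coe hY
  obtain ⟨_, hUK, hYU⟩ := hYK.residualEq_isOpen
  obtain ⟨U, hU, rfl⟩ := isOpen_induced_iff.mp hUK
  obtain ⟨G, hG_open, hG_dense, hG_anti, hGU⟩ :=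
    exists_antitone_isOpen_dense_of_mem_residual hYU
  have hdiff (n : ℕ) : K \ Subtype.val '' (G n)ᶜ = Subtype.val '' G n := by
    rw [image_compl_eq_range_sdiff_image Subtype.val_injective, Subtype.range_coe,
      sdiff_sdiff_cancel_left (Subtype.coe_image_subset _ _)]
  refine ⟨U, fun n => Subtype.val '' (G n)ᶜ, hU, fun n => Subtype.coe_image_subset _ _,
    fun n => hK.isClosedMap_subtype_val _ (hG_open n).isClosed_compl,
    fun m n hmn => image_mono (compl_subset_compl.mpr (hG_anti hmn)), fun n => ?_,
    fun x hx hxF => ?_⟩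
  · rw [hdiff]
    exact Subtype.dense_iff.mp (hG_dense n)
  · refine iff_of_eq (hGU (mem_iInter.mpr fun n => ?_ : (⟨x, hx⟩ : K) ∈ ⋂ n, G n))
    by_contra hxG
    exact hxF n ⟨_, hxG, rfl⟩

/-! ### Borel subsets of Cantor space -/

theorem SigmaHHomogeneous.inter_of_isClopen {X : Type*} [TopologicalSpace X] {A Q : Set X}
    (h : SigmaHHomogeneous A) (hQ : IsClopen Q) : SigmaHHomogeneous (A ∩ Q : Set X) :=
  (h.isClopen (hQ.preimage continuous_subtype_val)).congr (preimageValHomeomorphInter A Q)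

theorem SigmaHHomogeneous.of_isOpen_inter {Y S : Set Cantor} (hS : IsOpen S)
    (h : ∀ x ∈ Y ∩ S, ∃ D, IsClopen D ∧ x ∈ D ∧ SigmaHHomogeneous (Y ∩ D : Set Cantor)) :
    SigmaHHomogeneous (Y ∩ S : Set Cantor) := by
  refine .of_locally fun x => ?_
  obtain ⟨D, hD, hxD, hσ⟩ := h x x.2
  obtain ⟨m, hm⟩ := exists_cylinder_subset hS x.2.2
  have hcyl := isClopen_cylinder x.1 m
  refine ⟨Subtype.val ⁻¹' (D ∩ cylinder x.1 m), (hD.inter hcyl).preimage continuous_subtype_val,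
    ⟨hxD, self_mem_cylinder _ m⟩, ?_⟩
  refine (hσ.inter_of_isClopen hcyl).congr
    ((Homeomorph.setCongr ?_).trans (preimageValHomeomorphInter (Y ∩ S) _).symm)
  rw [inter_assoc Y D, inter_assoc Y S,
    inter_eq_right.mpr (inter_subset_right.trans hm : D ∩ cylinder x.1 m ⊆ S)]

theorem inter_closure_image_val_of_isClosed {X : Type*} [TopologicalSpace X] {A : Set X}
    {U : Set A} (hU : IsClosed U) : A ∩ closure (Subtype.val '' U) = Subtype.val '' U := by
  rw [← Subtype.image_preimage_coe, ← IsInducing.subtypeVal.closure_eq_preimage_closure_image,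
    hU.closure_eq]

theorem IsGenericallyConstant.of_inter_subset {Y V P W : Set Cantor} {L : ℕ → Set Cantor}
    {b : Prop} (h : IsGenericallyConstant Y V L b) (hP : IsOpen P) (hW : IsClosed W)
    (hne : W.Nonempty) (hPW : P ∩ V ⊆ W) (hWP : W ⊆ closure (P ∩ V)) :
    IsGenericallyConstant Y W (fun n => L n ∩ W) b where
  isClosed := hW
  nonempty := hne
  isCounterexample := by
    rintro U hU ⟨x, hxU, hxW⟩
    obtain ⟨z, hzU, hzP, hzV⟩ := mem_closure_iff.mp (hWP hxW) U hU.isOpen hxU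
    obtain ⟨m, hm⟩ := exists_cylinder_subset (hU.isOpen.inter hP) ⟨hzU, hzP⟩
    have hcyl := isClopen_cylinder z m
    have hQ := h.isCounterexample _ hcyl ⟨z, self_mem_cylinder z m, hzV⟩
    refine ⟨(hU.isClosed.inter hW).isGδ, hQ.measurableSet, fun hσ => hQ.not_sigmaHHomogeneous ?_⟩
    have hWV : W ⊆ V := hWP.trans (closure_minimal inter_subset_right h.isClosed)
    have hQW : U ∩ W ∩ cylinder z m = cylinder z m ∩ V :=
      Subset.antisymm (fun y hy => ⟨hy.2, hWV hy.1.2⟩)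
        fun y hy => ⟨⟨(hm hy.1).1, hPW ⟨(hm hy.1).2, hy.2⟩⟩, hy.1⟩
    rw [← hQW, ← inter_assoc]
    exact hσ.inter_of_isClopen hcyl
  layer_subset _ := inter_subset_right
  isClosed_layer n := (h.isClosed_layer n).inter hW
  monotone_layer _ _ hmn := inter_subset_inter_left _ (h.monotone_layer hmn)
  subset_closure_diff n := by
    refine hWP.trans (closure_minimal ?_ isClosed_closure)
    refine (inter_subset_inter_right P (h.subset_closure_diff n)).trans
      (hP.inter_closure.trans (closure_mono ?_))
    exact fun x hx => ⟨hPW ⟨hx.1, hx.2.1⟩, fun hxL => hx.2.2 hxL.1⟩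
  mem_iff x hx hxL := h.mem_iff x (closure_minimal inter_subset_right h.isClosed (hWP hx))
    fun n hn => hxL n ⟨hn, hx⟩

theorem IsGenericallyConstant.subset_closure_inter {Y V : Set Cantor} {L : ℕ → Set Cantor}
    {b : Prop} (h : IsGenericallyConstant Y V L b) : V ⊆ closure (Y ∩ V) := by
  refine fun x hx => mem_closure_iff.mpr fun O hO hxO => ?_
  obtain ⟨m, hm⟩ := exists_cylinder_subset hO hxO
  obtain ⟨y, hyY, hy, hyV⟩ := (h.isCounterexample _ (isClopen_cylinder x m)
    ⟨x, self_mem_cylinder x m, hx⟩).inter_nonempty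
  exact ⟨y, hm hy, hyY, hyV⟩

theorem IsMinimalCounterexample.hHomogeneous {Y V : Set Cantor} {L : ℕ → Set Cantor} {b : Prop}
    (hY : IsMinimalCounterexample univ Y) (h : IsGenericallyConstant Y V L b) :
    HHomogeneous (Y ∩ V : Set Cantor) := by
  intro U hU hne
  obtain ⟨P, hP, rfl⟩ := isOpen_induced_iff.mp hU.isOpen
  set W := closure (Subtype.val '' (Subtype.val ⁻¹' P : Set (Y ∩ V : Set Cantor)))
  have himage := Subtype.image_preimage_coe (Y ∩ V) P
  have hWV : W ⊆ V := closure_minimal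
    ((Subtype.coe_image_subset _ _).trans inter_subset_right) h.isClosed
  have hPW : P ∩ V ⊆ W := by
    refine (inter_subset_inter_right P h.subset_closure_inter).trans
      (hP.inter_closure.trans (closure_mono ?_))
    rw [himage, inter_comm]
  have hWP : W ⊆ closure (P ∩ V) := by
    refine closure_mono ?_
    rw [himage, inter_comm]
    exact inter_subset_inter_right P inter_subset_right
  have hYW : Y ∩ W = Subtype.val '' (Subtype.val ⁻¹' P : Set (Y ∩ V : Set Cantor)) := by
    rw [← inter_closure_image_val_of_isClosed hU.isClosed, inter_assoc,
      inter_eq_right.mpr hWV]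
  have hW := h.of_inter_subset hP isClosed_closure (hne.image _).closure hPW hWP
  obtain ⟨e⟩ := hY.nonempty_homeomorph (V := fun s => cond s W V)
    (L := fun s => cond s (fun n => L n ∩ W) L) (Bool.rec h hW)
  exact ⟨(IsEmbedding.subtypeVal.homeomorphImage _).trans
    ((Homeomorph.setCongr hYW.symm).trans e)⟩

theorem IsCounterexample.exists_isClosed_core {Y : Set Cantor} (h : IsCounterexample univ Y) :
    ∃ K : Set Cantor, IsClosed K ∧ K.Nonempty ∧
      ∀ U, IsClopen U → (U ∩ K).Nonempty → IsCounterexample (U ∩ K) Y := by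
  let K : Set Cantor :=
    {x | ∀ D, IsClopen D → x ∈ D → ¬ SigmaHHomogeneous (Y ∩ D : Set Cantor)}
  have hKc : ∀ x ∈ Kᶜ, ∃ D, IsClopen D ∧ x ∈ D ∧ SigmaHHomogeneous (Y ∩ D : Set Cantor) := by
    intro x hx
    by_contra! hD
    exact hx hD
  have hK : IsClosed K := by
    rw [← isOpen_compl_iff, isOpen_iff_mem_nhds]
    intro x hx
    obtain ⟨D, hD, hxD, hσ⟩ := hKc x hx
    filter_upwards [hD.isOpen.mem_nhds hxD] with y hy hyK using hyK D hD hy hσ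
  refine ⟨K, hK, ?_, fun U hU ⟨_, hxU, hxK⟩ => ⟨(hU.isClosed.inter hK).isGδ, h.measurableSet, ?_⟩⟩
  · by_contra hempty
    exact h.not_sigmaHHomogeneous
      (.of_isOpen_inter isOpen_univ fun x _ => hKc x fun hx => hempty ⟨x, hx⟩)
  · refine fun hσ => hxK U hU hxU (.of_partition_ambient (fun s : Bool => cond s K Kᶜ) ?_ ?_ ?_ ?_)
    · exact pairwise_disjoint_on_bool.mpr disjoint_compl_right
    · exact Bool.rec hK.isOpen_compl.isGδ hK.isGδ
    · refine Bool.rec ?_ (inter_assoc Y U K ▸ hσ)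
      rw [cond_false, inter_assoc]
      exact .of_isOpen_inter (hU.isOpen.inter hK.isOpen_compl) fun y hy => hKc y hy.2.2
    · rw [← union_eq_iUnion, union_compl_self]
      exact subset_univ _

theorem exists_isGenericallyConstant {Y K : Set Cantor} (hY : MeasurableSet Y) (hK : IsClosed K)
    (hne : K.Nonempty) (h : ∀ U, IsClopen U → (U ∩ K).Nonempty → IsCounterexample (U ∩ K) Y) :
    ∃ V L b, IsGenericallyConstant Y V L b := by
  obtain ⟨O, F, hO, hFK, hF, hF_mono, hF_dense, hYO⟩ := exists_isOpen_mem_iff_of_isClosed hK hY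
  obtain ⟨U, b, hU, hUK, hUO⟩ : ∃ (U : Set Cantor) (b : Prop), IsClopen U ∧ (U ∩ K).Nonempty ∧
      ∀ x ∈ U ∩ K, (x ∈ O ↔ b) := by
    by_cases hOK : (O ∩ K).Nonempty
    · obtain ⟨x, hxO, hxK⟩ := hOK
      obtain ⟨m, hm⟩ := exists_cylinder_subset hO hxO
      exact ⟨cylinder x m, True, isClopen_cylinder x m, ⟨x, self_mem_cylinder x m, hxK⟩,
        fun y hy => iff_true_intro (hm hy.1)⟩
    · exact ⟨univ, False, isClopen_univ, by rwa [univ_inter],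
        fun y hy => iff_false_intro fun hyO => hOK ⟨y, hyO, hy.2⟩⟩
  refine ⟨U ∩ K, fun n => U ∩ F n, b, hU.isClosed.inter hK, hUK, fun D hD hDne => ?_,
    fun n => inter_subset_inter_right U (hFK n), fun n => hU.isClosed.inter (hF n),
    fun m n hmn => inter_subset_inter_right U (hF_mono hmn), fun n => ?_, fun x hx hxF => ?_⟩
  · rw [← inter_assoc] at hDne ⊢
    exact h _ (hD.inter hU) hDne
  · refine (inter_subset_inter_right U (hF_dense n)).trans
      (hU.isOpen.inter_closure.trans (closure_mono ?_))
    exact fun x hx => ⟨⟨hx.1, hx.2.1⟩, fun hxF => hx.2.2 hxF.2⟩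
  · rw [hYO x hx.2 fun n hn => hxF n ⟨hx.1, hn⟩, hUO x hx]

theorem sigmaHHomogeneous_of_measurableSet {B : Set Cantor} (hB : MeasurableSet B) :
    SigmaHHomogeneous B := by
  by_contra hcon
  obtain ⟨Y, hY⟩ := exists_isMinimalCounterexample_univ hB hcon
  obtain ⟨K, hK, hne, hbad⟩ := hY.toIsCounterexample.exists_isClosed_core
  obtain ⟨V, L, b, hV⟩ := exists_isGenericallyConstant hY.measurableSet hK hne hbad
  refine (hV.isCounterexample univ isClopen_univ ?_).not_sigmaHHomogeneous (.of_hHomogeneous ?_)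
  · rw [univ_inter]
    exact hV.nonempty
  · rw [univ_inter]
    exact hY.hHomogeneous hV

/-! ### Borel subsets of Euclidean space -/

/-- The partition of `ℝ` into the irrationals and the rational singletons. -/
def rationalCell (o : Option ℚ) : Set ℝ :=
  o.elim {x | Irrational x} fun q => {(q : ℝ)}

theorem isGδ_rationalCell : ∀ o, IsGδ (rationalCell o)
  | none => IsGδ.setOfPred_irrational
  | some _ => IsGδ.singleton _

theorem pairwise_disjoint_rationalCell : Pairwise (Function.onFun Disjoint rationalCell) :=
  pairwise_disjoint_option_elim
    (fun q => disjoint_singleton_right.mpr fun h : Irrational (q : ℝ) => q.not_irrational h)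
    fun _ _ hpq => disjoint_singleton.mpr fun h => hpq (Rat.cast_injective h)

theorem iUnion_rationalCell : ⋃ o, rationalCell o = univ := by
  refine eq_univ_of_forall fun x => mem_iUnion.mpr ?_
  by_cases hx : Irrational x
  · exact ⟨none, hx⟩
  · obtain ⟨q, rfl⟩ := not_not.mp hx
    exact ⟨some q, rfl⟩

theorem continuousOn_boolIndicator_Ioi_rationalCell (q : ℚ) (o : Option ℚ) :
    ContinuousOn (Ioi (q : ℝ)).boolIndicator (rationalCell o) := by
  rw [continuousOn_boolIndicator_iff_isClopen]
  cases o with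
  | none =>
    have hIci : (Subtype.val ⁻¹' Ioi (q : ℝ) : Set (rationalCell none)) =
        Subtype.val ⁻¹' Ici (q : ℝ) := by
      ext x
      exact ((x.2 : Irrational x.1).ne_rat q).symm.le_iff_lt.symm
    exact ⟨hIci ▸ isClosed_Ici.preimage continuous_subtype_val,
      isOpen_Ioi.preimage continuous_subtype_val⟩
  | some r =>
    have : Subsingleton (rationalCell (some r)) := subsingleton_singleton.coe_sort
    exact isClopen_discrete _

section Coding

variable {ι : Type*} {e : ℕ → ι × ℚ}

/-- The point of Cantor space listing the answers to the questions `q < x i`, where the pairs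
`(i, q)` are enumerated by `e`. -/
noncomputable def cutCode (e : ℕ → ι × ℚ) (x : ι → ℝ) : Cantor :=
  fun k => (Ioi ((e k).2 : ℝ)).boolIndicator (x (e k).1)

theorem cutCode_eq_true_iff {x : ι → ℝ} {k : ℕ} :
    cutCode e x k = true ↔ ((e k).2 : ℝ) < x (e k).1 :=
  (mem_iff_boolIndicator _ _).symm

theorem continuousOn_cutCode (e : ℕ → ι × ℚ) (a : ι → Option ℚ) :
    ContinuousOn (cutCode e) (univ.pi fun i => rationalCell (a i)) :=
  continuousOn_pi.mpr fun k => (continuousOn_boolIndicator_Ioi_rationalCell _ _).comp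
    (continuous_apply (e k).1).continuousOn fun _ hx => hx _ (mem_univ _)

theorem isEmbedding_domRestrict_cutCode (he : Function.Surjective e) {S : Set (ι → ℝ)}
    (hS : ContinuousOn (cutCode e) S) : IsEmbedding (S.domRestrict (cutCode e)) := by
  suffices IsInducing (S.domRestrict (cutCode e)) from this.isEmbedding
  refine isInducing_iff_nhds.mpr fun x =>
    le_antisymm hS.domRestrict.continuousAt.tendsto.le_comap ?_
  rw [nhds_subtype, ← Filter.tendsto_iff_comap, tendsto_pi_nhds]
  intro i
  have hcut (q : ℚ) : ∀ᶠ y in Filter.comap (S.domRestrict (cutCode e)) (𝓝 (cutCode e x)),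
      ((q : ℝ) < y.1 i ↔ (q : ℝ) < x.1 i) := by
    obtain ⟨k, hk⟩ := he (i, q)
    have hbit : ∀ᶠ c in 𝓝 (cutCode e x), c k = cutCode e x k :=
      (continuous_apply k).continuousAt ((isOpen_discrete {cutCode e x k}).mem_nhds rfl)
    filter_upwards [hbit.comap _] with y hy
    have := Bool.eq_iff_iff.mp hy
    simpa [cutCode_eq_true_iff, hk] using this
  refine tendsto_order.mpr ⟨fun r hr => ?_, fun r hr => ?_⟩
  · obtain ⟨q, hrq, hqx⟩ := exists_rat_btwn hr
    filter_upwards [hcut q] with y hy using hrq.trans (hy.mpr hqx)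
  · obtain ⟨q, hxq, hqr⟩ := exists_rat_btwn hr
    filter_upwards [hcut q] with y hy using (not_lt.mp (mt hy.mp hxq.not_gt)).trans_lt hqr

theorem sigmaHHomogeneous_of_measurableSet_pi [Finite ι] [Nonempty ι] {X : Set (ι → ℝ)}
    (hX : MeasurableSet X) : SigmaHHomogeneous X := by
  obtain ⟨e, he⟩ := exists_surjective_nat (ι × ℚ)
  let T (a : ι → Option ℚ) : Set (ι → ℝ) := univ.pi fun i => rationalCell (a i)
  have hT (a : ι → Option ℚ) : IsGδ (T a) := by
    simp_rw [T, univ_pi_eq_iInter]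
    exact .iInter fun i => (isGδ_rationalCell _).preimage (continuous_apply i)
  refine .of_partition_ambient T (fun a a' haa' => ?_) hT (fun a => ?_) ?_
  · obtain ⟨i, hi⟩ := Function.ne_iff.mp haa'
    exact disjoint_univ_pi.mpr ⟨i, pairwise_disjoint_rationalCell hi⟩
  · have hcont : ContinuousOn (cutCode e) (X ∩ T a) :=
      (continuousOn_cutCode e a).mono inter_subset_right
    have hemb := isEmbedding_domRestrict_cutCode he hcont
    have hrange : MeasurableSet (range ((X ∩ T a).domRestrict (cutCode e))) := by
      rw [range_domRestrict]
      exact (hX.inter (hT a).measurableSet).image_of_continuousOn_injOn hcont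
        (injOn_iff_injective.mpr hemb.injective)
    exact (sigmaHHomogeneous_of_measurableSet hrange).congr hemb.toHomeomorph.symm
  · simp_rw [T, iUnion_univ_pi, iUnion_rationalCell, pi_univ]
    exact subset_univ X

end Coding

end Cantor

/-- For every `n ≥ 1`, every Borel set `X ⊆ ℝⁿ` can be partitioned into
countably many pairwise disjoint subspaces that are Gδ sets in `X` and
h-homogeneous in the subspace topology. -/
theorem borel_euclidean_partition_hHomogeneous_gdelta (n : ℕ) (hn : 1 ≤ n)
    (X : Set (Fin n → ℝ))
    (hX : @MeasurableSet (Fin n → ℝ) (borel (Fin n → ℝ)) X) :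
    ∃ f : ℕ → Set (Fin n → ℝ),
      (∀ i, f i ⊆ X) ∧
      Pairwise (Function.onFun Disjoint f) ∧
      (∀ i, IsGδ (Subtype.val ⁻¹' f i : Set ↥X)) ∧
      (∀ i, HHomogeneous ↥(f i)) ∧
      X = ⋃ i, f i := by
  have : Nonempty (Fin n) := ⟨⟨0, hn⟩⟩
  rw [← BorelSpace.measurable_eq (α := Fin n → ℝ)] at hX
  obtain ⟨f, hdisj, hGδ, hhom, hcover⟩ := sigmaHHomogeneous_of_measurableSet_pi hX
  refine ⟨fun i => Subtype.val '' f i, fun i => Subtype.coe_image_subset X (f i), ?_, ?_, ?_, ?_⟩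
  · exact fun i j hij => (Set.disjoint_image_iff Subtype.val_injective).mpr (hdisj hij)
  · intro i
    rw [Set.preimage_image_eq _ Subtype.val_injective]
    exact hGδ i
  · exact fun i => (hhom i).congr (Topology.IsEmbedding.subtypeVal.homeomorphImage (f i))
  · rw [← Set.image_iUnion, hcover, Set.image_univ, Subtype.range_val]
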